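/- Let c be a negative integer and suppose that c = L_n − 2^x·3^y = L_{n₁} − 2^{x₁}·3^{y₁} for nonnegative integers n, n₁, x, x₁, y, y₁ with n > n₁ > 500. Set X = x·log 2 + y·log 3 and X₁ = x₁·log 2 + y₁·log 3. Then X − X₁ < 1.7·10^12 · log n. -/

import Mathlib

/-- The Lucas sequence: L 0 = 2, L 1 = 1, L (n+2) = L (n+1) + L n. -/
def lucas : ℕ → ℤ
  | 0 => 2
  | 1 => 1
  | n + 2 => lucas (n + 1) + lucas n

section

open Polynomial Finset

theorem analyticOrderAt_sub_const_self (a : ℂ) : analyticOrderAt (fun z : ℂ => z - a) a = 1 := by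
  have h : AnalyticAt ℂ (fun z : ℂ => z - a) a := by fun_prop
  rw [show (1 : ℕ∞) = ((1 : ℕ) : ℕ∞) from rfl, h.analyticOrderAt_eq_natCast]
  exact ⟨fun _ => 1, analyticAt_const, one_ne_zero, by simp⟩

theorem exists_eq_sub_pow_mul {F : ℂ → ℂ} (hF : Differentiable ℂ F) {a : ℂ} {τ : ℕ}
    (h : (τ : ℕ∞) ≤ analyticOrderAt F a) :
    ∃ q : ℂ → ℂ, Differentiable ℂ q ∧ ∀ z, F z = (z - a) ^ τ * q z := by
  induction τ generalizing F with
  | zero => exact ⟨F, hF, by simp⟩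
  | succ τ ih =>
    have hFa : F a = 0 := by
      have : analyticOrderAt F a ≠ 0 := by
        intro h0
        rw [h0] at h
        simp at h
      exact apply_eq_zero_of_analyticOrderAt_ne_zero this
    have hq : Differentiable ℂ (dslope F a) := by
      rw [← differentiableOn_univ, Complex.differentiableOn_dslope Filter.univ_mem]
      exact hF.differentiableOn
    have hmul : F = (fun z => z - a) * dslope F a := by
      funext z
      have := sub_smul_dslope F a z
      simp [hFa] at this
      simpa using this.symm
    have hord : analyticOrderAt F a = 1 + analyticOrderAt (dslope F a) a := by
      conv_lhs => rw [hmul]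
      rw [analyticOrderAt_mul (by fun_prop) (hq.analyticAt a), analyticOrderAt_sub_const_self]
    obtain ⟨q, hq1, hq2⟩ := ih hq (by
      rw [hord, Nat.cast_add, add_comm, Nat.cast_one] at h
      exact (ENat.add_le_add_iff_left (by simp)).1 h)
    refine ⟨q, hq1, fun z => ?_⟩
    have h1 := congrFun hmul z
    simp only [Pi.mul_apply] at h1
    rw [h1, hq2 z, pow_succ]
    ring

theorem exists_eq_prod_sub_pow_mul {ι : Type*} [DecidableEq ι] {F : ℂ → ℂ} (hF : Differentiable ℂ F)
    {a : ι → ℂ} {τ : ℕ} (s : Finset ι) (ha : Set.InjOn a s)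
    (h : ∀ i ∈ s, (τ : ℕ∞) ≤ analyticOrderAt F (a i)) :
    ∃ q : ℂ → ℂ, Differentiable ℂ q ∧ ∀ z, F z = (∏ i ∈ s, (z - a i) ^ τ) * q z := by
  induction s using Finset.induction_on with
  | empty => exact ⟨F, hF, by simp⟩
  | insert j s hj ih =>
    obtain ⟨q, hq, hFq⟩ := ih (ha.mono (by simp)) fun i hi => h i (mem_insert_of_mem hi)
    set Q : ℂ → ℂ := fun z => ∏ i ∈ s, (z - a i) ^ τ with hQ
    have hQa : AnalyticAt ℂ Q (a j) := by
      have : Differentiable ℂ Q := by rw [hQ]; fun_prop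
      exact this.analyticAt _
    have hQ0 : Q (a j) ≠ 0 := by
      rw [hQ]
      refine prod_ne_zero_iff.2 fun i hi => pow_ne_zero _ (sub_ne_zero.2 fun e => ?_)
      have : j = i := ha (by simp) (by simp [hi]) e
      exact hj (this ▸ hi)
    have hord : analyticOrderAt F (a j) = analyticOrderAt q (a j) := by
      have : F = Q * q := by funext z; exact hFq z
      rw [this, analyticOrderAt_mul hQa (hq.analyticAt _),
        hQa.analyticOrderAt_eq_zero.2 hQ0, zero_add]
    obtain ⟨q', hq', hqq'⟩ := exists_eq_sub_pow_mul hq (hord ▸ h j (mem_insert_self _ _))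
    refine ⟨q', hq', fun z => ?_⟩
    rw [hFq z, hqq' z, prod_insert hj]
    ring

/-- The truncated weighted `ℓ¹` norm of a polynomial. -/
noncomputable def wnorm (τ : ℕ) (r : ℝ) (p : ℂ[X]) : ℝ := ∑ j ∈ range τ, ‖p.coeff j‖ * r ^ j

theorem wnorm_nonneg {τ : ℕ} {r : ℝ} (hr : 0 ≤ r) (p : ℂ[X]) : 0 ≤ wnorm τ r p :=
  sum_nonneg fun _ _ => by positivity

theorem wnorm_mul_le {τ : ℕ} {r : ℝ} (hr : 0 ≤ r) (p q : ℂ[X]) :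
    wnorm τ r (p * q) ≤ wnorm τ r p * wnorm τ r q := by
  unfold wnorm
  calc ∑ j ∈ range τ, ‖(p * q).coeff j‖ * r ^ j
      ≤ ∑ j ∈ range τ, ∑ x ∈ antidiagonal j, (‖p.coeff x.1‖ * r ^ x.1) * (‖q.coeff x.2‖ * r ^ x.2) := by
        refine sum_le_sum fun j _ => ?_
        rw [coeff_mul]
        calc ‖∑ x ∈ antidiagonal j, p.coeff x.1 * q.coeff x.2‖ * r ^ j
            ≤ (∑ x ∈ antidiagonal j, ‖p.coeff x.1 * q.coeff x.2‖) * r ^ j := by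
              gcongr; exact norm_sum_le _ _
          _ = _ := by
              rw [sum_mul]
              refine sum_congr rfl fun x hx => ?_
              rw [norm_mul, ← mem_antidiagonal.1 hx, pow_add]
              ring
    _ = ∑ x ∈ (range τ).sigma antidiagonal,
          (‖p.coeff x.2.1‖ * r ^ x.2.1) * (‖q.coeff x.2.2‖ * r ^ x.2.2) := by
        rw [sum_sigma]
    _ = ∑ x ∈ (range τ ×ˢ range τ).filter (fun x => x.1 + x.2 < τ),
          (‖p.coeff x.1‖ * r ^ x.1) * (‖q.coeff x.2‖ * r ^ x.2) := by
        refine sum_bij' (fun x _ => x.2) (fun x _ => ⟨x.1 + x.2, x⟩) ?_ ?_ ?_ ?_ ?_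
        · rintro ⟨j, x⟩ hx
          simp only [mem_sigma, mem_range, HasAntidiagonal.mem_antidiagonal, mem_filter, mem_product] at hx ⊢
          omega
        · rintro x hx
          exact mem_sigma.2 ⟨mem_range.2 (mem_filter.1 hx).2, HasAntidiagonal.mem_antidiagonal.2 rfl⟩
        · rintro ⟨j, x⟩ hx
          simp only [mem_sigma, HasAntidiagonal.mem_antidiagonal] at hx
          obtain ⟨_, rfl⟩ := hx
          rfl
        · intros; rfl
        · intros; rfl
    _ ≤ ∑ x ∈ range τ ×ˢ range τ, (‖p.coeff x.1‖ * r ^ x.1) * (‖q.coeff x.2‖ * r ^ x.2) :=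
        sum_le_sum_of_subset_of_nonneg (filter_subset _ _) fun _ _ _ => by positivity
    _ = _ := by rw [sum_product, sum_mul_sum]

theorem wnorm_one_le (τ : ℕ) (r : ℝ) : wnorm τ r 1 ≤ 1 := by
  unfold wnorm
  rcases τ with _ | τ
  · simp
  · rw [sum_eq_single 0 (by intro b _ hb; simp [coeff_one, hb]) (by simp)]
    simp

theorem wnorm_pow_le {τ : ℕ} {r : ℝ} (hr : 0 ≤ r) (p : ℂ[X]) (m : ℕ) :
    wnorm τ r (p ^ m) ≤ wnorm τ r p ^ m := by
  induction m with
  | zero => simpa using wnorm_one_le τ r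
  | succ m ih =>
    rw [pow_succ, pow_succ]
    exact (wnorm_mul_le hr _ _).trans (by gcongr; exact wnorm_nonneg hr _)

theorem wnorm_prod_le {ι : Type*} {τ : ℕ} {r : ℝ} (hr : 0 ≤ r) (s : Finset ι) (p : ι → ℂ[X]) :
    wnorm τ r (∏ i ∈ s, p i) ≤ ∏ i ∈ s, wnorm τ r (p i) := by
  classical
  induction s using Finset.induction_on with
  | empty => simpa using wnorm_one_le τ r
  | insert j s hj ih =>
    rw [prod_insert hj, prod_insert hj]
    exact (wnorm_mul_le hr _ _).trans (by gcongr; exact wnorm_nonneg hr _)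

theorem wnorm_sum_le {ι : Type*} {τ : ℕ} {r : ℝ} (hr : 0 ≤ r) (s : Finset ι) (p : ι → ℂ[X]) :
    wnorm τ r (∑ i ∈ s, p i) ≤ ∑ i ∈ s, wnorm τ r (p i) := by
  unfold wnorm
  rw [sum_comm]
  refine sum_le_sum fun j _ => ?_
  rw [← sum_mul, finsetSum_coeff]
  gcongr
  exact norm_sum_le _ _

/-- The truncated power series of `1 / (d + X)`. -/
noncomputable def geomPoly (τ : ℕ) (d : ℂ) : ℂ[X] := ∑ j ∈ range τ, C (d⁻¹ * (-d⁻¹) ^ j) * X ^ j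

theorem X_pow_dvd_geomPoly (τ : ℕ) {d : ℂ} (hd : d ≠ 0) :
    (X : ℂ[X]) ^ τ ∣ 1 - (X + C d) * geomPoly τ d := by
  have h : (X + C d) * geomPoly τ d = 1 - (C (-d⁻¹) * X) ^ τ := by
    have h1 : geomPoly τ d = C d⁻¹ * ∑ j ∈ range τ, (C (-d⁻¹) * X) ^ j := by
      rw [geomPoly, mul_sum]
      refine sum_congr rfl fun j _ => ?_
      rw [mul_pow, C_mul, C_pow]; ring
    have h2 : (X + C d) * C d⁻¹ = 1 - C (-d⁻¹) * X := by
      rw [add_mul, ← C_mul, mul_inv_cancel₀ hd, C_neg, C_1]; ring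
    rw [h1, ← mul_assoc, h2, mul_neg_geom_sum]
  rw [h, sub_sub_cancel, mul_pow]
  exact Dvd.intro_left _ rfl

theorem wnorm_geomPoly_le (τ : ℕ) {d : ℂ} {r : ℝ} (hr : 0 ≤ r) (hd : r < ‖d‖) :
    wnorm τ r (geomPoly τ d) ≤ (‖d‖ - r)⁻¹ := by
  have hd0 : 0 < ‖d‖ := hr.trans_lt hd
  have h1 : wnorm τ r (geomPoly τ d) = ‖d‖⁻¹ * ∑ j ∈ range τ, (r / ‖d‖) ^ j := by
    unfold wnorm
    rw [mul_sum]
    refine sum_congr rfl fun j hj => ?_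
    have : (geomPoly τ d).coeff j = d⁻¹ * (-d⁻¹) ^ j := by
      rw [geomPoly, finsetSum_coeff, sum_eq_single j]
      · rw [coeff_C_mul, coeff_X_pow_self, mul_one]
      · intro b _ hb
        rw [coeff_C_mul, coeff_X_pow, if_neg hb.symm, mul_zero]
      · intro h; exact absurd hj h
    rw [this, norm_mul, norm_pow, norm_neg, norm_inv, div_pow, inv_pow]
    field_simp
  have hx : r / ‖d‖ < 1 := (div_lt_one hd0).2 hd
  have h2 : ∑ j ∈ range τ, (r / ‖d‖) ^ j ≤ (1 - r / ‖d‖)⁻¹ :=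
    (tsum_geometric_of_lt_one (by positivity) hx).symm ▸
      (summable_geometric_of_lt_one (by positivity) hx).sum_le_tsum _ fun _ _ => by positivity
  rw [h1]
  calc _ ≤ ‖d‖⁻¹ * (1 - r / ‖d‖)⁻¹ := by gcongr
    _ = _ := by
      rw [← mul_inv]
      congr 1
      field_simp

/-- Truncation of a polynomial to degree `< τ`. -/
noncomputable def ptrunc (τ : ℕ) (p : ℂ[X]) : ℂ[X] := ∑ j ∈ range τ, C (p.coeff j) * X ^ j

theorem X_pow_dvd_sub_ptrunc (τ : ℕ) (p : ℂ[X]) : (X : ℂ[X]) ^ τ ∣ p - ptrunc τ p := by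
  rw [X_pow_dvd_iff]
  intro j hj
  rw [coeff_sub, ptrunc, finsetSum_coeff, sum_eq_single j]
  · simp
  · intro b _ hb
    rw [coeff_C_mul, coeff_X_pow, if_neg hb.symm, mul_zero]
  · intro h; exact absurd (mem_range.2 hj) h

theorem norm_eval_ptrunc_le {τ : ℕ} {p : ℂ[X]} {r D : ℝ} (hr : 0 < r) (hD : r ≤ D) {w : ℂ}
    (hw : ‖w‖ ≤ D) : ‖(ptrunc τ p).eval w‖ ≤ wnorm τ r p * (D / r) ^ τ := by
  rw [ptrunc, eval_finsetSum, wnorm, sum_mul]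
  refine (norm_sum_le _ _).trans (sum_le_sum fun j hj => ?_)
  simp only [eval_mul, eval_C, eval_pow, eval_X, norm_mul, norm_pow]
  have h1 : (1 : ℝ) ≤ D / r := (one_le_div hr).2 hD
  calc ‖p.coeff j‖ * ‖w‖ ^ j ≤ ‖p.coeff j‖ * D ^ j := by gcongr
    _ = ‖p.coeff j‖ * r ^ j * (D / r) ^ j := by rw [div_pow]; field_simp
    _ ≤ _ := by
      gcongr
      exact (mem_range.1 hj).le

theorem le_analyticOrderAt_of_X_pow_dvd {τ : ℕ} {p : ℂ[X]} (h : (X : ℂ[X]) ^ τ ∣ p) (a : ℂ) :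
    (τ : ℕ∞) ≤ analyticOrderAt (fun z => p.eval (z - a)) a := by
  obtain ⟨q, rfl⟩ := h
  have hd : Differentiable ℂ fun z => ((X : ℂ[X]) ^ τ * q).eval (z - a) := by fun_prop
  rw [natCast_le_analyticOrderAt (hd.analyticAt a)]
  have hq : Differentiable ℂ fun z => q.eval (z - a) := by fun_prop
  exact ⟨fun z => q.eval (z - a), hq.analyticAt a, by simp⟩

theorem le_analyticOrderAt_sum {ι : Type*} {τ : ℕ∞} {a : ℂ} (s : Finset ι) (F : ι → ℂ → ℂ)
    (h : ∀ i ∈ s, τ ≤ analyticOrderAt (F i) a) :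
    τ ≤ analyticOrderAt (fun z => ∑ i ∈ s, F i z) a := by
  classical
  induction s using Finset.induction_on with
  | empty =>
    have : analyticOrderAt (fun _ : ℂ => (0 : ℂ)) a = ⊤ := by
      rw [analyticOrderAt_eq_top]; simp
    simp [this]
  | insert j s hj ih =>
    have : (fun z => ∑ i ∈ insert j s, F i z) = F j + fun z => ∑ i ∈ s, F i z := by
      funext z; simp [sum_insert hj]
    rw [this]
    exact (le_min (h j (mem_insert_self _ _)) (ih fun i hi => h i (mem_insert_of_mem hi))).trans
      le_analyticOrderAt_add

/-- Hermite interpolation with multiplicity `τ`, with an explicit bound for the interpolant. -/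
theorem exists_hermite_interpolant {ι : Type*} [DecidableEq ι] (s : Finset ι) (a : ι → ℂ) {τ : ℕ}
    {f : ℂ → ℂ} (p : ι → ℂ[X])
    (hp : ∀ i ∈ s, (τ : ℕ∞) ≤ analyticOrderAt (fun z => f z - (p i).eval (z - a i)) (a i))
    {g ε : ℝ} (hg : 0 < g) (hε : ∀ i ∈ s, wnorm τ g (p i) ≤ ε)
    (hsep : ∀ i ∈ s, ∀ j ∈ s, i ≠ j → g < ‖a i - a j‖) :
    ∃ H : ℂ → ℂ, Differentiable ℂ H ∧
      (∀ i ∈ s, (τ : ℕ∞) ≤ analyticOrderAt (fun z => f z - H z) (a i)) ∧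
      ∀ (w : ℂ) (D : ℝ), g ≤ D → (∀ i ∈ s, ‖w - a i‖ ≤ D) →
        ‖H w‖ ≤ ∑ i ∈ s, (∏ _j ∈ s.erase i, D ^ τ) *
          ((ε * ∏ j ∈ s.erase i, ((‖a i - a j‖ - g)⁻¹) ^ τ) * (D / g) ^ τ) := by
  set V : ι → ℂ[X] := fun i =>
    ptrunc τ (p i * ∏ j ∈ s.erase i, (geomPoly τ (a i - a j)) ^ τ) with hV
  set K : ι → ℂ → ℂ := fun i z => (∏ j ∈ s.erase i, (z - a j) ^ τ) * (V i).eval (z - a i) with hK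
  have hKd : ∀ i, Differentiable ℂ (K i) := fun i => by simp only [hK]; fun_prop
  have hself : ∀ i ∈ s, (τ : ℕ∞) ≤
      analyticOrderAt (fun z => (p i).eval (z - a i) - K i z) (a i) := by
    intro i hi
    set Qp : ℂ[X] := ∏ j ∈ s.erase i, (X + C (a i - a j)) ^ τ with hQp
    set I : ℂ[X] := ∏ j ∈ s.erase i, (geomPoly τ (a i - a j)) ^ τ with hI
    have h1 : (fun z => (p i).eval (z - a i) - K i z)
        = fun z => (p i - Qp * V i).eval (z - a i) := by
      funext z
      simp only [hK, hQp, eval_sub, eval_mul, eval_prod, eval_pow, eval_add, eval_X, eval_C]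
      congr 2
      refine prod_congr rfl fun j _ => ?_
      ring
    have hinv : (X : ℂ[X]) ^ τ ∣ 1 - Qp * I := by
      rw [hQp, hI, ← prod_mul_distrib]
      refine prod_induction _ (fun q => (X : ℂ[X]) ^ τ ∣ 1 - q) ?_ (by simp) ?_
      · intro q q' h h'
        have : 1 - q * q' = (1 - q) + q * (1 - q') := by ring
        rw [this]
        exact dvd_add h (h'.mul_left _)
      · intro j hj
        have hj' := mem_erase.1 hj
        have hne : a i - a j ≠ 0 := by
          rw [← norm_pos_iff]
          exact hg.trans (hsep i hi j hj'.2 hj'.1.symm)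
        rw [← mul_pow]
        have h2 := X_pow_dvd_geomPoly τ hne
        exact h2.trans (by simpa using sub_dvd_pow_sub_pow (1 : ℂ[X]) _ τ)
    have h3 : (X : ℂ[X]) ^ τ ∣ p i - Qp * V i := by
      have : p i - Qp * V i = p i * (1 - Qp * I) + Qp * (p i * I - ptrunc τ (p i * I)) := by
        rw [hV]; ring
      rw [this]
      exact dvd_add (hinv.mul_left _) ((X_pow_dvd_sub_ptrunc _ _).mul_left _)
    rw [h1]
    exact le_analyticOrderAt_of_X_pow_dvd h3 _
  have hother : ∀ i ∈ s, ∀ j ∈ s.erase i, (τ : ℕ∞) ≤ analyticOrderAt (fun z => - K j z) (a i) := by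
    intro i hi j hj
    have hij := mem_erase.1 hj
    have hmem : i ∈ s.erase j := mem_erase.2 ⟨hij.1.symm, hi⟩
    have hd : Differentiable ℂ fun z => - K j z := (hKd j).neg
    rw [natCast_le_analyticOrderAt (hd.analyticAt _)]
    have hq : Differentiable ℂ fun z =>
      -((∏ l ∈ (s.erase j).erase i, (z - a l) ^ τ) * (V j).eval (z - a j)) := by fun_prop
    refine ⟨_, hq.analyticAt _, Filter.Eventually.of_forall fun z => ?_⟩
    simp only [hK, smul_eq_mul]
    rw [← mul_prod_erase _ _ hmem]
    ring
  refine ⟨fun z => ∑ i ∈ s, K i z, by fun_prop, ?_, ?_⟩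
  · intro i hi
    have : (fun z => f z - ∑ i ∈ s, K i z) = ((fun z => f z - (p i).eval (z - a i)) +
        fun z => (p i).eval (z - a i) - K i z) + fun z => ∑ j ∈ s.erase i, - K j z := by
      funext z
      simp only [Pi.add_apply]
      rw [← add_sum_erase _ _ hi, sum_neg_distrib]
      ring
    rw [this]
    exact (le_min ((le_min (hp i hi) (hself i hi)).trans le_analyticOrderAt_add)
      (le_analyticOrderAt_sum _ _ (hother i hi))).trans le_analyticOrderAt_add
  · intro w D hD hw
    refine (norm_sum_le _ _).trans (sum_le_sum fun i hi => ?_)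
    have hD0 : 0 < D := hg.trans_le hD
    simp only [hK, norm_mul, norm_prod, norm_pow]
    have hI : wnorm τ g (p i * ∏ j ∈ s.erase i, (geomPoly τ (a i - a j)) ^ τ) ≤
        ε * ∏ j ∈ s.erase i, ((‖a i - a j‖ - g)⁻¹) ^ τ := by
      refine (wnorm_mul_le hg.le _ _).trans ?_
      refine mul_le_mul (hε i hi) ?_ (wnorm_nonneg hg.le _)
        ((wnorm_nonneg hg.le _).trans (hε i hi))
      refine (wnorm_prod_le hg.le _ _).trans ?_
      refine prod_le_prod (fun _ _ => wnorm_nonneg hg.le _) fun j hj => ?_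
      have hj' := mem_erase.1 hj
      refine (wnorm_pow_le hg.le _ _).trans ?_
      gcongr
      · exact wnorm_nonneg hg.le _
      · exact wnorm_geomPoly_le τ hg.le (hsep i hi j hj'.2 hj'.1.symm)
    gcongr with j hj
    · exact hw j (mem_erase.1 hj).2
    · rw [hV]
      exact (norm_eval_ptrunc_le hg hD (hw i hi)).trans (by gcongr)

theorem factorial_le_prod_erase_odd_gap {n i : ℕ} (hi : i < n) :
    ((n - 1).factorial : ℝ) ≤ 2 ^ (n - 1) * ∏ j ∈ (range n).erase i, (2 * |(i : ℝ) - j| - 1) := by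
  have h0 : (range n).erase i = range i ∪ Ico (i + 1) n := by
    ext j; simp only [mem_erase, mem_range, mem_union, mem_Ico]; omega
  have hd : Disjoint (range i) (Ico (i + 1) n) := by
    rw [disjoint_left]; intro j; simp only [mem_range, mem_Ico]; omega
  have h1 : (i.factorial : ℝ) ≤ ∏ j ∈ range i, (2 * |(i : ℝ) - j| - 1) := by
    rw [← prod_range_add_one_eq_factorial, ← prod_range_reflect]
    push_cast
    refine prod_le_prod (fun _ _ => by positivity) fun j hj => ?_
    have hj' := mem_range.1 hj
    have : ((i - 1 - j : ℕ) : ℝ) = i - 1 - j := by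
      rw [Nat.sub_sub, Nat.cast_sub (by omega)]; push_cast; ring
    have h3 : (j : ℝ) + 1 ≤ i := by exact_mod_cast hj'
    rw [this, abs_of_nonneg (by linarith)]
    linarith
  have h2 : ((n - 1 - i).factorial : ℝ) ≤ ∏ j ∈ Ico (i + 1) n, (2 * |(i : ℝ) - j| - 1) := by
    rw [prod_Ico_eq_prod_range, ← prod_range_add_one_eq_factorial,
      show n - (i + 1) = n - 1 - i by omega]
    push_cast
    refine prod_le_prod (fun _ _ => by positivity) fun j hj => ?_
    rw [abs_of_nonpos (by linarith [Nat.cast_nonneg (α := ℝ) j])]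
    linarith [Nat.cast_nonneg (α := ℝ) j]
  rw [h0, prod_union hd]
  have h3 : ((n - 1).factorial : ℝ) = (n - 1).choose i * (i.factorial * (n - 1 - i).factorial) := by
    rw [← Nat.choose_mul_factorial_mul_factorial (show i ≤ n - 1 by omega)]
    push_cast; ring
  have h4 : ((n - 1).choose i : ℝ) ≤ 2 ^ (n - 1) := by
    exact_mod_cast Nat.choose_le_two_pow _ _
  rw [h3]
  gcongr
  exact (Nat.cast_nonneg _).trans h1

theorem natCast_pow_self_le (n : ℕ) : (n : ℝ) ^ n ≤ 4 ^ n * n.factorial := by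
  have h := Real.pow_div_factorial_le_exp (n : ℝ) (by positivity) n
  rw [div_le_iff₀ (by positivity)] at h
  refine h.trans ?_
  gcongr
  rw [← Real.exp_one_pow]
  gcongr
  linarith [Real.exp_one_lt_d9]

theorem prod_abs_sub_odd_le {n : ℕ} {g x : ℝ} (hx0 : 0 ≤ x) (hx : x ≤ 2 * (g * n)) (hg : 0 < g) :
    ∏ i ∈ range n, |x - g * (2 * i + 1)| ≤ (g * n) ^ n := by
  have h1 : (∏ i ∈ range n, |x - g * (2 * i + 1)|) ^ 2 ≤ ((g * n) ^ n) ^ 2 := by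
    calc (∏ i ∈ range n, |x - g * (2 * i + 1)|) ^ 2
        = ∏ i ∈ range n, (|x - g * (2 * i + 1)| * |x - g * (2 * ((n - 1 - i : ℕ) : ℝ) + 1)|) := by
          rw [prod_mul_distrib, prod_range_reflect (fun i : ℕ => |x - g * (2 * (i : ℝ) + 1)|), sq]
      _ ≤ ∏ i ∈ range n, (g * n) ^ 2 := by
          refine prod_le_prod (fun _ _ => by positivity) fun i hi => ?_
          have hi' := mem_range.1 hi
          have hc : ((n - 1 - i : ℕ) : ℝ) = n - 1 - i := by
            rw [Nat.sub_sub, Nat.cast_sub (by omega)]; push_cast; ring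
          have h3 : (i : ℝ) + 1 ≤ n := by exact_mod_cast hi'
          have h4 : (0 : ℝ) ≤ i := by positivity
          have h5 : g * i + g ≤ g * n := by nlinarith
          have h6 : 0 ≤ g * i := by positivity
          rw [hc, ← abs_mul, abs_le]
          constructor <;>
          nlinarith [mul_nonneg hx0 (sub_nonneg.2 hx), mul_nonneg h6 (sub_nonneg.2 h5),
            sq_nonneg (x - g * n), sq_nonneg (g * (2 * i + 1) - g * n), mul_pos hg hg]
      _ = ((g * n) ^ n) ^ 2 := by simp [← pow_mul, mul_comm]
  exact le_of_sq_le_sq h1 (by positivity)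

/-- A function that almost vanishes to order `τ` at `g, 3 g, …, (2 n - 1) g` is small on the whole
interval `[0, 2 g n]`. -/
theorem norm_le_of_almost_vanishing {n τ : ℕ} (hn : 0 < n) {g : ℝ} (hg : 0 < g) {f : ℂ → ℂ}
    (hf : Differentiable ℂ f) (p : ℕ → ℂ[X])
    (hp : ∀ i < n, (τ : ℕ∞) ≤ analyticOrderAt
      (fun z => f z - (p i).eval (z - (g * (2 * i + 1) : ℝ))) (g * (2 * i + 1) : ℝ))
    {ε : ℝ} (hε : ∀ i < n, wnorm τ g (p i) ≤ ε) {ρ κ M : ℝ} (hρ : 2 ≤ ρ) (hκ : 0 ≤ κ)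
    (hM : ∀ z : ℂ, ‖z - (g * n : ℝ)‖ = ρ * (g * n) → ‖f z‖ ≤ M * Real.exp (κ * z.re))
    {x : ℝ} (hx0 : 0 ≤ x) (hx : x ≤ 2 * (g * n)) :
    ‖f x‖ ≤ n * ε * (16 * (ρ + 1)) ^ (τ * n) + Real.exp (κ * x) *
      (M + n * ε * (16 * (ρ + 1)) ^ (τ * n) * Real.exp (κ * ((ρ + 1) * (g * n)))) /
        (ρ - 1) ^ (τ * n) := by
  set δ := n * ε * (16 * (ρ + 1)) ^ (τ * n) with hδ
  have hn1 : (1 : ℝ) ≤ n := by exact_mod_cast hn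
  have hc : 0 < g * n := by positivity
  have hε0 : 0 ≤ ε := (wnorm_nonneg hg.le _).trans (hε 0 hn)
  have hδ0 : 0 ≤ δ := by positivity
  set a : ℕ → ℂ := fun i => ((g * (2 * i + 1) : ℝ) : ℂ) with ha
  have hdist : ∀ i j, ‖a i - a j‖ = g * (2 * |(i : ℝ) - j|) := by
    intro i j
    simp only [ha]
    rw [← Complex.ofReal_sub, Complex.norm_real, Real.norm_eq_abs,
      show g * (2 * (i : ℝ) + 1) - g * (2 * j + 1) = g * (2 * (i - j)) by ring, abs_mul, abs_mul,
      abs_of_pos hg, abs_two]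
  have hgap : ∀ i j : ℕ, i ≠ j → 1 ≤ |(i : ℝ) - j| := by
    intro i j hij
    have : (1 : ℤ) ≤ |(i : ℤ) - j| := Int.one_le_abs (by omega)
    exact_mod_cast this
  obtain ⟨H, hH, hHord, hHb⟩ := exists_hermite_interpolant (range n) a p (τ := τ) (f := f)
    (fun i hi => hp i (mem_range.1 hi)) hg (fun i hi => hε i (mem_range.1 hi)) (by
      intro i _ j _ hij
      rw [hdist]
      nlinarith [hgap i j hij])
  have hamem : ∀ i < n, 0 ≤ g * (2 * (i : ℝ) + 1) ∧ g * (2 * (i : ℝ) + 1) ≤ 2 * (g * n) := by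
    intro i hi
    have : (i : ℝ) + 1 ≤ n := by exact_mod_cast hi
    constructor
    · positivity
    · nlinarith
  have hac : ∀ i < n, ‖((g * n : ℝ) : ℂ) - a i‖ ≤ g * n := by
    intro i hi
    simp only [ha]
    rw [← Complex.ofReal_sub, Complex.norm_real, Real.norm_eq_abs, abs_le]
    constructor <;> linarith [(hamem i hi).1, (hamem i hi).2]
  have hHδ : ∀ w : ℂ, ‖w - (g * n : ℝ)‖ ≤ ρ * (g * n) → ‖H w‖ ≤ δ := by
    intro w hw
    set D := (ρ + 1) * (g * n) with hD
    have hDg : g ≤ D := by rw [hD]; nlinarith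
    have hD0 : 0 < D := by positivity
    refine (hHb w D hDg fun i hi => ?_).trans ?_
    · calc ‖w - a i‖ ≤ ‖w - (g * n : ℝ)‖ + ‖((g * n : ℝ) : ℂ) - a i‖ := by
            simpa using norm_add_le (w - (g * n : ℝ)) (((g * n : ℝ) : ℂ) - a i)
        _ ≤ ρ * (g * n) + g * n := add_le_add hw (hac i (mem_range.1 hi))
        _ = D := by rw [hD]; ring
    · have hterm : ∀ i ∈ range n, (∏ _j ∈ (range n).erase i, D ^ τ) *
          ((ε * ∏ j ∈ (range n).erase i, ((‖a i - a j‖ - g)⁻¹) ^ τ) * (D / g) ^ τ) ≤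
            ε * (16 * (ρ + 1)) ^ (τ * n) := by
        intro i hi
        have hi' := mem_range.1 hi
        have hcard : ((range n).erase i).card = n - 1 := by simp [card_erase_of_mem hi]
        set R := ∏ j ∈ (range n).erase i, (2 * |(i : ℝ) - j| - 1) with hR
        have hRpos : 0 < R := by
          refine prod_pos fun j hj => ?_
          have := hgap i j (ne_of_mem_erase hj).symm
          linarith
        have hprod : ∏ j ∈ (range n).erase i, ((‖a i - a j‖ - g)⁻¹) ^ τ = ((g ^ (n - 1) * R)⁻¹) ^ τ := by
          rw [prod_pow, prod_inv_distrib, hR, ← hcard, ← prod_const, ← prod_mul_distrib]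
          congr 2
          refine prod_congr rfl fun j _ => ?_
          rw [hdist]; ring
        rw [hprod, prod_const, hcard]
        have hbase : D ^ (n - 1) * (g ^ (n - 1) * R)⁻¹ * (D / g) ≤ (16 * (ρ + 1)) ^ n := by
          have e1 : D ^ (n - 1) * (g ^ (n - 1) * R)⁻¹ * (D / g) = (ρ + 1) ^ n * n ^ n / R := by
            obtain ⟨m, rfl⟩ : ∃ m, n = m + 1 := ⟨n - 1, by omega⟩
            simp only [Nat.add_sub_cancel, hD, mul_inv, div_eq_mul_inv, mul_pow, pow_succ]
            field_simp
          rw [e1, div_le_iff₀ hRpos]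
          have f1 := factorial_le_prod_erase_odd_gap hi'
          have f2 := natCast_pow_self_le n
          have f3 : (n.factorial : ℝ) = n * (n - 1).factorial := by
            exact_mod_cast (Nat.mul_factorial_pred hn.ne').symm
          have f4 : (n : ℝ) ≤ 2 ^ n := by exact_mod_cast Nat.lt_two_pow_self.le
          have f5 : (2 : ℝ) ^ (n - 1) ≤ 2 ^ n := pow_le_pow_right₀ (by norm_num) (by omega)
          calc (ρ + 1) ^ n * (n : ℝ) ^ n ≤ (ρ + 1) ^ n * (4 ^ n * (2 ^ n * (2 ^ n * R))) := by
                have f6 : (n.factorial : ℝ) ≤ 2 ^ n * (2 ^ n * R) := by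
                  rw [f3]
                  exact mul_le_mul f4 (f1.trans (by gcongr)) (by positivity) (by positivity)
                have f7 := f2.trans (mul_le_mul_of_nonneg_left f6 (by positivity))
                exact mul_le_mul_of_nonneg_left f7 (by positivity)
            _ = (16 * (ρ + 1)) ^ n * R := by
                have f8 : (16 : ℝ) ^ n = 4 ^ n * (2 ^ n * 2 ^ n) := by
                  rw [← mul_pow, ← mul_pow]; norm_num
                rw [mul_pow, f8]; ring
        calc (D ^ τ) ^ (n - 1) * ((ε * ((g ^ (n - 1) * R)⁻¹) ^ τ) * (D / g) ^ τ)
            = ε * (D ^ (n - 1) * (g ^ (n - 1) * R)⁻¹ * (D / g)) ^ τ := by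
              generalize (g ^ (n - 1) * R)⁻¹ = u
              generalize D / g = v
              clear_value D
              rw [mul_pow, mul_pow, ← pow_mul, ← pow_mul, mul_comm τ (n - 1)]; ring
          _ ≤ ε * ((16 * (ρ + 1)) ^ n) ^ τ := by gcongr
          _ = _ := by rw [← pow_mul, mul_comm n τ]
      refine (sum_le_sum hterm).trans ?_
      rw [sum_const, card_range, nsmul_eq_mul, hδ, mul_assoc]
  obtain ⟨q, hq, hFq⟩ := exists_eq_prod_sub_pow_mul (hf.sub hH) (range n) (a := a) (τ := τ) (by
    intro i _ j _ hij
    by_contra hne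
    have h1 := hdist i j
    have h2 := hgap i j hne
    rw [hij, sub_self, norm_zero] at h1
    nlinarith) hHord
  simp only [Pi.sub_apply] at hFq
  have hnormQ : ∀ z : ℂ, ‖∏ i ∈ range n, (z - a i) ^ τ‖ = (∏ i ∈ range n, ‖z - a i‖) ^ τ := by
    intro z; rw [norm_prod, ← prod_pow]; simp
  set B := (M + δ * Real.exp (κ * ((ρ + 1) * (g * n)))) / ((ρ - 1) * (g * n)) ^ (τ * n) with hB
  have hpos : 0 < (ρ - 1) * (g * n) := mul_pos (by linarith) hc
  set G : ℂ → ℂ := fun z => q z * Complex.exp (-κ * z) with hG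
  have hGd : Differentiable ℂ G := by rw [hG]; fun_prop
  have hsphere : ∀ z ∈ frontier (Metric.ball (((g * n : ℝ)) : ℂ) (ρ * (g * n))), ‖G z‖ ≤ B := by
    intro z hz
    rw [frontier_ball _ (by positivity), mem_sphere_iff_norm] at hz
    have h1 : ((ρ - 1) * (g * n)) ^ (τ * n) ≤ ‖∏ i ∈ range n, (z - a i) ^ τ‖ := by
      rw [hnormQ, mul_comm τ n, pow_mul]
      gcongr
      calc ((ρ - 1) * (g * n)) ^ n = ∏ i ∈ range n, ((ρ - 1) * (g * n)) := by simp
        _ ≤ _ := by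
          refine prod_le_prod (fun _ _ => hpos.le) fun i hi => ?_
          have h2 : ‖z - (g * n : ℝ)‖ ≤ ‖z - a i‖ + ‖((g * n : ℝ) : ℂ) - a i‖ := by
            simpa using norm_sub_le (z - a i) (((g * n : ℝ) : ℂ) - a i)
          rw [hz] at h2
          linarith [hac i (mem_range.1 hi)]
    have h3 : ‖∏ i ∈ range n, (z - a i) ^ τ‖ * ‖q z‖ ≤ M * Real.exp (κ * z.re) + δ := by
      rw [← norm_mul, ← hFq z]
      exact (norm_sub_le _ _).trans (add_le_add (hM z hz) (hHδ z hz.le))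
    have hre : -((ρ + 1) * (g * n)) ≤ z.re := by
      have h5 := (abs_le.1 ((Complex.abs_re_le_norm (z - (g * n : ℝ))).trans hz.le)).1
      rw [Complex.sub_re, Complex.ofReal_re] at h5
      linarith
    rw [hG, hB, norm_mul, Complex.norm_exp, le_div_iff₀ (by positivity)]
    have h6 : (-(κ : ℂ) * z).re = -(κ * z.re) := by simp
    rw [h6]
    calc ‖q z‖ * Real.exp (-(κ * z.re)) * ((ρ - 1) * (g * n)) ^ (τ * n)
        ≤ ‖q z‖ * Real.exp (-(κ * z.re)) * ‖∏ i ∈ range n, (z - a i) ^ τ‖ := by gcongr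
      _ = (‖∏ i ∈ range n, (z - a i) ^ τ‖ * ‖q z‖) * Real.exp (-(κ * z.re)) := by ring
      _ ≤ (M * Real.exp (κ * z.re) + δ) * Real.exp (-(κ * z.re)) := by gcongr
      _ = M + δ * Real.exp (-(κ * z.re)) := by
          rw [add_mul, mul_assoc, ← Real.exp_add, add_neg_cancel, Real.exp_zero, mul_one]
      _ ≤ _ := by
          gcongr
          nlinarith
  have hxball : ‖(x : ℂ) - (g * n : ℝ)‖ ≤ g * n := by
    rw [← Complex.ofReal_sub, Complex.norm_real, Real.norm_eq_abs, abs_le]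
    constructor <;> linarith
  have hGx : ‖G x‖ ≤ B := by
    refine Complex.norm_le_of_forall_mem_frontier_norm_le Metric.isBounded_ball
      hGd.diffContOnCl hsphere (subset_closure ?_)
    rw [mem_ball_iff_norm]
    nlinarith
  have hqx : ‖q x‖ ≤ B * Real.exp (κ * x) := by
    have h6 : ((-(κ : ℂ)) * x).re = -(κ * x) := by simp
    rw [hG] at hGx
    simp only [norm_mul, Complex.norm_exp, h6] at hGx
    calc ‖q x‖ = ‖q x‖ * Real.exp (-(κ * x)) * Real.exp (κ * x) := by
          rw [mul_assoc, ← Real.exp_add]; simp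
      _ ≤ _ := by gcongr
  have hQx : ‖∏ i ∈ range n, ((x : ℂ) - a i) ^ τ‖ ≤ (g * n) ^ (τ * n) := by
    rw [hnormQ, mul_comm τ n, pow_mul]
    gcongr
    refine le_trans (le_of_eq ?_) (prod_abs_sub_odd_le hx0 hx hg)
    refine prod_congr rfl fun i _ => ?_
    simp only [ha]
    rw [← Complex.ofReal_sub, Complex.norm_real, Real.norm_eq_abs]
  have hfx : f x = H x + (∏ i ∈ range n, ((x : ℂ) - a i) ^ τ) * q x := by rw [← hFq]; ring
  rw [hfx]
  refine (norm_add_le _ _).trans (add_le_add (hHδ _ (hxball.trans (by nlinarith))) ?_)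
  rw [norm_mul]
  calc _ ≤ (g * n) ^ (τ * n) * (B * Real.exp (κ * x)) := by gcongr
    _ = _ := by
      rw [hB, mul_pow (ρ - 1)]
      have h7 : (g * n) ^ (τ * n) ≠ 0 := by positivity
      have h8 : (ρ - 1) ^ (τ * n) ≠ 0 := pow_ne_zero _ (by linarith)
      rw [mul_comm (Real.exp (κ * x))]
      generalize (g * n) ^ (τ * n) = u at h7 ⊢
      generalize (ρ - 1) ^ (τ * n) = v at h8 ⊢
      generalize M + δ * Real.exp (κ * ((ρ + 1) * (g * n))) = t
      field_simp

/-- A real embedding `σ` of a ring together with two size functions, such that a Liouville type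
inequality with exponents `m` and `m + 1` holds. -/
structure SizedEmbedding (R : Type) [CommRing R] (m : ℕ) where
  σ : R →+* ℝ
  ν₁ : R → ℝ
  ν₂ : R → ℝ
  nonneg₁ : ∀ x, 0 ≤ ν₁ x
  nonneg₂ : ∀ x, 0 ≤ ν₂ x
  neg₁ : ∀ x, ν₁ (-x) = ν₁ x
  neg₂ : ∀ x, ν₂ (-x) = ν₂ x
  add₁ : ∀ x y, ν₁ (x + y) ≤ ν₁ x + ν₁ y
  add₂ : ∀ x y, ν₂ (x + y) ≤ ν₂ x + ν₂ y
  mul₁ : ∀ x y, ν₁ (x * y) ≤ ν₁ x * ν₁ y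
  mul₂ : ∀ x y, ν₂ (x * y) ≤ ν₂ x * ν₂ y
  abs_le : ∀ x, |σ x| ≤ ν₁ x
  liouville : ∀ x, x ≠ 0 → 1 ≤ |σ x| * ν₁ x ^ m * ν₂ x ^ (m + 1)

theorem SizedEmbedding.σ_injective {R : Type} [CommRing R] {m : ℕ} (E : SizedEmbedding R m) {x : R}
    (h : E.σ x = 0) : x = 0 := by
  by_contra hx
  have := E.liouville x hx
  rw [h] at this
  norm_num at this

/-- The real embedding of a quadratic extension sending the generator to the root `t`. -/
noncomputable def quadraticEval {R : Type} [CommRing R] (σ : R →+* ℝ) {a b : R} {t : ℝ}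
    (ht : t ^ 2 = σ a + σ b * t) : QuadraticAlgebra R a b →+* ℝ where
  toFun x := σ x.re + t * σ x.im
  map_one' := by simp [QuadraticAlgebra.re_one, QuadraticAlgebra.im_one]
  map_zero' := by simp
  map_add' x y := by simp; ring
  map_mul' x y := by
    simp only [QuadraticAlgebra.re_mul, QuadraticAlgebra.im_mul, map_add, map_mul]
    linear_combination (- (σ x.im * σ y.im)) * ht

@[simp] theorem quadraticEval_apply {R : Type} [CommRing R] (σ : R →+* ℝ) {a b : R} {t : ℝ}
    (ht : t ^ 2 = σ a + σ b * t) (x : QuadraticAlgebra R a b) :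
    quadraticEval σ ht x = σ x.re + t * σ x.im := rfl

theorem size_mul_le {R : Type} [CommRing R] {ν : R → ℝ} {a : R} {s : ℝ} (h0 : ∀ x, 0 ≤ ν x)
    (hadd : ∀ x y, ν (x + y) ≤ ν x + ν y) (hmul : ∀ x y, ν (x * y) ≤ ν x * ν y)
    (hs0 : 0 ≤ s) (hs : ν a ≤ s ^ 2) (x y : QuadraticAlgebra R a 0) :
    ν (x * y).re + s * ν (x * y).im ≤ (ν x.re + s * ν x.im) * (ν y.re + s * ν y.im) := by
  simp only [QuadraticAlgebra.re_mul, QuadraticAlgebra.im_mul, zero_mul, add_zero]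
  have h1 := hadd (x.re * y.re) (a * x.im * y.im)
  have h2 := hadd (x.re * y.im) (x.im * y.re)
  have h3 := hmul x.re y.re
  have h4 := hmul x.re y.im
  have h5 := hmul x.im y.re
  have h6 : ν (a * x.im * y.im) ≤ s ^ 2 * ν x.im * ν y.im :=
    (hmul _ _).trans (mul_le_mul_of_nonneg_right ((hmul _ _).trans
      (mul_le_mul_of_nonneg_right hs (h0 _))) (h0 _))
  nlinarith [mul_le_mul_of_nonneg_left (h2.trans (add_le_add h4 h5)) hs0]

/-- The form `p ^ 2 - a * q ^ 2` is anisotropic. -/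
def IsStronglyNonSquare (R : Type) [CommRing R] (a : R) : Prop :=
  ∀ p q : R, p ^ 2 = a * q ^ 2 → p = 0 ∧ q = 0

theorem SizedEmbedding.isStronglyNonSquare {R : Type} [CommRing R] {m : ℕ} (E : SizedEmbedding R m)
    {a : R} (ha : E.σ a < 0) : IsStronglyNonSquare R a := by
  intro p q h
  have h1 : E.σ p ^ 2 = E.σ a * E.σ q ^ 2 := by rw [← map_pow, h, map_mul, map_pow]
  have h4 : E.σ q ^ 2 = 0 := by
    nlinarith [sq_nonneg (E.σ p), sq_nonneg (E.σ q)]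
  have h5 : E.σ p ^ 2 = 0 := by rw [h1, h4, mul_zero]
  exact ⟨E.σ_injective (pow_eq_zero_iff two_ne_zero |>.1 h5),
    E.σ_injective (pow_eq_zero_iff two_ne_zero |>.1 h4)⟩

/-- Adjoining a square root of a non-square, positive element. -/
noncomputable def SizedEmbedding.adjoin {R : Type} [CommRing R] {m : ℕ} (E : SizedEmbedding R m)
    (a : R) {t s₁ s₂ : ℝ} (ht : t ^ 2 = E.σ a) (hts : |t| ≤ s₁) (hs₂0 : 0 ≤ s₂)
    (hs₁ : E.ν₁ a ≤ s₁ ^ 2) (hs₂ : E.ν₂ a ≤ s₂ ^ 2)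
    (hsq : IsStronglyNonSquare R a) :
    SizedEmbedding (QuadraticAlgebra R a 0) (2 * m + 1) where
  σ := quadraticEval E.σ (t := t) (by simpa using ht)
  ν₁ x := E.ν₁ x.re + s₁ * E.ν₁ x.im
  ν₂ x := E.ν₂ x.re + s₂ * E.ν₂ x.im
  nonneg₁ x := add_nonneg (E.nonneg₁ _) (mul_nonneg ((abs_nonneg _).trans hts) (E.nonneg₁ _))
  nonneg₂ x := add_nonneg (E.nonneg₂ _) (mul_nonneg hs₂0 (E.nonneg₂ _))
  neg₁ x := by simp [E.neg₁]
  neg₂ x := by simp [E.neg₂]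
  add₁ x y := by
    have h1 := E.add₁ x.re y.re
    have h2 := mul_le_mul_of_nonneg_left (E.add₁ x.im y.im) ((abs_nonneg _).trans hts)
    simp only [QuadraticAlgebra.re_add, QuadraticAlgebra.im_add]
    linarith
  add₂ x y := by
    have h1 := E.add₂ x.re y.re
    have h2 := mul_le_mul_of_nonneg_left (E.add₂ x.im y.im) hs₂0
    simp only [QuadraticAlgebra.re_add, QuadraticAlgebra.im_add]
    linarith
  mul₁ := size_mul_le E.nonneg₁ E.add₁ E.mul₁ ((abs_nonneg _).trans hts) hs₁
  mul₂ := size_mul_le E.nonneg₂ E.add₂ E.mul₂ hs₂0 hs₂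
  abs_le x := by
    rw [quadraticEval_apply]
    refine (abs_add_le _ _).trans (add_le_add (E.abs_le _) ?_)
    rw [abs_mul]
    exact mul_le_mul hts (E.abs_le _) (abs_nonneg _) ((abs_nonneg _).trans hts)
  liouville x hx := by
    have hs₁0 : 0 ≤ s₁ := (abs_nonneg _).trans hts
    have hN : x.re ^ 2 - a * x.im ^ 2 ≠ 0 := by
      intro h
      obtain ⟨h1, h2⟩ := hsq _ _ (sub_eq_zero.1 h)
      exact hx (QuadraticAlgebra.ext h1 h2)
    have h := E.liouville _ hN
    have key : ∀ (ν : R → ℝ) (s : ℝ), (∀ x, 0 ≤ ν x) → (∀ x, ν (-x) = ν x) →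
        (∀ x y, ν (x + y) ≤ ν x + ν y) → (∀ x y, ν (x * y) ≤ ν x * ν y) → 0 ≤ s → ν a ≤ s ^ 2 →
        ν (x.re ^ 2 - a * x.im ^ 2) ≤ (ν x.re + s * ν x.im) ^ 2 := by
      intro ν s h0 hneg hadd hmul hs0 hs
      rw [sub_eq_add_neg]
      have h1 := hadd (x.re ^ 2) (-(a * x.im ^ 2))
      rw [hneg] at h1
      have h2 := hmul x.re x.re
      have h3 := hmul a (x.im * x.im)
      have h4 := mul_le_mul hs (hmul x.im x.im) (h0 _) (sq_nonneg s)
      rw [← sq] at h2 h3 h4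
      nlinarith [mul_nonneg hs0 (mul_nonneg (h0 x.re) (h0 x.im))]
    have k1 := key E.ν₁ s₁ E.nonneg₁ E.neg₁ E.add₁ E.mul₁ hs₁0 hs₁
    have k2 := key E.ν₂ s₂ E.nonneg₂ E.neg₂ E.add₂ E.mul₂ hs₂0 hs₂
    have hσ : |E.σ (x.re ^ 2 - a * x.im ^ 2)| ≤
        |E.σ x.re + t * E.σ x.im| * (E.ν₁ x.re + s₁ * E.ν₁ x.im) := by
      have h1 : E.σ (x.re ^ 2 - a * x.im ^ 2) =
          (E.σ x.re + t * E.σ x.im) * (E.σ x.re - t * E.σ x.im) := by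
        simp only [map_sub, map_mul, map_pow, ← ht]; ring
      rw [h1, abs_mul]
      refine mul_le_mul_of_nonneg_left ?_ (abs_nonneg _)
      refine (abs_sub _ _).trans (add_le_add (E.abs_le _) ?_)
      rw [abs_mul]
      exact mul_le_mul hts (E.abs_le _) (abs_nonneg _) hs₁0
    rw [quadraticEval_apply]
    have n1 := E.nonneg₁ (x.re ^ 2 - a * x.im ^ 2)
    have n2 := E.nonneg₂ (x.re ^ 2 - a * x.im ^ 2)
    have m1 : 0 ≤ E.ν₁ x.re + s₁ * E.ν₁ x.im :=
      add_nonneg (E.nonneg₁ _) (mul_nonneg hs₁0 (E.nonneg₁ _))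
    refine h.trans ?_
    calc _ ≤ (|E.σ x.re + t * E.σ x.im| * (E.ν₁ x.re + s₁ * E.ν₁ x.im)) *
          ((E.ν₁ x.re + s₁ * E.ν₁ x.im) ^ 2) ^ m * ((E.ν₂ x.re + s₂ * E.ν₂ x.im) ^ 2) ^ (m + 1) := by
          gcongr
      _ = _ := by rw [← pow_mul, ← pow_mul]; ring

theorem eq_zero_of_sq_eq_mul_sq {R : Type} [CommRing R] (d : ℕ) (hd : ∀ x : R, (d : R) * x = 0 → x = 0)
    (hdvd : ∀ x : R, (d : R) ∣ x ^ 2 → (d : R) ∣ x) (hsep : ∀ x : R, (∀ n, (d : R) ^ n ∣ x) → x = 0)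
    (p q : R) (h : p ^ 2 = d * q ^ 2) : p = 0 ∧ q = 0 := by
  have main : ∀ n : ℕ, ∀ p q : R, p ^ 2 = d * q ^ 2 → (d : R) ^ n ∣ p ∧ (d : R) ^ n ∣ q := by
    intro n
    induction n with
    | zero => simp
    | succ n ih =>
      intro p q h
      obtain ⟨p', rfl⟩ := hdvd p ⟨q ^ 2, h⟩
      have h1 : q ^ 2 = d * p' ^ 2 := by
        refine sub_eq_zero.1 (hd _ ?_)
        linear_combination -h
      obtain ⟨q', rfl⟩ := hdvd q ⟨_, h1⟩
      have h2 : p' ^ 2 = d * q' ^ 2 := by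
        refine sub_eq_zero.1 (hd _ ?_)
        linear_combination -h1
      obtain ⟨h3, h4⟩ := ih _ _ h2
      rw [pow_succ']
      exact ⟨mul_dvd_mul_left _ h3, mul_dvd_mul_left _ h4⟩
  exact ⟨hsep p fun n => (main n p q h).1, hsep q fun n => (main n p q h).2⟩

abbrev Zphi := QuadraticAlgebra ℤ 1 1
abbrev ZphiSqrtTwo := QuadraticAlgebra Zphi 2 0
abbrev ZphiSqrtTwoThree := QuadraticAlgebra ZphiSqrtTwo 3 0
abbrev Zphi.gen : Zphi := ⟨0, 1⟩
abbrev KummerRing := QuadraticAlgebra ZphiSqrtTwoThree ⟨⟨Zphi.gen, 0⟩, 0⟩ 0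

theorem int_eq_zero_of_forall_pow_dvd {d : ℕ} (hd : 2 ≤ d) {x : ℤ} (h : ∀ n, (d : ℤ) ^ n ∣ x) :
    x = 0 := by
  by_contra hx
  have h1 := Int.natAbs_dvd_natAbs.2 (h x.natAbs)
  rw [Int.natAbs_pow, Int.natAbs_natCast] at h1
  have h2 := Nat.le_of_dvd (Int.natAbs_pos.2 hx) h1
  exact absurd h2 (not_le.2 (Nat.lt_pow_self (by omega)))

theorem QuadraticAlgebra.natCast_pow_mul_re {R : Type} [CommRing R] {a b : R} (d n : ℕ)
    (y : QuadraticAlgebra R a b) : ((d : QuadraticAlgebra R a b) ^ n * y).re = (d : R) ^ n * y.re ∧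
      ((d : QuadraticAlgebra R a b) ^ n * y).im = (d : R) ^ n * y.im := by
  have h : (d : QuadraticAlgebra R a b) ^ n = QuadraticAlgebra.C ((d : R) ^ n) := by
    rw [QuadraticAlgebra.C_pow, QuadraticAlgebra.C_natCast]
  rw [h]
  generalize (d : R) ^ n = e
  simp [QuadraticAlgebra.re_mul, QuadraticAlgebra.im_mul]

theorem QuadraticAlgebra.natCast_dvd_iff {R : Type} [CommRing R] {a b : R} (d n : ℕ)
    (x : QuadraticAlgebra R a b) : (d : QuadraticAlgebra R a b) ^ n ∣ x ↔
      (d : R) ^ n ∣ x.re ∧ (d : R) ^ n ∣ x.im := by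
  constructor
  · rintro ⟨y, rfl⟩
    rw [(natCast_pow_mul_re d n y).1, (natCast_pow_mul_re d n y).2]
    exact ⟨dvd_mul_right _ _, dvd_mul_right _ _⟩
  · rintro ⟨⟨u, hu⟩, v, hv⟩
    refine ⟨⟨u, v⟩, QuadraticAlgebra.ext ?_ ?_⟩
    · rw [(natCast_pow_mul_re d n _).1, hu]
    · rw [(natCast_pow_mul_re d n _).2, hv]

theorem Zphi.eq_zero_of_natCast_mul {d : ℕ} (hd : d ≠ 0) (x : Zphi) (hx : (d : Zphi) * x = 0) :
    x = 0 := by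
  have h1 := QuadraticAlgebra.natCast_pow_mul_re d 1 x
  rw [pow_one, hx, pow_one] at h1
  have hd' : (d : ℤ) ≠ 0 := by exact_mod_cast hd
  refine QuadraticAlgebra.ext ?_ ?_
  · exact ((mul_eq_zero.1 h1.1.symm).resolve_left hd')
  · exact ((mul_eq_zero.1 h1.2.symm).resolve_left hd')

theorem Zphi.eq_zero_of_forall_pow_dvd {d : ℕ} (hd : 2 ≤ d) {x : Zphi}
    (hx : ∀ n, (d : Zphi) ^ n ∣ x) : x = 0 :=
  QuadraticAlgebra.ext
    (int_eq_zero_of_forall_pow_dvd hd fun n => ((QuadraticAlgebra.natCast_dvd_iff d n x).1 (hx n)).1)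
    (int_eq_zero_of_forall_pow_dvd hd fun n => ((QuadraticAlgebra.natCast_dvd_iff d n x).1 (hx n)).2)

theorem Zphi.eq_zero_of_sq_eq_two_mul : IsStronglyNonSquare Zphi 2 := by
  intro p q h
  refine eq_zero_of_sq_eq_mul_sq 2 (fun x hx => Zphi.eq_zero_of_natCast_mul two_ne_zero x hx)
    (fun x hx => ?_) (fun x hx => Zphi.eq_zero_of_forall_pow_dvd le_rfl hx) p q
    (by exact_mod_cast h)
  rw [← pow_one ((2 : ℕ) : Zphi), QuadraticAlgebra.natCast_dvd_iff] at hx ⊢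
  obtain ⟨u, v⟩ := x
  rw [sq, QuadraticAlgebra.mk_mul_mk] at hx
  dsimp only at hx ⊢
  simp only [pow_one, ← ZMod.intCast_zmod_eq_zero_iff_dvd] at hx ⊢
  push_cast at hx ⊢
  generalize (u : ZMod 2) = u at *
  generalize (v : ZMod 2) = v at *
  revert u v
  decide

theorem ZphiSqrtTwo.eq_zero_of_sq_eq_three_mul : IsStronglyNonSquare ZphiSqrtTwo 3 := by
  intro p q h
  refine eq_zero_of_sq_eq_mul_sq 3 (fun x hx => ?_) (fun x hx => ?_) (fun x hx => ?_) p q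
    (by exact_mod_cast h)
  · have h1 := QuadraticAlgebra.natCast_pow_mul_re 3 1 x
    rw [pow_one, hx, pow_one] at h1
    exact QuadraticAlgebra.ext (Zphi.eq_zero_of_natCast_mul three_ne_zero _ h1.1.symm)
      (Zphi.eq_zero_of_natCast_mul three_ne_zero _ h1.2.symm)
  · rw [← pow_one ((3 : ℕ) : ZphiSqrtTwo), QuadraticAlgebra.natCast_dvd_iff,
      QuadraticAlgebra.natCast_dvd_iff, QuadraticAlgebra.natCast_dvd_iff] at hx ⊢
    obtain ⟨⟨u, v⟩, ⟨w, z⟩⟩ := x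
    rw [sq, QuadraticAlgebra.mk_mul_mk, QuadraticAlgebra.mk_mul_mk, QuadraticAlgebra.mk_mul_mk,
      show (2 : Zphi) = ⟨2, 0⟩ from rfl] at hx
    simp only [zero_mul, add_zero, QuadraticAlgebra.mk_mul_mk, QuadraticAlgebra.re_add,
      QuadraticAlgebra.im_add] at hx
    simp only [pow_one, ← ZMod.intCast_zmod_eq_zero_iff_dvd] at hx ⊢
    push_cast at hx ⊢
    generalize (u : ZMod 3) = u at *
    generalize (v : ZMod 3) = v at *
    generalize (w : ZMod 3) = w at *
    generalize (z : ZMod 3) = z at *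
    revert u v w z
    decide +kernel
  · exact QuadraticAlgebra.ext
      (Zphi.eq_zero_of_forall_pow_dvd (d := 3) (by norm_num)
        fun n => ((QuadraticAlgebra.natCast_dvd_iff 3 n x).1 (hx n)).1)
      (Zphi.eq_zero_of_forall_pow_dvd (d := 3) (by norm_num)
        fun n => ((QuadraticAlgebra.natCast_dvd_iff 3 n x).1 (hx n)).2)

/-- The ring `ℤ[φ]` with the embedding sending the generator to the root `t` of `X ^ 2 - X - 1`. -/
noncomputable def Zphi.sizedEmbedding {t t' : ℝ} (ht : t ^ 2 = 1 + t) (ht' : t' = 1 - t) :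
    SizedEmbedding Zphi 0 where
  σ := quadraticEval (Int.castRingHom ℝ) (t := t) (by simpa using ht)
  ν₁ x := |(x.re + t * x.im : ℝ)|
  ν₂ x := |(x.re + t' * x.im : ℝ)|
  nonneg₁ _ := abs_nonneg _
  nonneg₂ _ := abs_nonneg _
  neg₁ x := by rw [← abs_neg]; congr 1; simp; ring
  neg₂ x := by rw [← abs_neg]; congr 1; simp; ring
  add₁ x y := by
    refine le_trans (le_of_eq ?_) (abs_add_le _ _); congr 1; simp; ring
  add₂ x y := by
    refine le_trans (le_of_eq ?_) (abs_add_le _ _); congr 1; simp; ring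
  mul₁ x y := by
    rw [← abs_mul]
    refine le_of_eq (congrArg _ ?_)
    simp only [QuadraticAlgebra.re_mul, QuadraticAlgebra.im_mul]; push_cast
    linear_combination (-((x.im : ℝ) * y.im)) * ht
  mul₂ x y := by
    rw [← abs_mul]
    refine le_of_eq (congrArg _ ?_)
    simp only [QuadraticAlgebra.re_mul, QuadraticAlgebra.im_mul]; push_cast
    rw [ht']
    linear_combination (-((x.im : ℝ) * y.im)) * ht
  abs_le x := by simp
  liouville x hx := by
    have h1 : ((x.re + t * x.im) * (x.re + t' * x.im) : ℝ) =
        ((x.re ^ 2 + x.re * x.im - x.im ^ 2 : ℤ) : ℝ) := by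
      push_cast; rw [ht']; linear_combination (-(x.im : ℝ) ^ 2) * ht
    have h2 : x.re ^ 2 + x.re * x.im - x.im ^ 2 ≠ 0 := by
      intro h
      have h3 : (2 * x.re + x.im) * (2 * x.re + x.im) = 5 * (x.im * x.im) := by linear_combination 4 * h
      have h5 : Irrational (√5) := by
        have := Nat.Prime.irrational_sqrt (p := 5) (by norm_num)
        exact_mod_cast this
      by_cases him : x.im = 0
      · rw [him] at h
        exact hx (QuadraticAlgebra.ext (by simpa using h) him)
      · refine h5 ⟨|(2 * x.re + x.im : ℚ) / x.im|, ?_⟩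
        symm
        rw [Real.sqrt_eq_iff_mul_self_eq (by norm_num) (by positivity)]
        have h6 : ((2 * x.re + x.im) * (2 * x.re + x.im) : ℝ) = 5 * (x.im * x.im) := by
          exact_mod_cast h3
        push_cast
        rw [abs_mul_abs_self]
        have : (x.im : ℝ) ≠ 0 := by exact_mod_cast him
        field_simp
        linear_combination -h6
    simp only [quadraticEval_apply, Int.coe_castRingHom, pow_zero, mul_one, zero_add, pow_one]
    rw [← abs_mul, h1, ← Int.cast_abs]
    exact_mod_cast Int.one_le_abs h2

open Real in
/-- The embeddings of `ℤ[φ, √2, √3]` extending the embedding of `ℤ[φ]` given by `t`. -/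
noncomputable def ZphiSqrtTwoThree.sizedEmbedding {t t' : ℝ} (ht : t ^ 2 = 1 + t)
    (ht' : t' = 1 - t) : SizedEmbedding ZphiSqrtTwoThree 3 :=
  ((Zphi.sizedEmbedding ht ht').adjoin 2 (t := √2) (s₁ := √2) (s₂ := √2) (by simp [map_ofNat])
    (abs_of_nonneg (by positivity)).le (by positivity)
    (by simp [Zphi.sizedEmbedding, QuadraticAlgebra.re_ofNat, QuadraticAlgebra.im_ofNat])
    (by simp [Zphi.sizedEmbedding, QuadraticAlgebra.re_ofNat, QuadraticAlgebra.im_ofNat])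
    Zphi.eq_zero_of_sq_eq_two_mul).adjoin 3 (t := √3) (s₁ := √3) (s₂ := √3) (by simp [map_ofNat])
    (abs_of_nonneg (by positivity)).le (by positivity)
    (by simp [Zphi.sizedEmbedding, SizedEmbedding.adjoin, QuadraticAlgebra.re_ofNat,
      QuadraticAlgebra.im_ofNat])
    (by simp [Zphi.sizedEmbedding, SizedEmbedding.adjoin, QuadraticAlgebra.re_ofNat,
      QuadraticAlgebra.im_ofNat]) ZphiSqrtTwo.eq_zero_of_sq_eq_three_mul

theorem ZphiSqrtTwoThree.eq_zero_of_sq_eq_gen_mul :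
    IsStronglyNonSquare ZphiSqrtTwoThree ⟨⟨Zphi.gen, 0⟩, 0⟩ := by
  have hψ : Real.goldenConj ^ 2 = 1 + Real.goldenConj := by
    rw [Real.goldenConj_sq]; ring
  have hψ' : Real.goldenRatio = 1 - Real.goldenConj := by
    linarith [Real.goldenRatio_add_goldenConj]
  refine (ZphiSqrtTwoThree.sizedEmbedding hψ hψ').isStronglyNonSquare ?_
  simpa [ZphiSqrtTwoThree.sizedEmbedding, SizedEmbedding.adjoin, Zphi.sizedEmbedding] using
    Real.goldenConj_neg

open Real in
/-- The embedding of `ℤ[√φ, √2, √3]` with all generators positive. -/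
noncomputable def KummerRing.sizedEmbedding : SizedEmbedding KummerRing 7 :=
  (ZphiSqrtTwoThree.sizedEmbedding (t := goldenRatio) (t' := goldenConj)
      (by rw [goldenRatio_sq]; ring) (by linarith [goldenRatio_add_goldenConj])).adjoin
    ⟨⟨Zphi.gen, 0⟩, 0⟩ (t := √goldenRatio) (s₁ := √goldenRatio) (s₂ := √(goldenRatio⁻¹))
    (by
      rw [sq_sqrt goldenRatio_pos.le]
      simp [ZphiSqrtTwoThree.sizedEmbedding, SizedEmbedding.adjoin, Zphi.sizedEmbedding])
    (abs_of_nonneg (by positivity)).le (by positivity)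
    (by
      rw [sq_sqrt goldenRatio_pos.le]
      simp [ZphiSqrtTwoThree.sizedEmbedding, SizedEmbedding.adjoin, Zphi.sizedEmbedding,
        abs_of_pos goldenRatio_pos])
    (by
      rw [sq_sqrt (inv_nonneg.2 goldenRatio_pos.le), inv_goldenRatio]
      simp [ZphiSqrtTwoThree.sizedEmbedding, SizedEmbedding.adjoin, Zphi.sizedEmbedding,
        abs_of_neg goldenConj_neg])
    ZphiSqrtTwoThree.eq_zero_of_sq_eq_gen_mul

/-- The embedding `φ ↦ (1 + √5) / 2`. -/
noncomputable def Zphi.val : Zphi →+* ℝ :=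
  quadraticEval (Int.castRingHom ℝ) (t := Real.goldenRatio) (by simp [Real.goldenRatio_sq, add_comm])

/-- The embedding `φ ↦ (1 - √5) / 2`. -/
noncomputable def Zphi.conjVal : Zphi →+* ℝ :=
  quadraticEval (Int.castRingHom ℝ) (t := Real.goldenConj) (by simp [Real.goldenConj_sq, add_comm])

open Real in
theorem eq_zero_of_kummer_sum_small (c : Fin 2 → Fin 2 → Fin 2 → Zphi) {B₁ B₂ : ℝ}
    (h₁ : ∀ i j k, |Zphi.val (c i j k)| ≤ B₁) (h₂ : ∀ i j k, |Zphi.conjVal (c i j k)| ≤ B₂)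
    (hS : |∑ i, ∑ j, ∑ k, Zphi.val (c i j k) * (√goldenRatio ^ (i : ℕ) * √2 ^ (j : ℕ) *
      √3 ^ (k : ℕ))| * (16 * B₁) ^ 7 * (16 * B₂) ^ 8 < 1) : ∀ i j k, c i j k = 0 := by
  set x : KummerRing := ⟨⟨⟨c 0 0 0, c 0 1 0⟩, ⟨c 0 0 1, c 0 1 1⟩⟩,
    ⟨⟨c 1 0 0, c 1 1 0⟩, ⟨c 1 0 1, c 1 1 1⟩⟩⟩ with hx
  have hB₁ : 0 ≤ B₁ := (abs_nonneg _).trans (h₁ 0 0 0)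
  have hB₂ : 0 ≤ B₂ := (abs_nonneg _).trans (h₂ 0 0 0)
  have hσ : KummerRing.sizedEmbedding.σ x = ∑ i, ∑ j, ∑ k, Zphi.val (c i j k) *
      (√goldenRatio ^ (i : ℕ) * √2 ^ (j : ℕ) * √3 ^ (k : ℕ)) := by
    simp only [KummerRing.sizedEmbedding, ZphiSqrtTwoThree.sizedEmbedding, SizedEmbedding.adjoin,
      Zphi.sizedEmbedding, quadraticEval_apply, hx, Fin.sum_univ_two, Fin.val_zero, Fin.val_one,
      Zphi.val]
    ring
  have two : √2 ≤ 1.42 := by rw [sqrt_le_left (by norm_num)]; norm_num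
  have three : √3 ≤ 1.74 := by rw [sqrt_le_left (by norm_num)]; norm_num
  have gold : √goldenRatio ≤ 1.28 := by
    rw [sqrt_le_left (by norm_num)]
    nlinarith [goldenRatio_sq, goldenRatio_pos]
  have gold' : √(goldenRatio⁻¹) ≤ 1 := by
    rw [sqrt_le_left (by norm_num), one_pow]
    exact inv_le_one_of_one_le₀ one_lt_goldenRatio.le
  have key : ∀ (B s : ℝ), 0 ≤ B → 0 ≤ s → s ≤ 1.28 →
      B + √2 * B + √3 * (B + √2 * B) + s * (B + √2 * B + √3 * (B + √2 * B)) ≤ 16 * B := by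
    intro B s hB hs0 hs
    have e1 : B + √2 * B + √3 * (B + √2 * B) + s * (B + √2 * B + √3 * (B + √2 * B)) =
      ((1 + √2) * (1 + √3) * (1 + s)) * B := by ring
    rw [e1]
    refine mul_le_mul_of_nonneg_right ?_ hB
    calc (1 + √2) * (1 + √3) * (1 + s) ≤ (1 + 1.42) * (1 + 1.74) * (1 + 1.28) := by gcongr
      _ ≤ 16 := by norm_num
  have k1 : KummerRing.sizedEmbedding.ν₁ x ≤ 16 * B₁ := by
    refine le_trans ?_ (key B₁ (√goldenRatio) hB₁ (sqrt_nonneg _) gold)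
    simp only [KummerRing.sizedEmbedding, ZphiSqrtTwoThree.sizedEmbedding, SizedEmbedding.adjoin,
      Zphi.sizedEmbedding, hx]
    gcongr <;> exact h₁ _ _ _
  have k2 : KummerRing.sizedEmbedding.ν₂ x ≤ 16 * B₂ := by
    refine le_trans ?_ (key B₂ (√(goldenRatio⁻¹)) hB₂ (sqrt_nonneg _) (gold'.trans (by norm_num)))
    simp only [KummerRing.sizedEmbedding, ZphiSqrtTwoThree.sizedEmbedding, SizedEmbedding.adjoin,
      Zphi.sizedEmbedding, hx]
    gcongr <;> exact h₂ _ _ _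
  have hx0 : x = 0 := by
    by_contra h0
    have h := KummerRing.sizedEmbedding.liouville x h0
    rw [hσ] at h
    have n1 := KummerRing.sizedEmbedding.nonneg₁ x
    have n2 := KummerRing.sizedEmbedding.nonneg₂ x
    refine absurd hS (not_lt.2 (h.trans ?_))
    gcongr
  have e1 := congrArg QuadraticAlgebra.re hx0
  have e2 := congrArg QuadraticAlgebra.im hx0
  intro i j k
  fin_cases i <;> fin_cases j <;> fin_cases k
  · exact congrArg QuadraticAlgebra.re (congrArg QuadraticAlgebra.re e1)
  · exact congrArg QuadraticAlgebra.re (congrArg QuadraticAlgebra.im e1)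
  · exact congrArg QuadraticAlgebra.im (congrArg QuadraticAlgebra.re e1)
  · exact congrArg QuadraticAlgebra.im (congrArg QuadraticAlgebra.im e1)
  · exact congrArg QuadraticAlgebra.re (congrArg QuadraticAlgebra.re e2)
  · exact congrArg QuadraticAlgebra.re (congrArg QuadraticAlgebra.im e2)
  · exact congrArg QuadraticAlgebra.im (congrArg QuadraticAlgebra.re e2)
  · exact congrArg QuadraticAlgebra.im (congrArg QuadraticAlgebra.im e2)

theorem Ring.choose_succ_nsmul {R : Type*} [CommRing R] [BinomialRing R] (r : R) (a : ℕ) :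
    (a + 1) • Ring.choose r (a + 1) = Ring.choose r a * (r - a) := by
  have h1 := Ring.descPochhammer_eq_factorial_smul_choose r (a + 1)
  have h2 := Ring.descPochhammer_eq_factorial_smul_choose r a
  rw [descPochhammer_succ_right, smeval_mul, h2, smeval_sub, smeval_X, smeval_natCast,
    Nat.factorial_succ, mul_comm (a + 1), mul_smul, smul_mul_assoc] at h1
  have h3 := BinomialRing.toIsAddTorsionFree (R := R)
  have := nsmul_right_injective (M := R) (Nat.factorial_ne_zero a) h1
  simpa using this.symm

/-- The polynomials whose coefficients are integers. -/
noncomputable def integralPoly : Subring ℂ[X] := (Polynomial.mapRingHom (Int.castRingHom ℂ)).range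

theorem exists_coeff_eq_of_mem_integralPoly {p : ℂ[X]} (hp : p ∈ integralPoly) (j : ℕ) :
    ∃ z : ℤ, p.coeff j = z := by
  obtain ⟨q, rfl⟩ := hp
  exact ⟨q.coeff j, by simp⟩

theorem X_mem_integralPoly : (X : ℂ[X]) ∈ integralPoly := ⟨X, by simp⟩

theorem C_intCast_mem_integralPoly (z : ℤ) : (C (z : ℂ) : ℂ[X]) ∈ integralPoly := ⟨C z, by simp⟩

theorem choose_natCast_mul_X_sub_one_mem {D k : ℕ} (hD : ∀ i, 1 ≤ i → i ≤ k → i ∣ D) {a : ℕ}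
    (ha : a ≤ k) : Ring.choose (C (D : ℂ) * X - 1 : ℂ[X]) a ∈ integralPoly := by
  induction a with
  | zero => rw [Ring.choose_zero_right]; exact one_mem _
  | succ a ih =>
    obtain ⟨e, he⟩ := hD (a + 1) (by omega) ha
    have h1 := Ring.choose_succ_nsmul (C (D : ℂ) * X - 1 : ℂ[X]) a
    have h2 : (C (D : ℂ) * X - 1 - (a : ℂ[X]) : ℂ[X]) = (a + 1) • (C ((e : ℤ) : ℂ) * X - 1) := by
      rw [he]; simp; ring
    rw [h2, mul_smul_comm] at h1
    have h4 := nsmul_right_injective (M := ℂ[X]) (Nat.succ_ne_zero a) h1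
    rw [h4]
    exact mul_mem (ih (by omega)) (sub_mem (mul_mem (C_intCast_mem_integralPoly _)
      X_mem_integralPoly) (one_mem _))

theorem choose_natCast_mul_X_add_mem {D k : ℕ} (hD : ∀ i, 1 ≤ i → i ≤ k → i ∣ D) {a : ℕ}
    (ha : a ≤ k) (Y : ℤ) : Ring.choose (C (D : ℂ) * X + C (Y : ℂ) : ℂ[X]) a ∈ integralPoly := by
  have h : (C (D : ℂ) * X + C (Y : ℂ) : ℂ[X]) = (C (D : ℂ) * X - 1) + ((Y + 1 : ℤ) : ℂ[X]) := by
    push_cast; simp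
  rw [h, Ring.add_choose_eq _ (Commute.all _ _)]
  refine sum_mem fun x hx => mul_mem (choose_natCast_mul_X_sub_one_mem hD ?_) ?_
  · have := HasAntidiagonal.mem_antidiagonal.1 hx; omega
  · have := Ring.map_choose (Int.castRingHom ℂ[X]) (Y + 1) x.2
    simp only [eq_intCast] at this
    rw [← this]
    exact intCast_mem _ _

/-- Feldman's polynomials: products of binomial coefficients of bounded lower index. -/
noncomputable def feldman (k i : ℕ) : ℂ[X] :=
  Ring.choose X k ^ (i / k) * Ring.choose X (i % k)

theorem natDegree_choose_X (a : ℕ) : (Ring.choose (X : ℂ[X]) a).natDegree = a := by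
  have h1 := Ring.descPochhammer_eq_factorial_smul_choose (X : ℂ[X]) a
  rw [← aeval_eq_smeval] at h1
  have h2 : (aeval (X : ℂ[X]) (descPochhammer ℤ a)) = descPochhammer ℂ a := by
    rw [← descPochhammer_map (Int.castRingHom ℂ), ← eval₂_C_X (p := map _ _), eval₂_map, aeval_def]
    congr 1
  rw [h2] at h1
  have h3 := descPochhammer_natDegree ℂ a
  rwa [h1, nsmul_eq_mul, ← C_eq_natCast,
    natDegree_C_mul (by exact_mod_cast Nat.factorial_ne_zero a)] at h3

theorem choose_X_ne_zero (a : ℕ) : Ring.choose (X : ℂ[X]) a ≠ 0 := by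
  rcases Nat.eq_zero_or_pos a with rfl | h
  · rw [Ring.choose_zero_right]; exact one_ne_zero
  · intro h0
    have := natDegree_choose_X a
    rw [h0, natDegree_zero] at this; omega

theorem feldman_ne_zero (k i : ℕ) : feldman k i ≠ 0 :=
  mul_ne_zero (pow_ne_zero _ (choose_X_ne_zero _)) (choose_X_ne_zero _)

theorem natDegree_feldman (k i : ℕ) : (feldman k i).natDegree = i := by
  rw [feldman, natDegree_mul (pow_ne_zero _ (choose_X_ne_zero _)) (choose_X_ne_zero _),
    natDegree_pow, natDegree_choose_X, natDegree_choose_X, mul_comm, Nat.div_add_mod]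

theorem feldman_hasseDeriv_integral {D k : ℕ} (hk : 0 < k) (hD : ∀ i, 1 ≤ i → i ≤ k → i ∣ D)
    (i j : ℕ) (Y : ℤ) :
    ∃ z : ℤ, (D : ℂ) ^ j * (hasseDeriv j (feldman k i)).eval (Y : ℂ) = z := by
  have h1 : (feldman k i).comp (C (D : ℂ) * X + C (Y : ℂ)) ∈ integralPoly := by
    have h2 : ∀ a ≤ k, (Ring.choose (X : ℂ[X]) a).comp (C (D : ℂ) * X + C (Y : ℂ)) ∈
        integralPoly := by
      intro a ha
      have := Ring.map_choose (compRingHom (C (D : ℂ) * X + C (Y : ℂ))) (X : ℂ[X]) a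
      simp only [coe_compRingHom_apply, X_comp] at this
      rw [this]
      exact choose_natCast_mul_X_add_mem hD ha Y
    rw [feldman, mul_comp, pow_comp]
    exact mul_mem (pow_mem (h2 k le_rfl) _) (h2 _ (Nat.mod_lt _ hk).le)
  obtain ⟨z, hz⟩ := exists_coeff_eq_of_mem_integralPoly h1 j
  refine ⟨z, ?_⟩
  rw [← hz]
  have h3 : (feldman k i).comp (C (D : ℂ) * X + C (Y : ℂ)) =
      (taylor (Y : ℂ) (feldman k i)).comp (C (D : ℂ) * X) := by
    rw [taylor_apply, comp_assoc]; simp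
  rw [h3, comp_C_mul_X_coeff, taylor_coeff, mul_comm]

theorem eq_zero_of_sum_feldman_eq_zero {k N : ℕ} (p : ℕ → ℂ)
    (h : ∑ i ∈ range N, C (p i) * feldman k i = 0) : ∀ i < N, p i = 0 := by
  induction N with
  | zero => intro i hi; omega
  | succ N ih =>
    have h1 : p N = 0 := by
      have := congrArg (fun q => coeff q N) h
      simp only [sum_range_succ, coeff_add, coeff_C_mul, coeff_zero, finsetSum_coeff] at this
      rw [sum_eq_zero, zero_add] at this
      · have h2 : (feldman k N).coeff N ≠ 0 := by
          have h3 := leadingCoeff_ne_zero.2 (feldman_ne_zero k N)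
          rwa [leadingCoeff, natDegree_feldman] at h3
        exact (mul_eq_zero.1 this).resolve_right h2
      · intro i hi
        rw [coeff_eq_zero_of_natDegree_lt (by rw [natDegree_feldman]; exact mem_range.1 hi),
          mul_zero]
    intro i hi
    rcases Nat.lt_succ_iff_lt_or_eq.1 hi with h2 | rfl
    · refine ih ?_ i h2
      rw [sum_range_succ, h1] at h
      simpa using h
    · exact h1

theorem wnorm_C_mul (τ : ℕ) (r : ℝ) (c : ℂ) (p : ℂ[X]) : wnorm τ r (C c * p) = ‖c‖ * wnorm τ r p := by
  unfold wnorm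
  rw [mul_sum]
  exact sum_congr rfl fun j _ => by rw [coeff_C_mul, norm_mul, mul_assoc]

theorem wnorm_add_le {τ : ℕ} {r : ℝ} (hr : 0 ≤ r) (p q : ℂ[X]) :
    wnorm τ r (p + q) ≤ wnorm τ r p + wnorm τ r q := by
  unfold wnorm
  rw [← sum_add_distrib]
  refine sum_le_sum fun j _ => ?_
  rw [coeff_add, ← add_mul]
  gcongr
  exact norm_add_le _ _

theorem wnorm_X_le (τ : ℕ) {r : ℝ} (hr : 0 ≤ r) : wnorm τ r X ≤ r := by
  unfold wnorm
  calc _ ≤ ∑ j ∈ range τ, if j = 1 then r else 0 := by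
        refine sum_le_sum fun j _ => ?_
        rw [coeff_X]
        split_ifs with h1 h2 h2
        · subst h1; simp
        · omega
        · omega
        · simp
    _ ≤ r := by
        rw [sum_ite_eq']
        split_ifs <;> simp [hr]

theorem wnorm_C_le (τ : ℕ) (r : ℝ) (c : ℂ) : wnorm τ r (C c) ≤ ‖c‖ := by
  rw [← mul_one (C c), wnorm_C_mul]
  exact mul_le_of_le_one_right (norm_nonneg _) (wnorm_one_le τ r)

theorem wnorm_choose_X_le (τ : ℕ) {r K : ℝ} (hr : 0 ≤ r) {a : ℕ} (ha : a ≤ K) :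
    wnorm τ r (Ring.choose X a) ≤ (r + K) ^ a / a.factorial := by
  induction a with
  | zero => rw [Ring.choose_zero_right]; simpa using wnorm_one_le τ r
  | succ a ih =>
    push_cast at ha
    have ha' : (a : ℝ) ≤ K := by linarith
    have h1 := congrArg (wnorm τ r) (Ring.choose_succ_nsmul (X : ℂ[X]) a)
    rw [nsmul_eq_mul, ← C_eq_natCast, wnorm_C_mul] at h1
    have h2 : wnorm τ r (X - (a : ℂ[X])) ≤ r + K := by
      have : (X - (a : ℂ[X])) = X + C (-a : ℂ) := by simp [sub_eq_add_neg]
      rw [this]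
      refine (wnorm_add_le hr _ _).trans (add_le_add (wnorm_X_le τ hr) ?_)
      refine (wnorm_C_le τ r _).trans ?_
      simpa using ha'
    have h3 : wnorm τ r (Ring.choose X a * (X - (a : ℂ[X]))) ≤
        (r + K) ^ a / a.factorial * (r + K) :=
      (wnorm_mul_le hr _ _).trans (mul_le_mul (ih ha') h2 (wnorm_nonneg hr _)
        (div_nonneg (pow_nonneg (by linarith [Nat.cast_nonneg (α := ℝ) a]) _) (by positivity)))
    rw [← h1, Complex.norm_natCast] at h3
    rw [le_div_iff₀ (by positivity), Nat.factorial_succ]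
    push_cast at h3 ⊢
    calc _ = (((a : ℝ) + 1) * wnorm τ r (Ring.choose X (a + 1))) * a.factorial := by ring
      _ ≤ ((r + K) ^ a / a.factorial * (r + K)) * a.factorial := by gcongr
      _ = _ := by field_simp; ring

theorem wnorm_choose_X_le_of_le (τ : ℕ) {r : ℝ} (hr : 0 ≤ r) {a k : ℕ} (hk : 0 < k) (ha : a ≤ k) :
    wnorm τ r (Ring.choose X a) ≤ (3 * (r + k) / k) ^ k := by
  have h1 := wnorm_choose_X_le τ hr (a := a) (K := k) (by exact_mod_cast ha)
  have h2 : ∀ d ≤ k, (r + k) ^ (k - d) / (k - d).factorial ≤ (r + k) ^ k / (k.factorial : ℝ) := by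
    intro d hd
    induction d with
    | zero => simp
    | succ d ih =>
      refine le_trans ?_ (ih (by omega))
      obtain ⟨b, hb⟩ : ∃ b, b + 1 = k - d := ⟨k - d - 1, by omega⟩
      have hb' : k - (d + 1) = b := by omega
      have hbk : ((b : ℝ) + 1) ≤ r + k := by
        have : ((b + 1 : ℕ) : ℝ) ≤ k := by exact_mod_cast (by omega)
        push_cast at this; linarith
      rw [← hb, hb', div_le_div_iff₀ (by positivity) (by positivity), Nat.factorial_succ, pow_succ]
      push_cast
      calc _ = (r + k) ^ b * b.factorial * (b + 1) := by ring
        _ ≤ (r + k) ^ b * b.factorial * (r + k) := by gcongr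
        _ = _ := by ring
  have h3 := h2 (k - a) (Nat.sub_le _ _)
  rw [Nat.sub_sub_self ha] at h3
  refine h1.trans (h3.trans ?_)
  have h4 : (k : ℝ) ^ k / k.factorial ≤ 3 ^ k := by
    refine (Real.pow_div_factorial_le_exp (k : ℝ) (Nat.cast_nonneg k) k).trans ?_
    rw [← mul_one (k : ℝ), Real.exp_nat_mul]
    exact pow_le_pow_left₀ (Real.exp_pos _).le (by linarith [Real.exp_one_lt_d9]) _
  have hk' : (0 : ℝ) < k := by exact_mod_cast hk
  calc (r + k) ^ k / (k.factorial : ℝ) = ((r + k) / k) ^ k * ((k : ℝ) ^ k / k.factorial) := by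
        rw [div_pow]; field_simp
    _ ≤ ((r + k) / k) ^ k * 3 ^ k := by gcongr
    _ = _ := by rw [← mul_pow]; congr 1; ring

theorem wnorm_feldman_le (τ : ℕ) {r : ℝ} (hr : 0 ≤ r) {k l i : ℕ} (hk : 0 < k)
    (hrk : 3 * (r + k) ≤ 2 ^ 40 * k) (hi : i < l * k) :
    wnorm τ r (feldman k i) ≤ 2 ^ (40 * k * l) := by
  have hk' : (0 : ℝ) < k := by exact_mod_cast hk
  have h1 : ∀ a ≤ k, wnorm τ r (Ring.choose X a) ≤ 2 ^ (40 * k) := by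
    intro a ha
    refine (wnorm_choose_X_le_of_le τ hr hk ha).trans ?_
    rw [pow_mul]
    exact pow_le_pow_left₀ (by positivity) ((div_le_iff₀ hk').2 hrk) _
  have hl : i / k + 1 ≤ l := (Nat.div_lt_iff_lt_mul hk).2 hi
  calc wnorm τ r (feldman k i) ≤ (2 ^ (40 * k)) ^ (i / k) * 2 ^ (40 * k) := by
        refine (wnorm_mul_le hr _ _).trans (mul_le_mul ((wnorm_pow_le hr _ _).trans ?_)
          (h1 _ (Nat.mod_lt _ hk).le) (wnorm_nonneg hr _) (by positivity))
        exact pow_le_pow_left₀ (wnorm_nonneg hr _) (h1 k le_rfl) _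
    _ = (2 ^ (40 * k)) ^ (i / k + 1) := by rw [pow_succ]
    _ ≤ (2 ^ (40 * k)) ^ l := pow_le_pow_right₀ (one_le_pow₀ (by norm_num)) hl
    _ = _ := by rw [← pow_mul]

/-- The coefficients at `a` of a Hasse derivative, in terms of the coefficients at `0`. -/
theorem wnorm_taylor_hasseDeriv_le {τ τ' : ℕ} {p : ℂ[X]} (hp : p.natDegree < τ') {g : ℝ}
    (hg : 0 ≤ g) (a : ℂ) (j : ℕ) :
    wnorm τ g (taylor a (hasseDeriv j p)) ≤ wnorm τ' (‖a‖ + g + 1) p := by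
  have h1 : taylor a (hasseDeriv j p) =
      ∑ i ∈ range τ', C (p.coeff i * (i.choose j : ℂ)) * (X + C a) ^ (i - j) := by
    conv_lhs => rw [p.as_sum_range' τ' hp]
    rw [map_sum, map_sum]
    refine sum_congr rfl fun i _ => ?_
    rw [hasseDeriv_monomial, taylor_monomial, mul_comm (p.coeff i)]
  rw [h1]
  refine (wnorm_sum_le hg _ _).trans (sum_le_sum fun i _ => ?_)
  rw [wnorm_C_mul, norm_mul, mul_assoc]
  refine mul_le_mul_of_nonneg_left ?_ (norm_nonneg _)
  have h2 : wnorm τ g ((X + C a) ^ (i - j)) ≤ (‖a‖ + g) ^ (i - j) := by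
    refine (wnorm_pow_le hg _ _).trans (pow_le_pow_left₀ (wnorm_nonneg hg _) ?_ _)
    rw [add_comm ‖a‖]
    exact (wnorm_add_le hg _ _).trans (add_le_add (wnorm_X_le τ hg) (wnorm_C_le τ g _))
  rw [Complex.norm_natCast]
  rcases lt_or_ge i j with hij | hij
  · rw [Nat.choose_eq_zero_of_lt hij]; simp; positivity
  · calc (i.choose j : ℝ) * wnorm τ g ((X + C a) ^ (i - j))
        ≤ i.choose j * (‖a‖ + g) ^ (i - j) := by gcongr
      _ = (‖a‖ + g) ^ (i - j) * 1 ^ (i - (i - j)) * i.choose (i - j) := by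
          rw [one_pow, mul_one, Nat.choose_symm hij, mul_comm]
      _ ≤ _ := by
          rw [add_pow (‖a‖ + g) 1 i]
          exact single_le_sum (f := fun m => (‖a‖ + g) ^ m * 1 ^ (i - m) * (i.choose m : ℝ))
            (fun m _ => by positivity) (mem_range.2 (by omega))

theorem norm_eval_hasseDeriv_le {τ : ℕ} {p : ℂ[X]} (hp : p.natDegree < τ) (z : ℂ) (j : ℕ) :
    ‖(hasseDeriv j p).eval z‖ ≤ wnorm τ (‖z‖ + 1) p := by
  have h := wnorm_taylor_hasseDeriv_le (τ := 1) hp le_rfl z j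
  simpa [wnorm, taylor_coeff_zero] using h

theorem lcmUpto_le_two_pow {k : ℕ} (hk : 19 ≤ k) : Nat.lcmUpto k ≤ 2 ^ (4 * k) := by
  have hk' : (19 : ℝ) ≤ k := by exact_mod_cast hk
  have h1 := Chebyshev.psi_le (x := (k : ℝ)) (by linarith)
  rw [Chebyshev.psi_eq_log_lcmUpto] at h1
  have he : Real.exp 2 ≤ 19 := by
    have : Real.exp 2 = Real.exp 1 ^ 2 := by rw [← Real.exp_nat_mul]; norm_num
    rw [this]
    nlinarith [Real.exp_one_lt_d9, Real.exp_pos 1]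
  have h2 : Real.log k / √k ≤ Real.log 19 / √19 :=
    Real.log_div_sqrt_antitoneOn he (he.trans hk') hk'
  have h19 : Real.log 19 ≤ √19 * Real.log 2 := by
    have h3 : (4.35 : ℝ) ≤ √19 := Real.le_sqrt_of_sq_le (by norm_num)
    have h4 : (20 : ℝ) * Real.log 19 ≤ 85 * Real.log 2 := by
      have := Real.log_le_log (x := (19 : ℝ) ^ 20) (y := 2 ^ 85) (by positivity) (by norm_num)
      rw [Real.log_pow, Real.log_pow] at this
      exact_mod_cast this
    nlinarith [Real.log_two_gt_d9]
  have h5 : Real.log k ≤ √k * Real.log 2 := by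
    have h6 : (0 : ℝ) < √k := Real.sqrt_pos.2 (by linarith)
    have h7 : (0 : ℝ) < √19 := Real.sqrt_pos.2 (by norm_num)
    rw [div_le_iff₀ h6] at h2
    calc _ ≤ _ := h2
      _ ≤ Real.log 2 * √k := by
        gcongr; rw [div_le_iff₀ h7]; linarith
      _ = _ := mul_comm _ _
  have h8 : Real.log (Nat.lcmUpto k) ≤ Real.log ((2 : ℝ) ^ (4 * k)) := by
    refine h1.trans ?_
    have h9 : √(k : ℝ) * √k = k := Real.mul_self_sqrt (by linarith)
    have h10 : Real.log 4 = 2 * Real.log 2 := by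
      rw [show (4 : ℝ) = 2 ^ 2 by norm_num, Real.log_pow]; norm_num
    rw [Real.log_pow, h10]
    push_cast
    calc _ ≤ 2 * Real.log 2 * k + 2 * √k * (√k * Real.log 2) := by gcongr
      _ = 2 * Real.log 2 * k + 2 * (√k * √k) * Real.log 2 := by ring
      _ = _ := by rw [h9]; ring
  have h11 := (Real.log_le_log_iff (by exact_mod_cast Nat.lcmUpto_pos k) (by positivity)).1 h8
  exact_mod_cast h11

theorem dvd_lcmUpto {k i : ℕ} (h1 : 1 ≤ i) (h2 : i ≤ k) : i ∣ Nat.lcmUpto k :=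
  Finset.dvd_lcm (f := id) (mem_Icc.2 ⟨h1, h2⟩)

theorem goldenRatio_pow_succ_eq (m : ℕ) :
    Real.goldenRatio ^ (m + 1) = Nat.fib (m + 1) * Real.goldenRatio + Nat.fib m := by
  rw [← Real.goldenRatio_mul_fib_succ_add_fib, mul_comm]

theorem log_goldenRatio_pos : 0 < Real.log Real.goldenRatio :=
  Real.log_pos Real.one_lt_goldenRatio

theorem log_goldenRatio_le : 36 * Real.log Real.goldenRatio ≤ 25 * Real.log 2 := by
  have h : Real.goldenRatio ^ 36 ≤ 2 ^ 25 := by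
    rw [goldenRatio_pow_succ_eq 35]
    have : Real.goldenRatio ≤ 1.62 := by
      nlinarith [Real.goldenRatio_sq, Real.one_lt_goldenRatio]
    norm_num [Nat.fib_add_two]
    linarith
  have := Real.log_le_log (pow_pos Real.goldenRatio_pos _) h
  rw [Real.log_pow, Real.log_pow] at this
  exact_mod_cast this

theorem log_three_le : 41 * Real.log 3 ≤ 65 * Real.log 2 := by
  have := Real.log_le_log (x := (3 : ℝ) ^ 41) (y := 2 ^ 65) (by positivity) (by norm_num)
  rw [Real.log_pow, Real.log_pow] at this
  exact_mod_cast this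

theorem two_mul_log_goldenRatio_le : 2 * Real.log Real.goldenRatio ≤ Real.log 3 := by
  have h : Real.goldenRatio ^ 2 ≤ 3 := by
    rw [Real.goldenRatio_sq]; linarith [Real.goldenRatio_lt_two]
  have := Real.log_le_log (pow_pos Real.goldenRatio_pos _) h
  rw [Real.log_pow] at this
  exact_mod_cast this

theorem log_three_sub_le : 5 * Real.log 3 ≤ Real.log 2 + 10 * Real.log Real.goldenRatio := by
  have h : (3 : ℝ) ^ 5 ≤ 2 * Real.goldenRatio ^ 10 := by
    rw [goldenRatio_pow_succ_eq 9]
    have : 1.61 ≤ Real.goldenRatio := by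
      nlinarith [Real.goldenRatio_sq, Real.one_lt_goldenRatio]
    norm_num [Nat.fib_add_two]
    linarith
  have := Real.log_le_log (by positivity) h
  rw [Real.log_mul (by norm_num) (pow_ne_zero _ Real.goldenRatio_ne_zero), Real.log_pow,
    Real.log_pow] at this
  exact_mod_cast this

/-- The box of exponent vectors. -/
def boxIdx (L : ℕ) : Finset (ℕ × ℕ × ℕ) := range L ×ˢ range L ×ˢ range L

/-- The exponent of `φ` attached to an exponent vector. -/
def expPhi (v : ℕ × ℕ × ℕ) : ℤ := v.1 - v.2.1 - 2 * v.2.2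

/-- The logarithm of the element `φ ^ e * 2 ^ b * 3 ^ c` attached to an exponent vector. -/
noncomputable def logWeight (v : ℕ × ℕ × ℕ) : ℝ :=
  expPhi v * Real.log Real.goldenRatio + v.2.1 * Real.log 2 + v.2.2 * Real.log 3

theorem logWeight_eq (v : ℕ × ℕ × ℕ) : logWeight v = v.1 * Real.log Real.goldenRatio +
    v.2.1 * (Real.log 2 - Real.log Real.goldenRatio) +
    v.2.2 * (Real.log 3 - 2 * Real.log Real.goldenRatio) := by
  rw [logWeight, expPhi]; push_cast; ring

theorem logWeight_nonneg (v : ℕ × ℕ × ℕ) : 0 ≤ logWeight v := by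
  have h1 := log_goldenRatio_pos
  have h2 := log_goldenRatio_le
  have h3 : 0 ≤ Real.log 2 - Real.log Real.goldenRatio := by linarith
  have h4 : 0 ≤ Real.log 3 - 2 * Real.log Real.goldenRatio := by
    linarith [two_mul_log_goldenRatio_le]
  rw [logWeight_eq]
  positivity

theorem mem_boxIdx {L : ℕ} {v : ℕ × ℕ × ℕ} : v ∈ boxIdx L ↔ v.1 < L ∧ v.2.1 < L ∧ v.2.2 < L := by
  simp [boxIdx]

theorem logWeight_le {L : ℕ} {v : ℕ × ℕ × ℕ} (hv : v ∈ boxIdx L) :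
    logWeight v ≤ 1.2 * Real.log 2 * L := by
  obtain ⟨ha, hb, hc⟩ := mem_boxIdx.1 hv
  have h1 := log_goldenRatio_pos
  have h2 := log_goldenRatio_le
  have h3 : 0 ≤ Real.log 2 - Real.log Real.goldenRatio := by linarith
  have h4 : 0 ≤ Real.log 3 - 2 * Real.log Real.goldenRatio := by
    linarith [two_mul_log_goldenRatio_le]
  rw [logWeight_eq]
  calc _ ≤ L * Real.log Real.goldenRatio + L * (Real.log 2 - Real.log Real.goldenRatio) +
        L * (Real.log 3 - 2 * Real.log Real.goldenRatio) := by gcongr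
    _ = (Real.log 2 + Real.log 3 - 2 * Real.log Real.goldenRatio) * L := by ring
    _ ≤ _ := by
      gcongr
      linarith [log_three_sub_le]

theorem abs_expPhi_le {L : ℕ} {v : ℕ × ℕ × ℕ} (hv : v ∈ boxIdx L) : |expPhi v| ≤ 3 * L := by
  obtain ⟨ha, hb, hc⟩ := mem_boxIdx.1 hv
  rw [expPhi, abs_le]
  constructor <;> omega

/-- The fundamental unit of `ℤ[φ]`. -/
def Zphi.unit : Zphiˣ where
  val := Zphi.gen
  inv := ⟨-1, 1⟩
  val_inv := by ext <;> simp [QuadraticAlgebra.re_one, QuadraticAlgebra.im_one]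
  inv_val := by ext <;> simp [QuadraticAlgebra.re_one, QuadraticAlgebra.im_one]

/-- The element `φ ^ E * 2 ^ q * 3 ^ r`. -/
def Zphi.elt (E : ℤ) (q r : ℕ) : Zphi := ((Zphi.unit ^ E : Zphiˣ) : Zphi) * 2 ^ q * 3 ^ r

theorem Zphi.val_gen : Zphi.val Zphi.gen = Real.goldenRatio := by simp [Zphi.val]

theorem Zphi.conjVal_gen : Zphi.conjVal Zphi.gen = Real.goldenConj := by simp [Zphi.conjVal]

theorem Zphi.map_elt (f : Zphi →+* ℝ) (E : ℤ) (q r : ℕ) :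
    f (Zphi.elt E q r) = f Zphi.gen ^ E * 2 ^ q * 3 ^ r := by
  have h : f ((Zphi.unit ^ E : Zphiˣ) : Zphi) = f Zphi.gen ^ E := by
    rw [← MonoidHom.coe_coe f, ← Units.coe_map, map_zpow, Units.val_zpow_eq_zpow_val]
    rfl
  rw [Zphi.elt, map_mul, map_mul, h, map_pow, map_pow, map_ofNat, map_ofNat]

theorem Zphi.val_elt (E : ℤ) (q r : ℕ) : Zphi.val (Zphi.elt E q r) =
    Real.exp (E * Real.log Real.goldenRatio + q * Real.log 2 + r * Real.log 3) := by
  rw [Zphi.map_elt, Zphi.val_gen, Real.exp_add, Real.exp_add, ← Real.rpow_intCast,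
    Real.rpow_def_of_pos Real.goldenRatio_pos, mul_comm (Real.log _), Real.exp_nat_mul,
    Real.exp_nat_mul, Real.exp_log (by norm_num), Real.exp_log (by norm_num)]

/-- An upper bound for both conjugates of `Zphi.elt E q r`. -/
theorem Zphi.abs_elt_le (E : ℤ) (q r : ℕ) {H : ℝ} (hE : |(E : ℝ)| ≤ H) :
    |Zphi.val (Zphi.elt E q r)| ≤
      Real.exp (H * Real.log Real.goldenRatio + q * Real.log 2 + r * Real.log 3) ∧
    |Zphi.conjVal (Zphi.elt E q r)| ≤
      Real.exp (H * Real.log Real.goldenRatio + q * Real.log 2 + r * Real.log 3) := by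
  have h0 := log_goldenRatio_pos
  obtain ⟨hE1, hE2⟩ := abs_le.1 hE
  constructor
  · rw [Zphi.val_elt, Real.abs_exp]
    gcongr
  · have h1 : |Real.goldenConj| = Real.exp (-Real.log Real.goldenRatio) := by
      rw [Real.exp_neg, Real.exp_log Real.goldenRatio_pos, Real.inv_goldenRatio,
        abs_of_neg Real.goldenConj_neg]
    rw [Zphi.map_elt, Zphi.conjVal_gen, abs_mul, abs_mul, abs_zpow, h1, abs_of_pos (by positivity),
      abs_of_pos (by positivity), ← Real.rpow_intCast, ← Real.exp_mul,
      Real.exp_add, Real.exp_add,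
      Real.exp_nat_mul, Real.exp_nat_mul, Real.exp_log (by norm_num), Real.exp_log (by norm_num)]
    have h2 : -Real.log Real.goldenRatio * E ≤ H * Real.log Real.goldenRatio := by nlinarith
    have h3 := Real.exp_le_exp.2 h2
    gcongr

theorem Zphi.abs_coord_le (z : Zphi) {B : ℝ} (h₁ : |Zphi.val z| ≤ B) (h₂ : |Zphi.conjVal z| ≤ B) :
    |(z.re : ℝ)| ≤ 2 * B ∧ |(z.im : ℝ)| ≤ 2 * B := by
  have e1 : Zphi.val z = z.re + z.im * Real.goldenRatio := by simp [Zphi.val, mul_comm]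
  have e2 : Zphi.conjVal z = z.re + z.im * Real.goldenConj := by simp [Zphi.conjVal, mul_comm]
  have h5 : Real.goldenRatio - Real.goldenConj = √5 := Real.goldenRatio_sub_goldenConj
  have h6 : (2 : ℝ) ≤ √5 := Real.le_sqrt_of_sq_le (by norm_num)
  have hφ := Real.goldenRatio_pos
  have hφ2 := Real.goldenRatio_lt_two
  have hψ := Real.goldenConj_neg
  have hψ1 := Real.neg_one_lt_goldenConj
  have hB : 0 ≤ B := (abs_nonneg _).trans h₁
  have him : (z.im : ℝ) * √5 = Zphi.val z - Zphi.conjVal z := by rw [e1, e2, ← h5]; ring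
  have hre : (z.re : ℝ) * √5 = Real.goldenRatio * Zphi.conjVal z - Real.goldenConj * Zphi.val z := by
    rw [e1, e2, ← h5]; ring
  have k1 : |(z.im : ℝ)| * √5 ≤ 2 * B := by
    rw [← abs_of_nonneg (Real.sqrt_nonneg 5), ← abs_mul, him]
    exact (abs_sub _ _).trans (by linarith)
  have k2 : |(z.re : ℝ)| * √5 ≤ 3 * B := by
    rw [← abs_of_nonneg (Real.sqrt_nonneg 5), ← abs_mul, hre]
    refine (abs_sub _ _).trans ?_
    rw [abs_mul, abs_mul, abs_of_pos hφ, abs_of_neg hψ]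
    nlinarith [abs_nonneg (Zphi.val z), abs_nonneg (Zphi.conjVal z)]
  constructor <;> nlinarith [abs_nonneg (z.re : ℝ), abs_nonneg (z.im : ℝ)]

open scoped Matrix.Norms.Elementwise in
/-- A quantitative form of Siegel's lemma, with sizes measured in powers of two. -/
theorem exists_small_int_solution {α β : Type*} [Fintype α] [Fintype β] [Nonempty α]
    (A : Matrix α β ℤ) {b c B : ℕ} (hcard : 59 * Fintype.card α ≤ 10 * Fintype.card β)
    (hβ : Fintype.card β ≤ 2 ^ b) (hA : ∀ i j, |A i j| ≤ 2 ^ c) (hB : 10 * (b + c) ≤ 49 * B) :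
    ∃ t : β → ℤ, t ≠ 0 ∧ A.mulVec t = 0 ∧ ∀ j, |t j| ≤ 2 ^ B := by
  classical
  have hα : 0 < Fintype.card α := Fintype.card_pos
  obtain ⟨t, ht0, htA, ht⟩ := Int.Matrix.exists_ne_zero_int_vec_norm_le A (by omega) hα
  refine ⟨t, ht0, htA, fun j => ?_⟩
  have hm : (0 : ℝ) < Fintype.card α := by exact_mod_cast hα
  have hmN : (59 : ℝ) * Fintype.card α ≤ 10 * Fintype.card β := by exact_mod_cast hcard
  have hNb : (Fintype.card β : ℝ) ≤ 2 ^ b := by exact_mod_cast hβ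
  generalize (Fintype.card α : ℝ) = m at *
  generalize (Fintype.card β : ℝ) = N at *
  have hexp : m / (N - m) ≤ 10 / 49 := by
    rw [div_le_div_iff₀ (by linarith) (by norm_num)]; linarith
  have hnA : max 1 ‖A‖ ≤ 2 ^ c := by
    refine max_le (one_le_pow₀ (by norm_num)) ?_
    rw [Matrix.norm_le_iff (by positivity)]
    intro i j
    rw [Int.norm_eq_abs]
    exact_mod_cast hA i j
  have hbase : N * max 1 ‖A‖ ≤ 2 ^ (b + c) := by
    rw [pow_add]; gcongr
  have h1 : ‖t‖ ≤ 2 ^ B := by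
    refine ht.trans ?_
    calc (N * max 1 ‖A‖) ^ (m / (N - m)) ≤ ((2 : ℝ) ^ (b + c)) ^ (m / (N - m)) := by
          refine Real.rpow_le_rpow (mul_nonneg (by linarith) (le_max_of_le_left zero_le_one)) hbase ?_
          exact div_nonneg hm.le (by linarith)
      _ ≤ ((2 : ℝ) ^ (b + c)) ^ (10 / 49 : ℝ) :=
          Real.rpow_le_rpow_of_exponent_le (one_le_pow₀ (by norm_num)) hexp
      _ = (2 : ℝ) ^ (((b + c : ℕ) : ℝ) * (10 / 49)) := by
          rw [Real.rpow_mul (by norm_num), Real.rpow_natCast]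
      _ ≤ (2 : ℝ) ^ (B : ℝ) := by
          refine Real.rpow_le_rpow_of_exponent_le (by norm_num) ?_
          have : (10 : ℝ) * (b + c : ℕ) ≤ 49 * B := by exact_mod_cast hB
          linarith
      _ = 2 ^ B := Real.rpow_natCast _ _
  have h2 := (norm_le_pi_norm t j).trans h1
  rw [Int.norm_eq_abs] at h2
  exact_mod_cast h2

/-- The triples `(q, r, s)` with `s ≤ r ≤ q < T`. -/
def tripleIdx (T : ℕ) : Finset (Σ _ : ℕ, Σ _ : ℕ, ℕ) :=
  (range T).sigma fun q => (range (q + 1)).sigma fun r => range (r + 1)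

theorem card_tripleIdx (T : ℕ) : 6 * (tripleIdx T).card = T * (T + 1) * (T + 2) := by
  have h2 : ∀ q, 2 * ∑ r ∈ range q, (r + 1) = q * (q + 1) := by
    intro q
    induction q with
    | zero => simp
    | succ q ih => rw [sum_range_succ, mul_add, ih]; ring
  simp only [tripleIdx, card_sigma, card_range]
  induction T with
  | zero => simp
  | succ T ih =>
    have := h2 (T + 1)
    rw [sum_range_succ, mul_add, ih, show 6 = 3 * 2 by norm_num, mul_assoc 3, this]; ring

theorem exp_weight_le {H q r : ℝ} {u : ℕ} (hH : H ≤ 192 * u) (hq : q ≤ 64 * u) (hr : r ≤ 64 * u) :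
    Real.exp (H * Real.log Real.goldenRatio + q * Real.log 2 + r * Real.log 3) ≤
      2 ^ (300 * u) := by
  have h1 := log_goldenRatio_pos
  have h2 := log_goldenRatio_le
  have h3 := log_three_le
  have h4 : 0 < Real.log 2 := by linarith
  have h5 : 0 < Real.log 3 := by linarith [two_mul_log_goldenRatio_le]
  rw [← Real.log_le_log_iff (Real.exp_pos _) (by positivity), Real.log_exp, Real.log_pow]
  calc _ ≤ 192 * u * Real.log Real.goldenRatio + 64 * u * Real.log 2 + 64 * u * Real.log 3 := by
        gcongr
    _ = u * (192 * Real.log Real.goldenRatio + 64 * Real.log 2 + 64 * Real.log 3) := by ring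
    _ ≤ u * (300 * Real.log 2) := by gcongr; linarith
    _ = _ := by push_cast; ring

/-- The coefficient of `log 2` in `n * logWeight v` modulo the linear form. -/
def gamma₂ (n x : ℕ) (v : ℕ × ℕ × ℕ) : ℤ := n * v.2.1 + x * expPhi v

/-- The coefficient of `log 3` in `n * logWeight v` modulo the linear form. -/
def gamma₃ (n y : ℕ) (v : ℕ × ℕ × ℕ) : ℤ := n * v.2.2 + y * expPhi v

theorem abs_gamma_le {L n x y k : ℕ} (hx : x ≤ n) (hy : y ≤ n) (hn : 4 * n * L ≤ 2 ^ (4 * k))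
    {v : ℕ × ℕ × ℕ} (hv : v ∈ boxIdx L) :
    |gamma₂ n x v| ≤ 2 ^ (4 * k) ∧ |gamma₃ n y v| ≤ 2 ^ (4 * k) := by
  have he := abs_expPhi_le hv
  obtain ⟨_, hb, hc⟩ := mem_boxIdx.1 hv
  have main : ∀ b w : ℕ, b < L → w ≤ n → |(n * b + w * expPhi v : ℤ)| ≤ 2 ^ (4 * k) := by
    intro b w hb hw
    calc |(n * b + w * expPhi v : ℤ)| ≤ |(n * b : ℤ)| + |w * expPhi v| := abs_add_le _ _
      _ = n * b + w * |expPhi v| := by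
        rw [abs_mul (w : ℤ), Nat.abs_cast, abs_of_nonneg (a := (n * b : ℤ)) (by positivity)]
      _ ≤ n * L + n * (3 * L) := by gcongr
      _ = ((4 * n * L : ℕ) : ℤ) := by push_cast; ring
      _ ≤ _ := by exact_mod_cast hn
  exact ⟨main _ _ hb hx, main _ _ hc hy⟩

/-- One summand of the auxiliary functions. -/
noncomputable def auxTerm (L n x y : ℕ) (P : ℕ × ℕ × ℕ → ℂ[X]) (j m₂ m₃ : ℕ) (z : ℂ)
    (v : ℕ × ℕ × ℕ) : ℂ :=
  (hasseDeriv j (P v)).eval z * ((gamma₂ n x v : ℂ) ^ m₂ * (gamma₃ n y v : ℂ) ^ m₃) *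
    Complex.exp ((logWeight v / L : ℝ) * z)

/-- Reduction of exponent vectors modulo `M`. -/
def resid (M : ℕ) (v : ℕ × ℕ × ℕ) : ℕ × ℕ × ℕ := (v.1 % M, v.2.1 % M, v.2.2 % M)

/-- The exponent vectors in the residue class of `ρ` modulo `M`. -/
def classIdx (L M : ℕ) (ρ : ℕ × ℕ × ℕ) : Finset (ℕ × ℕ × ℕ) :=
  (boxIdx L).filter fun v => resid M v = resid M ρ

/-- The vanishing condition of the extrapolation. -/
def Vanish (L U n x y : ℕ) (P : ℕ × ℕ × ℕ → ℂ[X]) (M g T : ℕ) : Prop :=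
  ∀ (ρ : ℕ × ℕ × ℕ) (m j m₂ m₃ : ℕ), Odd m → g * m < U → j + m₂ + m₃ < T →
    ∑ v ∈ classIdx L M ρ, auxTerm L n x y P j m₂ m₃ ((g * m : ℕ) : ℂ) v = 0

theorem Zphi.re_sum {ι : Type*} (s : Finset ι) (f : ι → Zphi) :
    (∑ i ∈ s, f i).re = ∑ i ∈ s, (f i).re := by
  classical
  induction s using Finset.induction_on with
  | empty => simp
  | insert a s ha ih => rw [sum_insert ha, sum_insert ha, QuadraticAlgebra.re_add, ih]

theorem Zphi.im_sum {ι : Type*} (s : Finset ι) (f : ι → Zphi) :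
    (∑ i ∈ s, f i).im = ∑ i ∈ s, (f i).im := by
  classical
  induction s using Finset.induction_on with
  | empty => simp
  | insert a s ha ih => rw [sum_insert ha, sum_insert ha, QuadraticAlgebra.im_add, ih]

/-- The coordinates of an element of `ℤ[φ]`. -/
def Zphi.coord (z : Zphi) (c : Fin 2) : ℤ := if c = 0 then z.re else z.im

/-- The polynomials with prescribed coordinates in the Feldman basis. -/
noncomputable def feldmanComb (k N : ℕ) (p : ℕ × ℕ × ℕ → ℕ → ℤ) (v : ℕ × ℕ × ℕ) : ℂ[X] :=
  ∑ i ∈ range N, C (p v i : ℂ) * feldman k i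

theorem eval_hasseDeriv_feldmanComb (k N : ℕ) (p : ℕ × ℕ × ℕ → ℕ → ℤ) (v : ℕ × ℕ × ℕ) (j : ℕ)
    (z : ℂ) : (hasseDeriv j (feldmanComb k N p v)).eval z =
      ∑ i ∈ range N, (p v i : ℂ) * (hasseDeriv j (feldman k i)).eval z := by
  rw [feldmanComb, map_sum, eval_finsetSum]
  refine sum_congr rfl fun i _ => ?_
  rw [← smul_eq_C_mul, map_smul, eval_smul, smul_eq_mul]

theorem abs_gamma_pow_le {L n x y k : ℕ} (hx : x ≤ n) (hy : y ≤ n) (hn : 4 * n * L ≤ 2 ^ (4 * k))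
    {v : ℕ × ℕ × ℕ} (hv : v ∈ boxIdx L) (m₂ m₃ : ℕ) :
    |(gamma₂ n x v : ℝ) ^ m₂ * (gamma₃ n y v : ℝ) ^ m₃| ≤ 2 ^ (4 * k * (m₂ + m₃)) := by
  obtain ⟨h2, h3⟩ := abs_gamma_le hx hy hn hv
  have h2' : |(gamma₂ n x v : ℝ)| ≤ 2 ^ (4 * k) := by exact_mod_cast h2
  have h3' : |(gamma₃ n y v : ℝ)| ≤ 2 ^ (4 * k) := by exact_mod_cast h3
  rw [abs_mul, abs_pow, abs_pow, pow_mul, pow_add]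
  gcongr

theorem norm_eval_hasseDeriv_feldman_le {k N u i : ℕ} (hk : 0 < k) (hu : u = 2 ^ 26 * k)
    (hN : N = 2 ^ 28 * k) (hi : i < N) (j : ℕ) {z : ℂ} (hz : ‖z‖ ≤ 65 * (64 * u)) :
    ‖(hasseDeriv j (feldman k i)).eval z‖ ≤ 2 ^ (160 * u) := by
  have h1 : (feldman k i).natDegree < i + 1 := by rw [natDegree_feldman]; omega
  refine (norm_eval_hasseDeriv_le h1 z j).trans ?_
  have h2 := wnorm_feldman_le (i + 1) (r := ‖z‖ + 1) (l := 2 ^ 28) (by positivity) hk ?_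
    (hN ▸ hi)
  · refine h2.trans_eq ?_
    rw [hu]; congr 1; ring
  · have : (1 : ℝ) ≤ k := by exact_mod_cast hk
    rw [hu] at hz
    push_cast at hz
    linarith

theorem abs_start_coeff_le {k n x y L N T U u D i j m m₂ m₃ : ℕ} (hk : 19 ≤ k)
    (hu : u = 2 ^ 26 * k) (hN : N = 2 ^ 28 * k) (hT : T = 2 ^ 32) (hU : U = 64 * u)
    (hx : x ≤ n) (hy : y ≤ n) (hn : 4 * n * L ≤ 2 ^ (4 * k)) (hD : D ≤ 2 ^ (4 * k))
    (hj : j + m₂ + m₃ < T) (hm : L * m ≤ U) (hi : i < N) {v : ℕ × ℕ × ℕ} (hv : v ∈ boxIdx L)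
    {z : ℤ} (hz : (D : ℂ) ^ j * (hasseDeriv j (feldman k i)).eval ((L * m : ℕ) : ℂ) = z)
    (c : Fin 2) :
    |z * (gamma₂ n x v ^ m₂ * gamma₃ n y v ^ m₃) *
      (Zphi.elt (expPhi v * m) (v.2.1 * m) (v.2.2 * m)).coord c| ≤ 2 ^ (717 * u) := by
  have hu1 : (1 : ℕ) ≤ u := by omega
  have hmU : (L : ℝ) * m ≤ 64 * u := by
    have : ((L * m : ℕ) : ℝ) ≤ U := by exact_mod_cast hm
    rw [hU] at this
    push_cast at this
    linarith
  have h1 : |(z : ℝ)| ≤ (2 ^ (4 * k)) ^ j * 2 ^ (160 * u) := by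
    have h := congrArg norm hz
    rw [norm_mul, norm_pow, Complex.norm_natCast, Complex.norm_intCast] at h
    rw [← h]
    have hD' : (D : ℝ) ≤ 2 ^ (4 * k) := by exact_mod_cast hD
    refine mul_le_mul (by gcongr) (norm_eval_hasseDeriv_feldman_le (by omega) hu hN hi j ?_)
      (norm_nonneg _) (by positivity)
    rw [Complex.norm_natCast]
    push_cast
    have : (0 : ℝ) ≤ u := by positivity
    linarith
  have h2 := abs_gamma_pow_le hx hy hn hv m₂ m₃
  have h3 : |((Zphi.elt (expPhi v * m) (v.2.1 * m) (v.2.2 * m)).coord c : ℝ)| ≤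
      2 * 2 ^ (300 * u) := by
    obtain ⟨hva, hvb, hvc⟩ := mem_boxIdx.1 hv
    have hE : |((expPhi v * m : ℤ) : ℝ)| ≤ 3 * (L * m) := by
      have := abs_expPhi_le hv
      have h' : |(expPhi v : ℝ)| ≤ 3 * L := by exact_mod_cast this
      push_cast
      rw [abs_mul, Nat.abs_cast, ← mul_assoc]
      gcongr
    obtain ⟨e1, e2⟩ := Zphi.abs_elt_le _ (v.2.1 * m) (v.2.2 * m) hE
    have hb : ((v.2.1 * m : ℕ) : ℝ) ≤ 64 * u := by
      refine le_trans ?_ hmU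
      push_cast; gcongr
    have hc : ((v.2.2 * m : ℕ) : ℝ) ≤ 64 * u := by
      refine le_trans ?_ hmU
      push_cast; gcongr
    have h4 := exp_weight_le (H := 3 * (L * m)) (u := u) (by linarith) hb hc
    obtain ⟨c1, c2⟩ := Zphi.abs_coord_le _ (e1.trans h4) (e2.trans h4)
    rw [Zphi.coord]
    split_ifs
    · exact c1
    · exact c2
  have h5 : |((z * (gamma₂ n x v ^ m₂ * gamma₃ n y v ^ m₃) *
      (Zphi.elt (expPhi v * m) (v.2.1 * m) (v.2.2 * m)).coord c : ℤ) : ℝ)| ≤ 2 ^ (717 * u) := by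
    push_cast
    rw [abs_mul, abs_mul]
    calc _ ≤ ((2 ^ (4 * k)) ^ j * 2 ^ (160 * u)) * 2 ^ (4 * k * (m₂ + m₃)) * (2 * 2 ^ (300 * u)) := by
          gcongr
      _ = (2 : ℝ) ^ (4 * k * (j + m₂ + m₃) + 160 * u + 300 * u + 1) := by ring
      _ ≤ 2 ^ (717 * u) := by
          refine pow_le_pow_right₀ (by norm_num) ?_
          have : 4 * k * (j + m₂ + m₃) ≤ 4 * k * T := by gcongr
          have h6 : 4 * k * T = 256 * u := by rw [hT, hu]; ring
          omega
  exact_mod_cast h5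

theorem exists_initial_vanish {k n x y L N T U u : ℕ} (hk : 19 ≤ k) (hL : L = 2 ^ 25)
    (hu : u = 2 ^ 26 * k) (hN : N = 2 ^ 28 * k) (hT : T = 2 ^ 32) (hU : U = 64 * u)
    (hx : x ≤ n) (hy : y ≤ n) (hn : 4 * n * L ≤ 2 ^ (4 * k)) :
    ∃ p : ℕ × ℕ × ℕ → ℕ → ℤ, (∃ v ∈ boxIdx L, ∃ i < N, p v i ≠ 0) ∧
      (∀ v i, |p v i| ≤ 2 ^ (147 * u)) ∧
      Vanish L U n x y (feldmanComb k N p) 1 L T := by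
  have hk0 : 0 < k := by omega
  set D := Nat.lcmUpto k with hDdef
  have hDle : D ≤ 2 ^ (4 * k) := lcmUpto_le_two_pow hk
  have hDpos : 0 < D := Nat.lcmUpto_pos k
  choose d hd using feldman_hasseDeriv_integral hk0 (D := D) (fun i h1 h2 => dvd_lcmUpto h1 h2)
  let S := 64 * k
  have hLpos : 0 < L := by rw [hL]; positivity
  have hTpos : 0 < T := by rw [hT]; positivity
  let elt : ℕ → ℕ × ℕ × ℕ → Zphi := fun m v => Zphi.elt (expPhi v * m) (v.2.1 * m) (v.2.2 * m)
  let A : Matrix (Fin S × ↥(tripleIdx T) × Fin 2) ↥(boxIdx L ×ˢ range N) ℤ := fun a b =>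
    d b.1.2 (a.2.1.1.1 - a.2.1.1.2.1) ((L * (2 * a.1.1 + 1) : ℕ) : ℤ) *
      (gamma₂ n x b.1.1 ^ (a.2.1.1.2.1 - a.2.1.1.2.2) * gamma₃ n y b.1.1 ^ a.2.1.1.2.2) *
      (elt (2 * a.1.1 + 1) b.1.1).coord a.2.2
  have hmem : ∀ q r s, (⟨q, r, s⟩ : Σ _ : ℕ, Σ _ : ℕ, ℕ) ∈ tripleIdx T ↔ q < T ∧ r ≤ q ∧ s ≤ r := by
    intro q r s; simp [tripleIdx]
  have hA : ∀ a b, |A a b| ≤ 2 ^ (717 * u) := by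
    rintro ⟨s, ⟨⟨q, r, w⟩, hqr⟩, c⟩ ⟨⟨v, i⟩, hb⟩
    obtain ⟨h1, h2, h3⟩ := (hmem _ _ _).1 hqr
    obtain ⟨hv, hi⟩ := mem_product.1 hb
    have hs : L * (2 * (s : ℕ) + 1) ≤ U := by
      have : 2 * (s : ℕ) + 1 ≤ 128 * k := by have := s.2; simp only [S] at this; omega
      calc _ ≤ L * (128 * k) := by gcongr
        _ = U := by rw [hL, hU, hu]; ring
    have h4 := hd i (q - r) ((L * (2 * (s : ℕ) + 1) : ℕ) : ℤ)
    rw [Int.cast_natCast] at h4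
    exact abs_start_coeff_le hk hu hN hT hU hx hy hn hDle (by simp only; omega) hs
      (mem_range.1 hi) hv h4 c
  have hne : Nonempty (Fin S × ↥(tripleIdx T) × Fin 2) :=
    ⟨⟨⟨0, by omega⟩, ⟨⟨0, 0, 0⟩, (hmem 0 0 0).2 ⟨hTpos, le_rfl, le_rfl⟩⟩, 0⟩⟩
  have hcα : Fintype.card (Fin S × ↥(tripleIdx T) × Fin 2) = S * ((tripleIdx T).card * 2) := by
    simp only [Fintype.card_prod, Fintype.card_fin, Fintype.card_coe]
  have hcβ : Fintype.card ↥(boxIdx L ×ˢ range N) = L * (L * L) * N := by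
    rw [Fintype.card_coe]; simp only [card_product, boxIdx, card_range]
  obtain ⟨t, ht0, htA, ht⟩ := exists_small_int_solution A (b := u) (c := 717 * u) (B := 147 * u)
    (by
      have h6 := card_tripleIdx T
      have hw : (tripleIdx T).card ≤ 13204693761600761637210423296 := by
        rw [hT] at h6 ⊢
        omega
      rw [hcα, hcβ, hL, hN]
      calc 59 * (S * ((tripleIdx T).card * 2)) ≤
            59 * (64 * k * (13204693761600761637210423296 * 2)) := by gcongr
        _ ≤ _ := by norm_num; omega)
    (by
      rw [hcβ, hL, hN]
      calc 2 ^ 25 * (2 ^ 25 * 2 ^ 25) * (2 ^ 28 * k) = 2 ^ 103 * k := by ring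
        _ ≤ 2 ^ 103 * 2 ^ k := by gcongr; exact Nat.lt_two_pow_self.le
        _ = 2 ^ (103 + k) := by rw [pow_add]
        _ ≤ 2 ^ u := Nat.pow_le_pow_right (by norm_num) (by omega))
    hA (by omega)
  classical
  let p : ℕ × ℕ × ℕ → ℕ → ℤ := fun v i =>
    if h : (v, i) ∈ boxIdx L ×ˢ range N then t ⟨(v, i), h⟩ else 0
  refine ⟨p, ?_, ?_, ?_⟩
  · obtain ⟨⟨⟨v, i⟩, h⟩, hb⟩ := Function.ne_iff.1 ht0
    refine ⟨v, (mem_product.1 h).1, i, mem_range.1 (mem_product.1 h).2, ?_⟩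
    intro h0
    refine hb (Eq.trans ?_ h0)
    simp only [p]
    rw [dif_pos h]
  · intro v i
    by_cases h : (v, i) ∈ boxIdx L ×ˢ range N
    · simpa only [p, h, dite_true] using ht _
    · simp only [p, h, dite_false, abs_zero]; positivity
  · intro ρ m j m₂ m₃ hm hmU hj
    obtain ⟨s, rfl⟩ := hm
    have hs : s < S := by
      by_contra! h
      have h1 : L * (128 * k) = U := by rw [hL, hU, hu]; ring
      have h2 : L * (128 * k) ≤ L * (2 * s + 1) := by
        gcongr; simp only [S] at h; omega
      omega
    have hcoord : ∀ c : Fin 2, ∑ v ∈ boxIdx L, ∑ i ∈ range N, p v i *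
        (d i j ((L * (2 * s + 1) : ℕ) : ℤ) * (gamma₂ n x v ^ m₂ * gamma₃ n y v ^ m₃) *
          (elt (2 * s + 1) v).coord c) = 0 := by
      intro c
      have h1 := congrFun htA ⟨⟨s, hs⟩, ⟨⟨j + m₂ + m₃, m₂ + m₃, m₃⟩,
        (hmem _ _ _).2 ⟨hj, by omega, by omega⟩⟩, c⟩
      rw [Matrix.mulVec, dotProduct, Pi.zero_apply] at h1
      rw [← h1, ← sum_product', ← sum_coe_sort]
      refine sum_congr rfl fun b _ => ?_
      have hb : (b.1.1, b.1.2) ∈ boxIdx L ×ˢ range N := b.2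
      simp only [A, p]
      rw [dif_pos hb, mul_comm]
      congr 3
      · congr 1; omega
      · congr 2; omega
    set W : Zphi := ∑ v ∈ boxIdx L, ∑ i ∈ range N, (p v i *
        (d i j ((L * (2 * s + 1) : ℕ) : ℤ) * (gamma₂ n x v ^ m₂ * gamma₃ n y v ^ m₃))) •
          elt (2 * s + 1) v with hW
    have hW0 : W = 0 := by
      ext
      · rw [hW, Zphi.re_sum, QuadraticAlgebra.re_zero, ← hcoord 0]
        refine sum_congr rfl fun v _ => ?_
        rw [Zphi.re_sum]
        refine sum_congr rfl fun i _ => ?_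
        rw [QuadraticAlgebra.re_smul, smul_eq_mul, Zphi.coord, if_pos rfl, mul_assoc]
      · rw [hW, Zphi.im_sum, QuadraticAlgebra.im_zero, ← hcoord 1]
        refine sum_congr rfl fun v _ => ?_
        rw [Zphi.im_sum]
        refine sum_congr rfl fun i _ => ?_
        rw [QuadraticAlgebra.im_smul, smul_eq_mul, Zphi.coord, if_neg (by decide), mul_assoc]
    have hval := congrArg (fun w => ((Zphi.val w : ℝ) : ℂ)) hW0
    simp only [hW, map_sum, map_zsmul, map_zero, Complex.ofReal_zero] at hval
    have hclass : classIdx L 1 ρ = boxIdx L := by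
      refine filter_true_of_mem fun v _ => ?_
      simp [resid, Nat.mod_one]
    rw [hclass]
    have hDj : (D : ℂ) ^ j ≠ 0 := pow_ne_zero _ (by exact_mod_cast hDpos.ne')
    refine (mul_eq_zero.1 ?_).resolve_left hDj
    rw [← hval, mul_sum, Complex.ofReal_sum]
    refine sum_congr rfl fun v _ => ?_
    rw [auxTerm, eval_hasseDeriv_feldmanComb]
    have hexp : Complex.exp ((logWeight v / L : ℝ) * ((L * (2 * s + 1) : ℕ) : ℂ)) =
        ((Zphi.val (elt (2 * s + 1) v) : ℝ) : ℂ) := by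
      have hL0 : (L : ℂ) ≠ 0 := by exact_mod_cast hLpos.ne'
      rw [Zphi.val_elt, Complex.ofReal_exp]
      congr 1
      rw [logWeight]
      push_cast
      field_simp
    rw [hexp, sum_mul, sum_mul, mul_sum, Complex.ofReal_sum]
    refine sum_congr rfl fun i _ => ?_
    have h1 := hd i j ((L * (2 * s + 1) : ℕ) : ℤ)
    rw [Int.cast_natCast] at h1
    rw [zsmul_eq_mul]
    push_cast
    push_cast at h1
    rw [← h1]
    ring

/-- The truncated exponential series `∑_{q < τ} (w X)^q / q!`. -/
noncomputable def expPoly (τ : ℕ) (w : ℂ) : ℂ[X] :=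
  ∑ q ∈ range τ, C (w ^ q / q.factorial) * X ^ q

theorem coeff_expPoly (τ : ℕ) (w : ℂ) (q : ℕ) :
    (expPoly τ w).coeff q = if q < τ then w ^ q / q.factorial else 0 := by
  rw [expPoly, finsetSum_coeff]
  simp [coeff_C_mul, coeff_X_pow]

theorem exists_exp_eq_expPoly_add (τ : ℕ) (w : ℂ) : ∃ F : ℂ → ℂ, AnalyticAt ℂ F 0 ∧
    ∀ s, Complex.exp (w * s) = (expPoly τ w).eval s + s ^ τ * F s := by
  have h : AnalyticAt ℂ (fun s => Complex.exp (w * s)) 0 := by fun_prop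
  obtain ⟨F, hF, hF'⟩ := h.exists_eq_sum_add_pow_mul τ
  refine ⟨F, hF, fun s => ?_⟩
  rw [hF' s, expPoly, eval_finsetSum, smul_eq_mul]
  congr 1
  refine sum_congr rfl fun q _ => ?_
  rw [iteratedDeriv_cexp_const_mul]
  simp
  ring

theorem le_analyticOrderAt_expTerm (τ : ℕ) (Q : ℂ[X]) (c w a : ℂ) :
    (τ : ℕ∞) ≤ analyticOrderAt (fun z => Q.eval z * c * Complex.exp (w * z) -
      (C (c * Complex.exp (w * a)) * taylor a Q * expPoly τ w).eval (z - a)) a := by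
  obtain ⟨F, hF, hF'⟩ := exists_exp_eq_expPoly_add τ w
  have hd : Differentiable ℂ (fun z => Q.eval z * c * Complex.exp (w * z) -
      (C (c * Complex.exp (w * a)) * taylor a Q * expPoly τ w).eval (z - a)) := by fun_prop
  rw [natCast_le_analyticOrderAt (hd.analyticAt a)]
  refine ⟨fun z => Q.eval z * c * Complex.exp (w * a) * F (z - a), ?_, ?_⟩
  · have h1 : AnalyticAt ℂ (fun z => Q.eval z * c * Complex.exp (w * a)) a := by
      have : Differentiable ℂ (fun z => Q.eval z * c * Complex.exp (w * a)) := by fun_prop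
      exact this.analyticAt a
    have h2 : AnalyticAt ℂ (fun z => F (z - a)) a := by
      have h3 : AnalyticAt ℂ F ((fun z : ℂ => z - a) a) := by simpa using hF
      exact h3.fun_comp (f := fun z : ℂ => z - a) (by fun_prop)
    exact h1.mul h2
  · refine Filter.Eventually.of_forall fun z => ?_
    have h1 : Complex.exp (w * z) = Complex.exp (w * a) * Complex.exp (w * (z - a)) := by
      rw [← Complex.exp_add]; ring_nf
    rw [h1, hF' (z - a), eval_mul, eval_mul, eval_C, taylor_eval, sub_add_cancel, smul_eq_mul]
    ring

/-- The numbers `w v` and `w₀ v` have the same truncated exponential expansions against the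
polynomials `Q v`, provided the coefficients for `w₀` cancel. -/
theorem le_analyticOrderAt_sum_expTerm {ι : Type*} (s : Finset ι) (τ : ℕ) (Q : ι → ℂ[X])
    (c w w₀ : ι → ℂ) (a : ℂ)
    (h : ∀ d q, d + q < τ → ∑ v ∈ s, (hasseDeriv d (Q v)).eval a * c v * w₀ v ^ q *
      Complex.exp (w v * a) = 0) :
    (τ : ℕ∞) ≤ analyticOrderAt (fun z => ∑ v ∈ s, (Q v).eval z * c v * Complex.exp (w v * z) -
      (∑ v ∈ s, C (c v * Complex.exp (w v * a)) * taylor a (Q v) *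
        (expPoly τ (w v) - expPoly τ (w₀ v))).eval (z - a)) a := by
  have h1 : (X : ℂ[X]) ^ τ ∣
      ∑ v ∈ s, C (c v * Complex.exp (w v * a)) * taylor a (Q v) * expPoly τ (w₀ v) := by
    rw [X_pow_dvd_iff]
    intro e he
    rw [finsetSum_coeff]
    calc _ = ∑ v ∈ s, ∑ x ∈ antidiagonal e, (1 / (x.2.factorial : ℂ)) *
          ((hasseDeriv x.1 (Q v)).eval a * c v * w₀ v ^ x.2 * Complex.exp (w v * a)) := by
          refine sum_congr rfl fun v _ => ?_
          rw [mul_assoc, coeff_C_mul, coeff_mul, mul_sum]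
          refine sum_congr rfl fun x hx => ?_
          have hx' := HasAntidiagonal.mem_antidiagonal.1 hx
          rw [coeff_expPoly, if_pos (by omega), taylor_coeff]
          ring
      _ = 0 := by
          rw [sum_comm]
          refine sum_eq_zero fun x hx => ?_
          have hx' := HasAntidiagonal.mem_antidiagonal.1 hx
          rw [← mul_sum, h _ _ (by omega), mul_zero]
  have h2 := le_analyticOrderAt_sum (τ := τ) (a := a) s (fun v z => (Q v).eval z * c v *
    Complex.exp (w v * z) - (C (c v * Complex.exp (w v * a)) * taylor a (Q v) *
      expPoly τ (w v)).eval (z - a)) fun v _ => le_analyticOrderAt_expTerm τ _ _ _ _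
  refine (le_min h2 (le_analyticOrderAt_of_X_pow_dvd h1 a)).trans
    (le_analyticOrderAt_add.trans_eq ?_)
  congr 1
  funext z
  simp only [Pi.add_apply, mul_sub, sum_sub_distrib, eval_sub, eval_finsetSum]
  ring

theorem wnorm_expPoly_sub_le (τ : ℕ) {r W : ℝ} (hr : 0 ≤ r) {w w₀ : ℂ} (hw : ‖w‖ ≤ W)
    (hw₀ : ‖w₀‖ ≤ W) :
    wnorm τ r (expPoly τ w - expPoly τ w₀) ≤ ‖w - w₀‖ * r * Real.exp (W * r) := by
  have hW : 0 ≤ W := (norm_nonneg _).trans hw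
  have hpow : ∀ q : ℕ, ‖w ^ (q + 1) - w₀ ^ (q + 1)‖ ≤ (q + 1) * ‖w - w₀‖ * W ^ q := by
    intro q
    induction q with
    | zero => simp
    | succ q ih =>
      have h1 : w ^ (q + 1 + 1) - w₀ ^ (q + 1 + 1) =
          w * (w ^ (q + 1) - w₀ ^ (q + 1)) + (w - w₀) * w₀ ^ (q + 1) := by ring
      rw [h1]
      calc _ ≤ ‖w‖ * ‖w ^ (q + 1) - w₀ ^ (q + 1)‖ + ‖w - w₀‖ * ‖w₀‖ ^ (q + 1) := by
            refine (norm_add_le _ _).trans_eq ?_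
            rw [norm_mul, norm_mul, norm_pow]
        _ ≤ W * ((q + 1) * ‖w - w₀‖ * W ^ q) + ‖w - w₀‖ * W ^ (q + 1) := by gcongr
        _ = _ := by push_cast; ring
  have h2 : ∀ q : ℕ, ‖(expPoly τ w - expPoly τ w₀).coeff (q + 1)‖ * r ^ (q + 1) ≤
      ‖w - w₀‖ * r * ((W * r) ^ q / q.factorial) := by
    intro q
    rw [coeff_sub, coeff_expPoly, coeff_expPoly]
    split_ifs
    · rw [← sub_div, norm_div, Complex.norm_natCast, Nat.factorial_succ]
      have := hpow q
      have hf : (0 : ℝ) < q.factorial := by exact_mod_cast q.factorial_pos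
      calc _ ≤ ((q + 1) * ‖w - w₀‖ * W ^ q) / ((q + 1 : ℕ) * q.factorial : ℕ) * r ^ (q + 1) := by
            gcongr
        _ = _ := by push_cast; field_simp; ring
    · simp; positivity
  unfold wnorm
  rcases τ with _ | τ
  · simp; positivity
  rw [sum_range_succ']
  have h3 : (expPoly (τ + 1) w - expPoly (τ + 1) w₀).coeff 0 = 0 := by
    rw [coeff_sub, coeff_expPoly, coeff_expPoly]; simp
  rw [h3, norm_zero, zero_mul, add_zero]
  calc _ ≤ ∑ q ∈ range τ, ‖w - w₀‖ * r * ((W * r) ^ q / q.factorial) :=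
        sum_le_sum fun q _ => h2 q
    _ = ‖w - w₀‖ * r * ∑ q ∈ range τ, (W * r) ^ q / q.factorial := by rw [mul_sum]
    _ ≤ _ := by gcongr; exact Real.sum_le_exp_of_nonneg (by positivity) τ

/-- The standing numerical conventions of the transcendence argument. -/
structure Setup (k n x y L N T U u : ℕ) : Prop where
  hk : 19 ≤ k
  hL : L = 2 ^ 25
  hu : u = 2 ^ 26 * k
  hN : N = 2 ^ 28 * k
  hT : T = 2 ^ 32
  hU : U = 64 * u
  hn0 : 0 < n
  hx : x ≤ n
  hy : y ≤ n
  hn : 4 * n * L ≤ 2 ^ (4 * k)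

section
variable {k n x y L N T U u : ℕ}

theorem natDegree_feldmanComb_lt (h : Setup k n x y L N T U u) (p : ℕ × ℕ × ℕ → ℕ → ℤ)
    (v : ℕ × ℕ × ℕ) : (feldmanComb k N p v).natDegree < N := by
  have hN0 : 0 < N := by have := h.hN; have := h.hk; omega
  rw [Nat.lt_iff_le_pred hN0]
  refine natDegree_sum_le_of_forall_le _ _ fun i hi => ?_
  refine (natDegree_C_mul_le _ _).trans ?_
  rw [natDegree_feldman]
  have := mem_range.1 hi
  exact Nat.le_pred_of_lt this

theorem wnorm_feldmanComb_le (h : Setup k n x y L N T U u) {p : ℕ × ℕ × ℕ → ℕ → ℤ}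
    (hp : ∀ v i, |p v i| ≤ 2 ^ (147 * u)) (τ : ℕ) {R : ℝ} (hR : 0 ≤ R) (hRU : R ≤ 66 * U)
    (v : ℕ × ℕ × ℕ) : wnorm τ R (feldmanComb k N p v) ≤ 2 ^ (308 * u) := by
  have hk := h.hk
  have hk0 : (1 : ℝ) ≤ k := by exact_mod_cast (by omega : 1 ≤ k)
  have hNu : (N : ℝ) ≤ 2 ^ u := by
    have h1 : N ≤ 2 ^ u := by
      rw [h.hN, h.hu]
      calc 2 ^ 28 * k ≤ 2 ^ 28 * 2 ^ k := by gcongr; exact Nat.lt_two_pow_self.le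
        _ = 2 ^ (28 + k) := by rw [pow_add]
        _ ≤ 2 ^ (2 ^ 26 * k) := Nat.pow_le_pow_right (by norm_num) (by omega)
    exact_mod_cast h1
  have h1 : ∀ i ∈ range N, wnorm τ R (C (p v i : ℂ) * feldman k i) ≤
      2 ^ (147 * u) * 2 ^ (160 * u) := by
    intro i hi
    rw [wnorm_C_mul, Complex.norm_intCast]
    have h2 : |(p v i : ℝ)| ≤ 2 ^ (147 * u) := by exact_mod_cast hp v i
    have h3 := wnorm_feldman_le τ hR (k := k) (l := 2 ^ 28) (i := i) (by omega) (by
      have h4 := hRU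
      rw [h.hU, h.hu] at h4
      push_cast at h4
      linarith) (by have := h.hN; have := mem_range.1 hi; omega)
    have h4 : 40 * k * 2 ^ 28 = 160 * u := by rw [h.hu]; ring
    rw [h4] at h3
    exact mul_le_mul h2 h3 (wnorm_nonneg hR _) (by positivity)
  calc _ ≤ _ := wnorm_sum_le hR _ _
    _ ≤ ∑ i ∈ range N, (2 : ℝ) ^ (147 * u) * 2 ^ (160 * u) := sum_le_sum h1
    _ = N * (2 ^ (147 * u) * 2 ^ (160 * u)) := by rw [sum_const, card_range, nsmul_eq_mul]
    _ ≤ 2 ^ u * (2 ^ (147 * u) * 2 ^ (160 * u)) := by gcongr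
    _ = _ := by ring

theorem card_classIdx_le (h : Setup k n x y L N T U u) (M : ℕ) (ρ : ℕ × ℕ × ℕ) :
    ((classIdx L M ρ).card : ℝ) ≤ 2 ^ u := by
  have h1 : (classIdx L M ρ).card ≤ 2 ^ u := by
    calc _ ≤ (boxIdx L).card := card_filter_le _ _
      _ = 2 ^ 75 := by
        have := h.hL
        subst this
        simp only [boxIdx, card_product, card_range]; norm_num
      _ ≤ 2 ^ u := Nat.pow_le_pow_right (by norm_num) (by have := h.hk; have := h.hu; omega)
  exact_mod_cast h1

theorem norm_gamma_pow_le (h : Setup k n x y L N T U u) {v : ℕ × ℕ × ℕ} (hv : v ∈ boxIdx L)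
    {m₂ m₃ : ℕ} (hm : m₂ + m₃ ≤ 2 ^ 31) :
    ‖(gamma₂ n x v : ℂ) ^ m₂ * (gamma₃ n y v : ℂ) ^ m₃‖ ≤ 2 ^ (128 * u) := by
  rw [norm_mul, norm_pow, norm_pow, Complex.norm_intCast, Complex.norm_intCast, ← abs_pow,
    ← abs_pow, ← abs_mul]
  refine (abs_gamma_pow_le h.hx h.hy h.hn hv m₂ m₃).trans
    (pow_le_pow_right₀ (by norm_num) ?_)
  calc 4 * k * (m₂ + m₃) ≤ 4 * k * 2 ^ 31 := by gcongr
    _ = 128 * u := by rw [h.hu]; ring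

theorem logWeight_div_mem (h : Setup k n x y L N T U u) {v : ℕ × ℕ × ℕ} (hv : v ∈ boxIdx L) :
    0 ≤ logWeight v / L ∧ logWeight v / L ≤ 1.2 * Real.log 2 := by
  have hL : (0 : ℝ) < L := by
    have := h.hL
    have : 0 < L := by omega
    exact_mod_cast this
  exact ⟨div_nonneg (logWeight_nonneg v) hL.le, (div_le_iff₀ hL).2 (logWeight_le hv)⟩

theorem norm_auxTerm_le (h : Setup k n x y L N T U u) {p : ℕ × ℕ × ℕ → ℕ → ℤ}
    (hp : ∀ v i, |p v i| ≤ 2 ^ (147 * u)) {v : ℕ × ℕ × ℕ} (hv : v ∈ boxIdx L)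
    {j m₂ m₃ : ℕ} (hm : m₂ + m₃ ≤ 2 ^ 31) {z : ℂ} (hz : ‖z‖ ≤ 65 * U) :
    ‖auxTerm L n x y (feldmanComb k N p) j m₂ m₃ z v‖ ≤
      2 ^ (2932 * u) * Real.exp (0.6 * Real.log 2 * z.re) := by
  have hl : 0 < Real.log 2 := Real.log_pos (by norm_num)
  have hU1 : (1 : ℝ) ≤ U := by
    have := h.hk; have := h.hu; have := h.hU
    exact_mod_cast (by omega : 1 ≤ U)
  obtain ⟨hw0, hw1⟩ := logWeight_div_mem h hv
  set w := logWeight v / L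
  have h1 : ‖(hasseDeriv j (feldmanComb k N p v)).eval z‖ ≤ 2 ^ (308 * u) :=
    (norm_eval_hasseDeriv_le (natDegree_feldmanComb_lt h p v) z j).trans
      (wnorm_feldmanComb_le h hp N (by positivity) (by linarith) v)
  have h2 : ‖Complex.exp ((w : ℝ) * z)‖ ≤
      2 ^ (2496 * u) * Real.exp (0.6 * Real.log 2 * z.re) := by
    rw [Complex.norm_exp, Complex.re_ofReal_mul]
    have h3 : (2 : ℝ) ^ (2496 * u) = Real.exp (0.6 * Real.log 2 * (65 * U)) := by
      rw [← Real.exp_log (by norm_num : (0 : ℝ) < 2), ← Real.exp_nat_mul, Real.log_exp, h.hU]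
      congr 1; push_cast; ring
    rw [h3, ← Real.exp_add, Real.exp_le_exp]
    have h4 : |z.re| ≤ 65 * U := (Complex.abs_re_le_norm z).trans hz
    have h5 : (w - 0.6 * Real.log 2) * z.re ≤ (0.6 * Real.log 2) * (65 * U) := by
      refine (le_abs_self _).trans ?_
      rw [abs_mul]
      have : |w - 0.6 * Real.log 2| ≤ 0.6 * Real.log 2 := abs_le.2 ⟨by linarith, by linarith⟩
      gcongr
    linarith
  rw [auxTerm, norm_mul, norm_mul]
  calc _ ≤ 2 ^ (308 * u) * 2 ^ (128 * u) *
        (2 ^ (2496 * u) * Real.exp (0.6 * Real.log 2 * z.re)) := by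
        gcongr
        exact norm_gamma_pow_le h hv hm
    _ = _ := by ring

/-- The main part of `logWeight v / L` modulo the linear form. -/
noncomputable def weight₀ (L n x y : ℕ) (v : ℕ × ℕ × ℕ) : ℝ :=
  (gamma₂ n x v * Real.log 2 + gamma₃ n y v * Real.log 3) / (n * L)

theorem abs_logWeight_div_sub_weight₀_le (h : Setup k n x y L N T U u) {v : ℕ × ℕ × ℕ}
    (hv : v ∈ boxIdx L) : |logWeight v / L - weight₀ L n x y v| ≤
      3 * |n * Real.log Real.goldenRatio - x * Real.log 2 - y * Real.log 3| := by
  have hL : (0 : ℝ) < L := by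
    have := h.hL
    have : 0 < L := by omega
    exact_mod_cast this
  have hn : (1 : ℝ) ≤ n := by exact_mod_cast h.hn0
  have he : |(expPhi v : ℝ)| ≤ 3 * L := by exact_mod_cast abs_expPhi_le hv
  have h1 : logWeight v / L - weight₀ L n x y v = expPhi v *
      (n * Real.log Real.goldenRatio - x * Real.log 2 - y * Real.log 3) / (n * L) := by
    rw [weight₀, logWeight, gamma₂, gamma₃]
    push_cast
    field_simp
    ring
  rw [h1, abs_div, abs_mul, abs_of_pos (a := (n * L : ℝ)) (by positivity), div_le_iff₀ (by positivity)]
  set Λ := |n * Real.log Real.goldenRatio - x * Real.log 2 - y * Real.log 3|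
  calc _ ≤ 3 * L * Λ := by gcongr
    _ ≤ 3 * L * Λ * n := le_mul_of_one_le_right (by positivity) hn
    _ = _ := by ring

theorem sum_auxTerm_weight₀_eq_zero {P : ℕ × ℕ × ℕ → ℂ[X]} {M g T₀ : ℕ}
    (hV : Vanish L U n x y P M g T₀) (ρ : ℕ × ℕ × ℕ) {m j m₂ m₃ d q : ℕ} (hm : Odd m)
    (hgm : g * m < U) (hT : (d + j) + (m₂ + m₃ + q) < T₀) :
    ∑ v ∈ classIdx L M ρ, (hasseDeriv d (hasseDeriv j (P v))).eval ((g * m : ℕ) : ℂ) *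
      ((gamma₂ n x v : ℂ) ^ m₂ * (gamma₃ n y v : ℂ) ^ m₃) * ((weight₀ L n x y v : ℝ) : ℂ) ^ q *
      Complex.exp ((logWeight v / L : ℝ) * ((g * m : ℕ) : ℂ)) = 0 := by
  have h1 : ∀ v, (hasseDeriv d (hasseDeriv j (P v))).eval ((g * m : ℕ) : ℂ) *
      ((gamma₂ n x v : ℂ) ^ m₂ * (gamma₃ n y v : ℂ) ^ m₃) * ((weight₀ L n x y v : ℝ) : ℂ) ^ q *
      Complex.exp ((logWeight v / L : ℝ) * ((g * m : ℕ) : ℂ)) =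
      ∑ s ∈ range (q + 1), (((d + j).choose d : ℂ) * (Real.log 2 : ℂ) ^ s *
        (Real.log 3 : ℂ) ^ (q - s) * (q.choose s : ℂ) / (n * L) ^ q) *
        auxTerm L n x y P (d + j) (m₂ + s) (m₃ + (q - s)) ((g * m : ℕ) : ℂ) v := by
    intro v
    have h2 := congrArg (fun F => F (P v)) (hasseDeriv_comp (R := ℂ) d j)
    simp only [LinearMap.comp_apply, LinearMap.smul_apply] at h2
    rw [h2, weight₀]
    push_cast
    rw [div_pow, add_pow, sum_div, mul_sum, sum_mul]
    refine sum_congr rfl fun s _ => ?_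
    rw [auxTerm, nsmul_eq_mul, eval_mul, eval_natCast]
    push_cast
    ring
  rw [sum_congr rfl fun v _ => h1 v, sum_comm]
  refine sum_eq_zero fun s hs => ?_
  have := mem_range.1 hs
  rw [← mul_sum, hV ρ m _ _ _ hm hgm (by omega), mul_zero]

end

section
variable {k n x y L N T U u : ℕ}

theorem wnorm_nodePoly_le (h : Setup k n x y L N T U u) {p : ℕ × ℕ × ℕ → ℕ → ℤ}
    (hp : ∀ v i, |p v i| ≤ 2 ^ (147 * u))
    (hΛ : |n * Real.log Real.goldenRatio - x * Real.log 2 - y * Real.log 3| ≤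
      (2 ^ (44800 * u))⁻¹)
    (M τ : ℕ) (ρ : ℕ × ℕ × ℕ) {j m₂ m₃ : ℕ} (hm : m₂ + m₃ ≤ 2 ^ 31) {G : ℝ} (hG0 : 0 ≤ G)
    (hG : G ≤ u) {a : ℂ} (ha : ‖a‖ ≤ U) :
    wnorm τ G (∑ v ∈ classIdx L M ρ, C ((gamma₂ n x v : ℂ) ^ m₂ * (gamma₃ n y v : ℂ) ^ m₃ *
      Complex.exp ((logWeight v / L : ℝ) * a)) *
      taylor a (hasseDeriv j (feldmanComb k N p v)) *
      (expPoly τ ((logWeight v / L : ℝ) : ℂ) - expPoly τ ((weight₀ L n x y v : ℝ) : ℂ))) ≤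
      (2 ^ (44280 * u))⁻¹ := by
  have hl : 0 < Real.log 2 := Real.log_pos (by norm_num)
  have hl2 : Real.log 2 < 0.7 := Real.log_two_lt_d9.trans (by norm_num)
  have hu1 : (1 : ℝ) ≤ u := by
    have := h.hk; have := h.hu
    exact_mod_cast (by omega : 1 ≤ u)
  have hUu : (U : ℝ) = 64 * u := by rw [h.hU]; push_cast; ring
  set ε : ℝ := (2 ^ (44800 * u))⁻¹ with hεdef
  have hε0 : 0 < ε := by positivity
  have hε1 : ε ≤ 0.1 := by
    rw [hεdef]
    have : (16 : ℝ) ≤ 2 ^ (44800 * u) := by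
      calc (16 : ℝ) = 2 ^ 4 := by norm_num
        _ ≤ _ := pow_le_pow_right₀ (by norm_num) (by have := h.hk; have := h.hu; omega)
    calc _ ≤ (16 : ℝ)⁻¹ := by gcongr
      _ ≤ _ := by norm_num
  have hterm : ∀ v ∈ classIdx L M ρ, wnorm τ G (C ((gamma₂ n x v : ℂ) ^ m₂ *
      (gamma₃ n y v : ℂ) ^ m₃ * Complex.exp ((logWeight v / L : ℝ) * a)) *
      taylor a (hasseDeriv j (feldmanComb k N p v)) *
      (expPoly τ ((logWeight v / L : ℝ) : ℂ) - expPoly τ ((weight₀ L n x y v : ℝ) : ℂ))) ≤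
      2 ^ (519 * u) * ε := by
    intro v hv
    have hv' : v ∈ boxIdx L := (mem_filter.1 hv).1
    obtain ⟨hw0, hw1⟩ := logWeight_div_mem h hv'
    have hd := (abs_logWeight_div_sub_weight₀_le h hv').trans
      (mul_le_mul_of_nonneg_left hΛ (by norm_num : (0 : ℝ) ≤ 3))
    have h1 := norm_gamma_pow_le h hv' hm
    have h2 : ‖Complex.exp ((logWeight v / L : ℝ) * a)‖ ≤ 2 ^ (77 * u) := by
      have h77 : (2 : ℝ) ^ (77 * u) = Real.exp ((77 * u : ℕ) * Real.log 2) := by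
        rw [Real.exp_nat_mul, Real.exp_log (by norm_num)]
      rw [Complex.norm_exp, Complex.re_ofReal_mul, h77, Real.exp_le_exp]
      calc _ ≤ logWeight v / L * U := by
            gcongr
            exact (le_abs_self _).trans ((Complex.abs_re_le_norm a).trans ha)
        _ ≤ 1.2 * Real.log 2 * U := by gcongr
        _ ≤ _ := by rw [hUu]; push_cast; nlinarith
    have h3 : wnorm τ G (taylor a (hasseDeriv j (feldmanComb k N p v))) ≤ 2 ^ (308 * u) :=
      (wnorm_taylor_hasseDeriv_le (natDegree_feldmanComb_lt h p v) hG0 a j).trans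
        (wnorm_feldmanComb_le h hp N (by positivity) (by linarith) v)
    have h4 : wnorm τ G (expPoly τ ((logWeight v / L : ℝ) : ℂ) -
        expPoly τ ((weight₀ L n x y v : ℝ) : ℂ)) ≤ 3 * ε * u * 2 ^ (3 * u) := by
      have hw2 : |logWeight v / L| ≤ 2 := abs_le.2 ⟨by linarith, by linarith⟩
      have hw3 : |weight₀ L n x y v| ≤ 2 := by
        have := abs_le.1 hd
        exact abs_le.2 ⟨by linarith, by linarith⟩
      refine (wnorm_expPoly_sub_le τ hG0 (W := 2) ?_ ?_).trans ?_
      · rwa [Complex.norm_real]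
      · rwa [Complex.norm_real]
      · rw [← Complex.ofReal_sub, Complex.norm_real]
        have h5 : Real.exp (2 * G) ≤ 2 ^ (3 * u) := by
          rw [← Real.exp_log (by norm_num : (0 : ℝ) < 2), ← Real.exp_nat_mul, Real.exp_le_exp,
            Real.exp_log (by norm_num : (0 : ℝ) < 2)]
          have := Real.log_two_gt_d9
          push_cast
          nlinarith
        gcongr
        exact hd
    refine (wnorm_mul_le hG0 _ _).trans ?_
    rw [wnorm_C_mul, norm_mul]
    have h6 : (3 : ℝ) * u ≤ 2 ^ (3 * u) := by
      exact_mod_cast (Nat.lt_two_pow_self (n := 3 * u)).le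
    calc _ ≤ 2 ^ (128 * u) * 2 ^ (77 * u) * 2 ^ (308 * u) * (3 * ε * u * 2 ^ (3 * u)) := by
          gcongr
          · exact wnorm_nonneg hG0 _
          · exact wnorm_nonneg hG0 _
      _ = (2 ^ (128 * u) * 2 ^ (77 * u) * 2 ^ (308 * u)) * (3 * u) * 2 ^ (3 * u) * ε := by ring
      _ ≤ (2 ^ (128 * u) * 2 ^ (77 * u) * 2 ^ (308 * u)) * 2 ^ (3 * u) * 2 ^ (3 * u) * ε := by
          gcongr
      _ = _ := by ring
  calc _ ≤ _ := wnorm_sum_le hG0 _ _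
    _ ≤ ∑ v ∈ classIdx L M ρ, 2 ^ (519 * u) * ε := sum_le_sum hterm
    _ = (classIdx L M ρ).card * (2 ^ (519 * u) * ε) := by rw [sum_const, nsmul_eq_mul]
    _ ≤ 2 ^ u * (2 ^ (519 * u) * ε) := by gcongr; exact card_classIdx_le h M ρ
    _ = _ := by
      rw [hεdef, show 44800 * u = 44280 * u + 520 * u by ring, pow_add]
      field_simp
      ring

theorem norm_sum_auxTerm_le (h : Setup k n x y L N T U u) {p : ℕ × ℕ × ℕ → ℕ → ℤ}
    (hp : ∀ v i, |p v i| ≤ 2 ^ (147 * u))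
    (hΛ : |n * Real.log Real.goldenRatio - x * Real.log 2 - y * Real.log 3| ≤
      (2 ^ (44800 * u))⁻¹)
    {M g T' : ℕ} (hMg : M * (2 * g) = L) (hT' : T' = 128 * g)
    (hV : Vanish L U n x y (feldmanComb k N p) M (2 * g) (2 * T')) (ρ : ℕ × ℕ × ℕ)
    {j m₂ m₃ : ℕ} (hj : j + m₂ + m₃ < T') {t : ℝ} (ht0 : 0 ≤ t) (htU : t ≤ U) :
    ‖∑ v ∈ classIdx L M ρ, auxTerm L n x y (feldmanComb k N p) j m₂ m₃ (t : ℂ) v‖ ≤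
      (2 ^ (11362 * u))⁻¹ := by
  have hl : 0 < Real.log 2 := Real.log_pos (by norm_num)
  have hk := h.hk
  have hu := h.hu
  have hL := h.hL
  have hMpos : 0 < M := Nat.pos_of_ne_zero (by rintro rfl; omega)
  have hg0 : 0 < g := Nat.pos_of_ne_zero (by rintro rfl; omega)
  have hgL : 2 * g ≤ L := by rw [← hMg]; exact Nat.le_mul_of_pos_left _ hMpos
  have hT31 : T' ≤ 2 ^ 31 := by omega
  set ν := 64 * k * M with hν
  have hν0 : 0 < ν := by positivity
  have hGν : 2 * g * ν = 32 * u := by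
    calc 2 * g * ν = 64 * k * (M * (2 * g)) := by rw [hν]; ring
      _ = _ := by rw [hMg, hL, hu]; ring
  have hτν : T' * ν = 2048 * u := by
    have : T' * ν = 64 * (2 * g * ν) := by rw [hT']; ring
    rw [this, hGν]; ring
  have hGν' : ((2 * g : ℕ) : ℝ) * ν = 32 * u := by exact_mod_cast hGν
  have hUu : (U : ℝ) = 64 * u := by rw [h.hU]; push_cast; ring
  have hm : m₂ + m₃ ≤ 2 ^ 31 := by omega
  have hνu : (ν : ℝ) ≤ 2 ^ (32 * u) := by
    have h1 : ν ≤ 32 * u := by rw [← hGν]; exact Nat.le_mul_of_pos_left _ (by omega)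
    exact_mod_cast h1.trans (Nat.lt_two_pow_self).le
  set f : ℂ → ℂ := fun z =>
    ∑ v ∈ classIdx L M ρ, auxTerm L n x y (feldmanComb k N p) j m₂ m₃ z v with hf
  let node : ℕ → ℂ := fun i => ((2 * g * (2 * i + 1) : ℕ) : ℂ)
  let q : ℕ → ℂ[X] := fun i => ∑ v ∈ classIdx L M ρ,
      C ((gamma₂ n x v : ℂ) ^ m₂ * (gamma₃ n y v : ℂ) ^ m₃ *
      Complex.exp ((logWeight v / L : ℝ) * node i)) *
      taylor (node i) (hasseDeriv j (feldmanComb k N p v)) *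
      (expPoly T' ((logWeight v / L : ℝ) : ℂ) - expPoly T' ((weight₀ L n x y v : ℝ) : ℂ))
  have hnode : ∀ i : ℕ, ((((2 * g : ℕ) : ℝ) * (2 * i + 1) : ℝ) : ℂ) = node i := by
    intro i; simp only [node]; push_cast; ring
  have hnodeU : ∀ i < ν, 2 * g * (2 * i + 1) < U := by
    intro i hi
    calc 2 * g * (2 * i + 1) < 2 * g * (2 * ν) := by
          apply Nat.mul_lt_mul_of_pos_left <;> omega
      _ = U := by rw [h.hU]; linarith
  have hfd : Differentiable ℂ f := by
    rw [hf]; unfold auxTerm; fun_prop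
  have horder : ∀ i < ν, (T' : ℕ∞) ≤ analyticOrderAt
      (fun z => f z - (q i).eval (z - (((2 * g : ℕ) : ℝ) * (2 * i + 1) : ℝ)))
      (((2 * g : ℕ) : ℝ) * (2 * i + 1) : ℝ) := by
    intro i hi
    rw [hnode]
    refine le_analyticOrderAt_sum_expTerm _ T' _ _ _ _ (node i) fun d e hde => ?_
    exact sum_auxTerm_weight₀_eq_zero hV ρ (odd_two_mul_add_one i) (hnodeU i hi) (by omega)
  have hεq : ∀ i < ν, wnorm T' ((2 * g : ℕ) : ℝ) (q i) ≤ (2 ^ (44280 * u))⁻¹ := by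
    intro i hi
    refine wnorm_nodePoly_le h hp hΛ M T' ρ hm (by positivity) ?_ ?_
    · exact_mod_cast (by omega : 2 * g ≤ u)
    · simp only [node]
      rw [Complex.norm_natCast]
      exact_mod_cast (hnodeU i hi).le
  have hcirc : ∀ z : ℂ, ‖z - (((2 * g : ℕ) : ℝ) * ν : ℝ)‖ = 129 * (((2 * g : ℕ) : ℝ) * ν) →
      ‖f z‖ ≤ 2 ^ (2933 * u) * Real.exp (0.6 * Real.log 2 * z.re) := by
    intro z hz
    rw [hGν'] at hz
    have hz' : ‖z‖ ≤ 65 * U := by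
      have h1 := norm_le_norm_sub_add z ((32 * u : ℝ) : ℂ)
      rw [hz, Complex.norm_real, Real.norm_of_nonneg (by positivity)] at h1
      rw [hUu]; linarith
    calc _ ≤ ∑ v ∈ classIdx L M ρ, _ := norm_sum_le _ _
      _ ≤ ∑ v ∈ classIdx L M ρ, 2 ^ (2932 * u) * Real.exp (0.6 * Real.log 2 * z.re) :=
        sum_le_sum fun v hv => norm_auxTerm_le h hp (mem_filter.1 hv).1 hm hz'
      _ = (classIdx L M ρ).card * (2 ^ (2932 * u) * Real.exp (0.6 * Real.log 2 * z.re)) := by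
        rw [sum_const, nsmul_eq_mul]
      _ ≤ 2 ^ u * (2 ^ (2932 * u) * Real.exp (0.6 * Real.log 2 * z.re)) := by
        gcongr; exact card_classIdx_le h M ρ
      _ = _ := by ring
  have hmain := norm_le_of_almost_vanishing hν0 (g := ((2 * g : ℕ) : ℝ)) (by positivity) hfd q
    horder hεq (by norm_num : (2 : ℝ) ≤ 129) (by positivity) hcirc ht0 (by
      rw [hGν']; linarith)
  refine hmain.trans ?_
  rw [hτν, hGν']
  have e1 : Real.exp (0.6 * Real.log 2 * t) ≤ 2 ^ (39 * u) := by
    rw [← Real.exp_log (by norm_num : (0 : ℝ) < 2), ← Real.exp_nat_mul,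
      Real.exp_log (by norm_num : (0 : ℝ) < 2), Real.exp_le_exp]
    calc _ ≤ 0.6 * Real.log 2 * U := by gcongr
      _ ≤ _ := by
        rw [hUu]; push_cast
        have : 0 ≤ u * Real.log 2 := by positivity
        linarith
  have e2 : Real.exp (0.6 * Real.log 2 * ((129 + 1) * (32 * u))) = 2 ^ (2496 * u) := by
    rw [← Real.exp_log (by norm_num : (0 : ℝ) < 2), ← Real.exp_nat_mul,
      Real.exp_log (by norm_num : (0 : ℝ) < 2)]
    congr 1; push_cast; ring
  have e3 : (16 * (129 + 1) : ℝ) ^ (2048 * u) ≤ 2 ^ (24576 * u) := by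
    calc _ ≤ ((2 : ℝ) ^ 12) ^ (2048 * u) := by gcongr; norm_num
      _ = _ := by rw [← pow_mul]; congr 1; ring
  have e4 : ((129 - 1 : ℝ)) ^ (2048 * u) = 2 ^ (14336 * u) := by
    rw [show (129 - 1 : ℝ) = 2 ^ 7 by norm_num, ← pow_mul]; congr 1; ring
  set δ : ℝ := ν * (2 ^ (44280 * u))⁻¹ * (16 * (129 + 1) : ℝ) ^ (2048 * u)
  have e5 : δ ≤ (2 ^ (19672 * u))⁻¹ := by
    calc _ ≤ 2 ^ (32 * u) * (2 ^ (44280 * u))⁻¹ * (2 : ℝ) ^ (24576 * u) := by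
          simp only [δ]; gcongr
      _ = _ := by
        rw [show 44280 * u = 32 * u + 24576 * u + 19672 * u by ring, pow_add, pow_add]
        field_simp
  have e6 : δ * 2 ^ (2496 * u) ≤ 1 := by
    calc _ ≤ (2 ^ (19672 * u))⁻¹ * (2 : ℝ) ^ (2496 * u) := by gcongr
      _ ≤ (2 ^ (2496 * u))⁻¹ * (2 : ℝ) ^ (2496 * u) := by
        gcongr
        · norm_num
        · omega
      _ = 1 := inv_mul_cancel₀ (by positivity)
  have two_le : (2 : ℝ) ≤ 2 ^ u := by
    calc (2 : ℝ) = 2 ^ 1 := by norm_num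
      _ ≤ _ := pow_le_pow_right₀ (by norm_num) (by omega)
  rw [e2, e4]
  have e7 : (2 : ℝ) ^ (2933 * u) + δ * 2 ^ (2496 * u) ≤ 2 ^ (2934 * u) := by
    have h1 : (1 : ℝ) ≤ 2 ^ (2933 * u) := one_le_pow₀ (by norm_num)
    calc _ ≤ (2 : ℝ) * 2 ^ (2933 * u) := by linarith
      _ ≤ 2 ^ u * 2 ^ (2933 * u) := by gcongr
      _ = _ := by ring
  have e8 : Real.exp (0.6 * Real.log 2 * t) * (2 ^ (2933 * u) + δ * 2 ^ (2496 * u)) /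
      2 ^ (14336 * u) ≤ (2 ^ (11363 * u))⁻¹ := by
    calc _ ≤ (2 : ℝ) ^ (39 * u) * 2 ^ (2934 * u) / 2 ^ (14336 * u) := by gcongr
      _ = _ := by
        rw [show 14336 * u = 39 * u + 2934 * u + 11363 * u by ring, pow_add, pow_add]
        field_simp
  calc _ ≤ ((2 : ℝ) ^ (11363 * u))⁻¹ + (2 ^ (11363 * u))⁻¹ := by
        refine add_le_add (e5.trans ?_) e8
        gcongr
        · norm_num
        · omega
    _ = 2 * (2 ^ (11363 * u))⁻¹ := by ring
    _ ≤ 2 ^ u * (2 ^ (11363 * u))⁻¹ := by gcongr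
    _ = _ := by
      rw [show 11363 * u = u + 11362 * u by ring, pow_add]
      field_simp

end

/-- The parity of an integer. -/
def par (z : ℤ) : Fin 2 := if z % 2 = 0 then 0 else 1

theorem two_mul_add_par (z : ℤ) : 2 * (z / 2) + (par z : ℕ) = z := by
  unfold par
  split_ifs with h
  · simp; omega
  · simp; omega

theorem par_eq_par_iff {z w : ℤ} : par z = par w ↔ z % 2 = w % 2 := by
  unfold par
  split_ifs with h1 h2 h2 <;> simp <;> omega

/-- The entrywise quotient by `M`. -/
def quo (M : ℕ) (v : ℕ × ℕ × ℕ) : ℕ × ℕ × ℕ := (v.1 / M, v.2.1 / M, v.2.2 / M)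

/-- The parities of the exponents in `exp (m * logWeight μ)`. -/
def parTriple (m : ℕ) (μ : ℕ × ℕ × ℕ) : Fin 2 × Fin 2 × Fin 2 :=
  (par (expPhi μ * m), par (μ.2.1 * m), par (μ.2.2 * m))

theorem mod_two_mul_eq_iff {M a b : ℕ} :
    a % (2 * M) = b % (2 * M) ↔ a % M = b % M ∧ a / M % 2 = b / M % 2 := by
  constructor
  · intro h
    have h1 : a % M = b % M := by
      rw [← Nat.mod_mul_left_mod a 2 M, h, Nat.mod_mul_left_mod]
    refine ⟨h1, ?_⟩
    rw [mul_comm, Nat.mod_mul, Nat.mod_mul, h1] at h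
    rcases M.eq_zero_or_pos with rfl | hM
    · simp
    · exact Nat.eq_of_mul_eq_mul_left hM (by omega)
  · rintro ⟨h1, h2⟩
    rw [mul_comm, Nat.mod_mul, Nat.mod_mul, h1, h2]

theorem mem_classIdx_two_mul {L M m : ℕ} (hm : Odd m) {v ρ : ℕ × ℕ × ℕ} :
    v ∈ classIdx L (2 * M) ρ ↔
      v ∈ classIdx L M ρ ∧ parTriple m (quo M v) = parTriple m (quo M ρ) := by
  obtain ⟨t, rfl⟩ := hm
  obtain ⟨a, b, c⟩ := v
  obtain ⟨a', b', c'⟩ := ρ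
  simp only [classIdx, mem_filter, resid, parTriple, quo, expPhi, Prod.mk.injEq, par_eq_par_iff,
    mod_two_mul_eq_iff]
  have key : ∀ z : ℤ, (z * ((2 * t + 1 : ℕ) : ℤ)) % 2 = z % 2 := by
    intro z
    have : z * ((2 * t + 1 : ℕ) : ℤ) = z + 2 * (z * t) := by push_cast; ring
    rw [this]; omega
  rw [key, key, key, key, key, key]
  generalize a / M = a₁, b / M = b₁, c / M = c₁, a' / M = a₂, b' / M = b₂, c' / M = c₂
  generalize a % M = a₃, b % M = b₃, c % M = c₃, a' % M = a₄, b' % M = b₄, c' % M = c₄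
  constructor
  · rintro ⟨h1, ⟨h2, h3⟩, ⟨h4, h5⟩, ⟨h6, h7⟩⟩
    exact ⟨⟨h1, h2, h4, h6⟩, by omega, by omega, by omega⟩
  · rintro ⟨⟨h1, h2, h4, h6⟩, h3, h5, h7⟩
    exact ⟨h1, ⟨h2, by omega⟩, ⟨h4, by omega⟩, h6, by omega⟩

theorem logWeight_split {L M g : ℕ} (hM : 0 < M) (hg : 0 < g) (hMg : M * (2 * g) = L) (m : ℕ)
    {v ρ : ℕ × ℕ × ℕ} (hv : v ∈ classIdx L M ρ) :
    logWeight v / L * (g * m : ℕ) =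
      logWeight (resid M ρ) * m / (2 * M) + logWeight (quo M v) * m / 2 := by
  have h := (mem_filter.1 hv).2
  rw [← h]
  have hM' : (M : ℝ) ≠ 0 := by exact_mod_cast hM.ne'
  have hg' : (g : ℝ) ≠ 0 := by exact_mod_cast hg.ne'
  have hL' : (L : ℝ) = M * (2 * g) := by exact_mod_cast hMg.symm
  have hdiv : ∀ a : ℕ, (a : ℝ) = (a % M : ℕ) + M * (a / M : ℕ) := fun a => by
    exact_mod_cast (Nat.mod_add_div a M).symm
  have hw : logWeight v = logWeight (resid M v) + M * logWeight (quo M v) := by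
    simp only [logWeight, expPhi, resid, quo, Int.cast_sub, Int.cast_mul, Int.cast_natCast,
      Int.cast_ofNat]
    have h1 := hdiv v.1
    have h2 := hdiv v.2.1
    have h3 := hdiv v.2.2
    linear_combination (h1 - h2 - 2 * h3) * Real.log Real.goldenRatio + h2 * Real.log 2 +
      h3 * Real.log 3
  rw [hw, hL']
  push_cast
  field_simp

theorem exp_half_logWeight (m : ℕ) (μ : ℕ × ℕ × ℕ) :
    Real.exp (logWeight μ * m / 2) =
      Zphi.val (Zphi.elt (expPhi μ * m / 2) (μ.2.1 * m / 2) (μ.2.2 * m / 2)) *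
        (√Real.goldenRatio ^ ((parTriple m μ).1 : ℕ) * √2 ^ ((parTriple m μ).2.1 : ℕ) *
          √3 ^ ((parTriple m μ).2.2 : ℕ)) := by
  have hs : ∀ (a : ℝ) (j : ℕ), 0 < a → √a ^ j = Real.exp (j * (Real.log a / 2)) := by
    intro a j ha
    rw [Real.exp_nat_mul, ← Real.log_sqrt ha.le, Real.exp_log (Real.sqrt_pos.2 ha)]
  rw [hs _ _ Real.goldenRatio_pos, hs _ _ two_pos, hs _ _ three_pos, Zphi.val_elt,
    ← Real.exp_add, ← Real.exp_add, ← Real.exp_add]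
  congr 1
  have h1 := two_mul_add_par (expPhi μ * m)
  have h2 := two_mul_add_par (μ.2.1 * m)
  have h3 := two_mul_add_par (μ.2.2 * m)
  simp only [parTriple]
  generalize par (expPhi μ * m) = i at *
  generalize par (μ.2.1 * m) = j at *
  generalize par (μ.2.2 * m) = l at *
  have h1' : ((expPhi μ : ℝ)) * m = 2 * ((expPhi μ * m / 2 : ℤ) : ℝ) + (i : ℕ) := by
    exact_mod_cast h1.symm
  have h2' : (μ.2.1 : ℝ) * m = 2 * ((μ.2.1 * m / 2 : ℕ) : ℝ) + (j : ℕ) := by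
    exact_mod_cast h2.symm
  have h3' : (μ.2.2 : ℝ) * m = 2 * ((μ.2.2 * m / 2 : ℕ) : ℝ) + (l : ℕ) := by
    exact_mod_cast h3.symm
  rw [logWeight]
  linear_combination (Real.log Real.goldenRatio / 2) * h1' + (Real.log 2 / 2) * h2' +
    (Real.log 3 / 2) * h3'

section
variable {k n x y L N T U u : ℕ}

/-- The values of the coefficients of the auxiliary functions, cleared of denominators. -/
theorem exists_int_coeff (h : Setup k n x y L N T U u) {p : ℕ × ℕ × ℕ → ℕ → ℤ}
    (hp : ∀ v i, |p v i| ≤ 2 ^ (147 * u)) {Y : ℕ} (hY : Y ≤ U) {j m₂ m₃ : ℕ}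
    (hj : j + m₂ + m₃ ≤ 2 ^ 31) {v : ℕ × ℕ × ℕ} (hv : v ∈ boxIdx L) :
    ∃ w : ℤ, ((Nat.lcmUpto k : ℂ) ^ j) *
      ((hasseDeriv j (feldmanComb k N p v)).eval (Y : ℂ) *
        ((gamma₂ n x v : ℂ) ^ m₂ * (gamma₃ n y v : ℂ) ^ m₃)) = w ∧ |(w : ℝ)| ≤ 2 ^ (436 * u) := by
  have hk0 : 0 < k := by have := h.hk; omega
  choose d hd using fun i => feldman_hasseDeriv_integral hk0 (D := Nat.lcmUpto k)
    (fun i h1 h2 => dvd_lcmUpto h1 h2) i j (Y : ℤ)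
  set D := Nat.lcmUpto k
  have heq : ((D : ℂ) ^ j) * ((hasseDeriv j (feldmanComb k N p v)).eval (Y : ℂ) *
      ((gamma₂ n x v : ℂ) ^ m₂ * (gamma₃ n y v : ℂ) ^ m₃)) =
      ((∑ i ∈ range N, p v i * (d i * (gamma₂ n x v ^ m₂ * gamma₃ n y v ^ m₃)) : ℤ) : ℂ) := by
    rw [eval_hasseDeriv_feldmanComb, sum_mul, mul_sum]
    push_cast
    refine sum_congr rfl fun i _ => ?_
    rw [← hd i, Int.cast_natCast]
    ring
  refine ⟨_, heq, ?_⟩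
  have h1 := congrArg norm heq
  rw [Complex.norm_intCast] at h1
  rw [← h1, norm_mul, norm_mul, norm_pow, Complex.norm_natCast, norm_mul, norm_pow, norm_pow,
    Complex.norm_intCast, Complex.norm_intCast, ← abs_pow, ← abs_pow, ← abs_mul]
  have hD : (D : ℝ) ≤ 2 ^ (4 * k) := by exact_mod_cast lcmUpto_le_two_pow h.hk
  have hU1 : (1 : ℝ) ≤ U := by
    have := h.hk; have := h.hu; have := h.hU
    exact_mod_cast (by omega : 1 ≤ U)
  have h2 : ‖(hasseDeriv j (feldmanComb k N p v)).eval (Y : ℂ)‖ ≤ 2 ^ (308 * u) :=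
    (norm_eval_hasseDeriv_le (natDegree_feldmanComb_lt h p v) _ j).trans
      (wnorm_feldmanComb_le h hp N (by positivity) (by
        have : (Y : ℝ) ≤ U := by exact_mod_cast hY
        rw [Complex.norm_natCast]; linarith) v)
  calc _ ≤ (2 ^ (4 * k)) ^ j * (2 ^ (308 * u) * 2 ^ (4 * k * (m₂ + m₃))) := by
        gcongr
        exact abs_gamma_pow_le h.hx h.hy h.hn hv m₂ m₃
    _ = (2 : ℝ) ^ (4 * k * (j + m₂ + m₃) + 308 * u) := by ring
    _ ≤ 2 ^ (436 * u) := by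
      refine pow_le_pow_right₀ (by norm_num) ?_
      have h3 : 4 * k * (j + m₂ + m₃) ≤ 4 * k * 2 ^ 31 := by gcongr
      have h4 : 4 * k * 2 ^ 31 = 128 * u := by rw [h.hu]; ring
      omega

theorem abs_half_elt_le (h : Setup k n x y L N T U u) {M g m : ℕ}
    (hMg : M * (2 * g) = L) (hgm : g * m < U) {v : ℕ × ℕ × ℕ} (hv : v ∈ boxIdx L) :
    |Zphi.val (Zphi.elt (expPhi (quo M v) * m / 2) ((quo M v).2.1 * m / 2)
      ((quo M v).2.2 * m / 2))| ≤ 2 ^ (300 * u) ∧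
    |Zphi.conjVal (Zphi.elt (expPhi (quo M v) * m / 2) ((quo M v).2.1 * m / 2)
      ((quo M v).2.2 * m / 2))| ≤ 2 ^ (300 * u) := by
  obtain ⟨ha, hb, hc⟩ := mem_boxIdx.1 hv
  have hq : ∀ a < L, a / M < 2 * g := fun a ha => Nat.div_lt_of_lt_mul (by rwa [hMg])
  have hμ : quo M v ∈ boxIdx (2 * g) := mem_boxIdx.2 ⟨hq _ ha, hq _ hb, hq _ hc⟩
  generalize quo M v = μ at *
  obtain ⟨_, hb', hc'⟩ := mem_boxIdx.1 hμ
  have hU := h.hU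
  have hE : |expPhi μ * m / 2| ≤ 192 * u := by
    have h1 := abs_expPhi_le hμ
    have h2 : |expPhi μ * m| ≤ 6 * (g * m) := by
      rw [abs_mul, Nat.abs_cast]
      calc _ ≤ (3 * (2 * g : ℕ) : ℤ) * m := by gcongr
        _ = _ := by push_cast; ring
    have h3 : ((g * m : ℕ) : ℤ) < (U : ℕ) := by exact_mod_cast hgm
    push_cast at h3
    rw [hU] at h3
    push_cast at h3
    generalize expPhi μ * (m : ℤ) = E at *
    generalize (g : ℤ) * m = G at *
    rw [abs_le] at *
    omega
  have hE' : |((expPhi μ * m / 2 : ℤ) : ℝ)| ≤ 192 * u := by exact_mod_cast hE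
  have hqr : ∀ b < 2 * g, ((b * m / 2 : ℕ) : ℝ) ≤ 64 * u := by
    intro b hb
    have h1 : b * m ≤ 2 * (g * m) := by rw [← mul_assoc]; gcongr
    have h2 : b * m / 2 ≤ 64 * u := by omega
    exact_mod_cast h2
  have h3 := exp_weight_le (H := 192 * u) (u := u) le_rfl (hqr _ hb') (hqr _ hc')
  obtain ⟨e1, e2⟩ := Zphi.abs_elt_le _ (μ.2.1 * m / 2) (μ.2.2 * m / 2) hE'
  exact ⟨e1.trans h3, e2.trans h3⟩

theorem abs_map_sum_smul_le {ι : Type*} (f : Zphi →+* ℝ) (s : Finset ι) (w : ι → ℤ) (e : ι → Zphi)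
    {B₁ B₂ B₃ : ℝ} (hs : (s.card : ℝ) ≤ B₁) (hB₂ : 0 ≤ B₂) (hB₃ : 0 ≤ B₃)
    (hw : ∀ v ∈ s, |(w v : ℝ)| ≤ B₂) (he : ∀ v ∈ s, |f (e v)| ≤ B₃) :
    |f (∑ v ∈ s, w v • e v)| ≤ B₁ * (B₂ * B₃) := by
  rw [map_sum]
  calc _ ≤ ∑ v ∈ s, |f (w v • e v)| := abs_sum_le_sum_abs _ _
    _ ≤ ∑ v ∈ s, B₂ * B₃ := by
      refine sum_le_sum fun v hv => ?_
      rw [map_zsmul, zsmul_eq_mul, abs_mul]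
      exact mul_le_mul (hw v hv) (he v hv) (abs_nonneg _) hB₂
    _ = s.card * (B₂ * B₃) := by rw [sum_const, nsmul_eq_mul]
    _ ≤ _ := by gcongr

theorem vanish_half (h : Setup k n x y L N T U u) {p : ℕ × ℕ × ℕ → ℕ → ℤ}
    (hp : ∀ v i, |p v i| ≤ 2 ^ (147 * u))
    (hΛ : |n * Real.log Real.goldenRatio - x * Real.log 2 - y * Real.log 3| ≤
      (2 ^ (44800 * u))⁻¹)
    {M g T' : ℕ} (hMg : M * (2 * g) = L) (hT' : T' = 128 * g)
    (hV : Vanish L U n x y (feldmanComb k N p) M (2 * g) (2 * T')) :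
    Vanish L U n x y (feldmanComb k N p) (2 * M) g T' := by
  intro ρ m j m₂ m₃ hm hgm hj
  have hk := h.hk
  have hu := h.hu
  have hL := h.hL
  have hM0 : 0 < M := Nat.pos_of_ne_zero (by rintro rfl; omega)
  have hg0 : 0 < g := Nat.pos_of_ne_zero (by rintro rfl; omega)
  have hgL : 2 * g ≤ L := by rw [← hMg]; exact Nat.le_mul_of_pos_left _ hM0
  have hj31 : j + m₂ + m₃ ≤ 2 ^ 31 := by omega
  have hsmall := norm_sum_auxTerm_le h hp hΛ hMg hT' hV ρ hj (t := (g * m : ℕ))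
    (by positivity) (by exact_mod_cast hgm.le)
  have hbox : ∀ v ∈ classIdx L M ρ, v ∈ boxIdx L := fun v hv => (mem_filter.1 hv).1
  have hw : ∀ v, ∃ w : ℤ, v ∈ boxIdx L → ((Nat.lcmUpto k : ℂ) ^ j) *
      ((hasseDeriv j (feldmanComb k N p v)).eval ((g * m : ℕ) : ℂ) *
        ((gamma₂ n x v : ℂ) ^ m₂ * (gamma₃ n y v : ℂ) ^ m₃)) = w ∧
      |(w : ℝ)| ≤ 2 ^ (436 * u) := by
    intro v
    by_cases hv : v ∈ boxIdx L
    · obtain ⟨w, hw⟩ := exists_int_coeff h hp hgm.le hj31 hv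
      exact ⟨w, fun _ => hw⟩
    · exact ⟨0, fun h => absurd h hv⟩
  choose w hw using hw
  let e : ℕ × ℕ × ℕ → Zphi := fun v => Zphi.elt (expPhi (quo M v) * m / 2)
    ((quo M v).2.1 * m / 2) ((quo M v).2.2 * m / 2)
  let cl : Fin 2 × Fin 2 × Fin 2 → Finset (ℕ × ℕ × ℕ) := fun t =>
    (classIdx L M ρ).filter fun v => parTriple m (quo M v) = t
  let c : Fin 2 → Fin 2 → Fin 2 → Zphi := fun i i' i'' => ∑ v ∈ cl (i, i', i''), w v • e v
  set δ : ℝ := Real.exp (logWeight (resid M ρ) * m / (2 * M)) with hδ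
  have hδ1 : 1 ≤ δ := by
    rw [hδ, Real.one_le_exp_iff]
    have := logWeight_nonneg (resid M ρ)
    positivity
  set D := Nat.lcmUpto k with hDdef
  have hDpos : 0 < D := Nat.lcmUpto_pos k
  have haux : ∀ v ∈ classIdx L M ρ, (D : ℂ) ^ j *
      auxTerm L n x y (feldmanComb k N p) j m₂ m₃ ((g * m : ℕ) : ℂ) v =
      ((δ * (w v * Real.exp (logWeight (quo M v) * m / 2)) : ℝ) : ℂ) := by
    intro v hv
    rw [auxTerm, ← mul_assoc, (hw v (hbox v hv)).1]
    have h1 : (((logWeight v / L : ℝ) : ℂ) * ((g * m : ℕ) : ℂ)) =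
        ((logWeight v / L * (g * m : ℕ) : ℝ) : ℂ) := by push_cast; ring
    rw [h1, logWeight_split hM0 hg0 hMg m hv, ← Complex.ofReal_exp, Real.exp_add, ← hδ]
    push_cast
    ring
  have hexp : ∀ i i' i'', Zphi.val (c i i' i'') *
      (√Real.goldenRatio ^ (i : ℕ) * √2 ^ (i' : ℕ) * √3 ^ (i'' : ℕ)) =
      ∑ v ∈ cl (i, i', i''), w v * Real.exp (logWeight (quo M v) * m / 2) := by
    intro i i' i''
    rw [map_sum, sum_mul]
    refine sum_congr rfl fun v hv => ?_
    rw [exp_half_logWeight, (mem_filter.1 hv).2, map_zsmul, zsmul_eq_mul]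
    ring
  have hsum : ∑ i, ∑ i', ∑ i'', Zphi.val (c i i' i'') *
      (√Real.goldenRatio ^ (i : ℕ) * √2 ^ (i' : ℕ) * √3 ^ (i'' : ℕ)) =
      ∑ v ∈ classIdx L M ρ, w v * Real.exp (logWeight (quo M v) * m / 2) := by
    simp only [hexp]
    rw [← sum_fiberwise (classIdx L M ρ) (fun v => parTriple m (quo M v)),
      Fintype.sum_prod_type]
    refine sum_congr rfl fun i _ => ?_
    rw [Fintype.sum_prod_type]
  have hS : |∑ v ∈ classIdx L M ρ, w v * Real.exp (logWeight (quo M v) * m / 2)| ≤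
      2 ^ (128 * u) * (2 ^ (11362 * u))⁻¹ := by
    set S := ∑ v ∈ classIdx L M ρ, w v * Real.exp (logWeight (quo M v) * m / 2)
    have h1 : (D : ℂ) ^ j * ∑ v ∈ classIdx L M ρ,
        auxTerm L n x y (feldmanComb k N p) j m₂ m₃ ((g * m : ℕ) : ℂ) v = ((δ * S : ℝ) : ℂ) := by
      rw [mul_sum, sum_congr rfl haux, ← Complex.ofReal_sum, ← mul_sum]
    have h2 := congrArg norm h1
    rw [norm_mul, norm_pow, Complex.norm_natCast, Complex.norm_real, Real.norm_eq_abs, abs_mul,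
      abs_of_pos (by positivity : 0 < δ)] at h2
    have h3 : (D : ℝ) ^ j ≤ 2 ^ (128 * u) := by
      have hD : (D : ℝ) ≤ 2 ^ (4 * k) := by exact_mod_cast lcmUpto_le_two_pow h.hk
      calc _ ≤ ((2 : ℝ) ^ (4 * k)) ^ j := by gcongr
        _ = 2 ^ (4 * k * j) := by rw [← pow_mul]
        _ ≤ 2 ^ (128 * u) := by
          refine pow_le_pow_right₀ (by norm_num) ?_
          calc 4 * k * j ≤ 4 * k * 2 ^ 31 := by gcongr; omega
            _ = _ := by rw [hu]; ring
    have hsmall' : ‖∑ v ∈ classIdx L M ρ, auxTerm L n x y (feldmanComb k N p) j m₂ m₃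
        ((g * m : ℕ) : ℂ) v‖ ≤ (2 ^ (11362 * u))⁻¹ := by
      rwa [Complex.ofReal_natCast] at hsmall
    calc |S| ≤ δ * |S| := le_mul_of_one_le_left (abs_nonneg _) hδ1
      _ = _ := h2.symm
      _ ≤ _ := by gcongr
  have hcard : ∀ t, ((cl t).card : ℝ) ≤ 2 ^ u := fun t =>
    le_trans (by exact_mod_cast card_filter_le _ _) (card_classIdx_le h M ρ)
  have hclmem : ∀ t, ∀ v ∈ cl t, v ∈ boxIdx L := fun t v hv => hbox v (mem_filter.1 hv).1
  have hB : ∀ f : Zphi →+* ℝ, (∀ v ∈ boxIdx L, |f (e v)| ≤ 2 ^ (300 * u)) → ∀ i i' i'',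
      |f (c i i' i'')| ≤ 2 ^ (737 * u) := by
    intro f hf i i' i''
    refine (abs_map_sum_smul_le f _ w e (hcard _) (by positivity) (by positivity)
      (fun v hv => (hw v (hclmem _ v hv)).2) (fun v hv => hf v (hclmem _ v hv))).trans_eq ?_
    ring
  have hc0 := eq_zero_of_kummer_sum_small c (B₁ := 2 ^ (737 * u)) (B₂ := 2 ^ (737 * u))
    (hB _ fun v hv => (abs_half_elt_le h hMg hgm hv).1)
    (hB _ fun v hv => (abs_half_elt_le h hMg hgm hv).2) (by
      rw [hsum]
      have h16 : (16 : ℝ) * 2 ^ (737 * u) ≤ 2 ^ (738 * u) := by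
        calc (16 : ℝ) * 2 ^ (737 * u) = 2 ^ (737 * u + 4) := by ring
          _ ≤ _ := pow_le_pow_right₀ (by norm_num) (by omega)
      calc _ ≤ (2 ^ (128 * u) * (2 ^ (11362 * u))⁻¹) * (2 ^ (738 * u)) ^ 7 *
            ((2 : ℝ) ^ (738 * u)) ^ 8 := by gcongr
        _ = (2 ^ (164 * u))⁻¹ := by
          rw [show 11362 * u = 128 * u + 738 * u * 7 + 738 * u * 8 + 164 * u by ring, pow_add,
            pow_add, pow_add, pow_mul _ (738 * u) 7, pow_mul _ (738 * u) 8]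
          field_simp
        _ < 1 := inv_lt_one_of_one_lt₀ (one_lt_pow₀ (by norm_num) (by omega)))
  have hcl : classIdx L (2 * M) ρ = cl (parTriple m (quo M ρ)) := by
    ext v
    rw [mem_classIdx_two_mul hm, mem_filter]
  have hzero := hexp (parTriple m (quo M ρ)).1 (parTriple m (quo M ρ)).2.1
    (parTriple m (quo M ρ)).2.2
  rw [hc0, map_zero, zero_mul] at hzero
  have hDj : (D : ℂ) ^ j ≠ 0 := pow_ne_zero _ (by exact_mod_cast hDpos.ne')
  refine (mul_eq_zero.1 ?_).resolve_left hDj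
  rw [hcl, mul_sum, sum_congr rfl fun v hv => haux v (mem_filter.1 hv).1, ← Complex.ofReal_sum,
    ← mul_sum, ← hzero, mul_zero, Complex.ofReal_zero]

end

section
variable {k n x y L N T U u : ℕ}

theorem classIdx_self {v : ℕ × ℕ × ℕ} (hv : v ∈ boxIdx L) : classIdx L L v = {v} := by
  have hres : ∀ w ∈ boxIdx L, resid L w = w := by
    intro w hw
    obtain ⟨ha, hb, hc⟩ := mem_boxIdx.1 hw
    rw [resid, Nat.mod_eq_of_lt ha, Nat.mod_eq_of_lt hb, Nat.mod_eq_of_lt hc]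
  ext w
  rw [classIdx, mem_filter, mem_singleton, hres v hv]
  constructor
  · rintro ⟨hw, h⟩
    rwa [hres w hw] at h
  · rintro rfl
    exact ⟨hv, hres w hv⟩

theorem eq_zero_of_vanish (h : Setup k n x y L N T U u) {p : ℕ × ℕ × ℕ → ℕ → ℤ} {T₀ : ℕ}
    (hT₀ : 0 < T₀) (hV : Vanish L U n x y (feldmanComb k N p) L 1 T₀) {v : ℕ × ℕ × ℕ}
    (hv : v ∈ boxIdx L) {i : ℕ} (hi : i < N) : p v i = 0 := by
  have hU := h.hU
  have hN := h.hN
  have hu := h.hu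
  have hP : feldmanComb k N p v = 0 := by
    have hinj : Function.Injective fun a : Fin (32 * u) => ((2 * (a : ℕ) + 1 : ℕ) : ℂ) := by
      intro a b hab
      have := Nat.cast_injective hab
      exact Fin.ext (by omega)
    refine eq_zero_of_natDegree_lt_card_of_eval_eq_zero _ hinj (fun a => ?_) ?_
    · have h0 := hV v (2 * (a : ℕ) + 1) 0 0 0 ⟨a, rfl⟩ (by have := a.2; omega) (by omega)
      rw [classIdx_self hv, sum_singleton, auxTerm] at h0
      simpa only [one_mul, pow_zero, mul_one, hasseDeriv_zero', mul_eq_zero, Complex.exp_ne_zero,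
        or_false] using h0
    · rw [Fintype.card_fin]
      have := natDegree_feldmanComb_lt h p v
      omega
  exact_mod_cast eq_zero_of_sum_feldman_eq_zero (fun i => (p v i : ℂ)) hP i hi

/-- The lower bound for the linear form in three logarithms. -/
theorem lt_abs_linearForm (h : Setup k n x y L N T U u) : (2 ^ (44800 * u))⁻¹ <
    |n * Real.log Real.goldenRatio - x * Real.log 2 - y * Real.log 3| := by
  by_contra! hΛ
  obtain ⟨p, ⟨v, hv, i, hi, hne⟩, hp, hV⟩ :=
    exists_initial_vanish h.hk h.hL h.hu h.hN h.hT h.hU h.hx h.hy h.hn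
  have hind : ∀ r s : ℕ, r + s = 25 →
      Vanish L U n x y (feldmanComb k N p) (2 ^ r) (2 ^ s) (128 * 2 ^ s) := by
    intro r
    induction r with
    | zero =>
      intro s hs
      obtain rfl : s = 25 := by omega
      have hT : 128 * 2 ^ 25 = T := by rw [h.hT]; norm_num
      rwa [hT, ← h.hL, pow_zero]
    | succ r ih =>
      intro s hs
      have h1 := ih (s + 1) (by omega)
      rw [pow_succ' 2 s, mul_left_comm] at h1
      rw [pow_succ' 2 r]
      refine vanish_half h hp hΛ ?_ rfl h1
      rw [h.hL, ← hs]
      ring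
  have hlast := hind 25 0 rfl
  rw [← h.hL, pow_zero] at hlast
  exact hne (eq_zero_of_vanish h (by norm_num) hlast hv hi)

end

end

theorem lucas_eq (n : ℕ) :
    (lucas n : ℝ) = Real.goldenRatio ^ n + Real.goldenConj ^ n := by
  induction n using Nat.twoStepInduction with
  | zero => norm_num [lucas]
  | one => simp [lucas, Real.goldenRatio_add_goldenConj]
  | more n h0 h1 =>
    rw [lucas, Int.cast_add, h0, h1]
    linear_combination (-Real.goldenRatio ^ n) * Real.goldenRatio_sq -
      Real.goldenConj ^ n * Real.goldenConj_sq

theorem lucas_pos (n : ℕ) : 0 < lucas n := by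
  induction n using Nat.twoStepInduction with
  | zero => norm_num [lucas]
  | one => norm_num [lucas]
  | more n h0 h1 => rw [lucas]; omega

theorem two_mul_lucas_add_four_le (n : ℕ) : 2 * lucas (n + 4) ≤ 2 ^ (n + 4) := by
  induction n using Nat.twoStepInduction with
  | zero => norm_num [lucas]
  | one => norm_num [lucas]
  | more n h0 h1 =>
    have h : lucas (n + 2 + 4) = lucas (n + 1 + 4) + lucas (n + 4) := rfl
    have h2 : (2 : ℤ) ^ (n + 1 + 4) = 2 * 2 ^ (n + 4) := by ring
    have h3 : (2 : ℤ) ^ (n + 2 + 4) = 4 * 2 ^ (n + 4) := by ring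
    have h4 : (0 : ℤ) < 2 ^ (n + 4) := by positivity
    omega

theorem abs_lucas_sub_le (n : ℕ) : |(lucas n : ℝ) - Real.goldenRatio ^ n| ≤ 1 := by
  rw [lucas_eq, add_sub_cancel_left, abs_pow]
  refine pow_le_one₀ (abs_nonneg _) (abs_le.2 ⟨Real.neg_one_lt_goldenConj.le, ?_⟩)
  linarith [Real.goldenConj_neg]

theorem abs_log_sub_log_le {s t ε : ℝ} (hs : 0 < s) (ht : 0 < t) (hε : ε ≤ 1 / 2)
    (h : |s - t| ≤ ε * t) : |Real.log s - Real.log t| ≤ 2 * ε := by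
  obtain ⟨h1, h2⟩ := abs_le.1 h
  have hε0 : 0 ≤ ε := nonneg_of_mul_nonneg_left ((abs_nonneg _).trans h) ht
  have hup := Real.log_le_sub_one_of_pos (div_pos hs ht)
  have hlo := Real.one_sub_inv_le_log_of_pos (div_pos hs ht)
  rw [Real.log_div hs.ne' ht.ne'] at hup hlo
  have h3 : s / t ≤ 1 + ε := by rw [div_le_iff₀ ht]; linarith
  have h4 : (s / t)⁻¹ ≤ 1 + 2 * ε := by
    rw [inv_div, div_le_iff₀ hs]
    have : 0 ≤ (1 + 2 * ε) * (s - (1 - ε) * t) := mul_nonneg (by linarith) (by linarith)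
    nlinarith [mul_nonneg (mul_nonneg hε0 (by linarith : 0 ≤ 1 - 2 * ε)) ht.le]
  rw [abs_le]
  constructor <;> linarith

theorem log_two_pow_mul_three_pow (x y : ℕ) :
    Real.log (2 ^ x * 3 ^ y) = x * Real.log 2 + y * Real.log 3 := by
  rw [Real.log_mul (by positivity) (by positivity), Real.log_pow, Real.log_pow]

/-- The linear form is small when `2 ^ x₁ * 3 ^ y₁` is much smaller than `2 ^ x * 3 ^ y`. -/
theorem abs_linearForm_le {c : ℤ} {n n₁ x x₁ y y₁ A : ℕ}
    (hc : c < 0) (h1 : c = lucas n - 2 ^ x * 3 ^ y) (h2 : c = lucas n₁ - 2 ^ x₁ * 3 ^ y₁)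
    (hA : 1 ≤ A) (hgap : (2 : ℝ) ^ A * (2 ^ x₁ * 3 ^ y₁) ≤ 2 ^ x * 3 ^ y) :
    |n * Real.log Real.goldenRatio - x * Real.log 2 - y * Real.log 3| ≤ 2 * (2 ^ A)⁻¹ := by
  have hφ := Real.goldenRatio_pos
  have hL := lucas_pos n₁
  have hd : -c + 1 ≤ 2 ^ x₁ * 3 ^ y₁ := by omega
  have hd' : -(c : ℝ) + 1 ≤ 2 ^ x₁ * 3 ^ y₁ := by exact_mod_cast hd
  have h1' : (c : ℝ) = lucas n - 2 ^ x * 3 ^ y := by exact_mod_cast h1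
  have hc' : (c : ℝ) < 0 := by exact_mod_cast hc
  have hn := abs_le.1 (abs_lucas_sub_le n)
  have hε : ((2 : ℝ) ^ A)⁻¹ ≤ 1 / 2 := by
    rw [one_div]
    exact inv_anti₀ (by norm_num) (le_self_pow₀ (by norm_num) (by omega))
  have h := abs_log_sub_log_le (s := Real.goldenRatio ^ n) (t := 2 ^ x * 3 ^ y) (by positivity)
    (by positivity) hε (by
      rw [inv_mul_eq_div, le_div_iff₀' (by positivity)]
      refine le_trans ?_ hgap
      gcongr
      rw [abs_le]
      constructor <;> linarith [hn.1, hn.2])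
  rwa [Real.log_pow, log_two_pow_mul_three_pow, ← sub_sub] at h

theorem two_pow_mul_three_pow_le {c : ℤ} {n n₁ x x₁ y y₁ : ℕ}
    (h1 : c = lucas n - 2 ^ x * 3 ^ y) (h2 : c = lucas n₁ - 2 ^ x₁ * 3 ^ y₁) (hn : 4 ≤ n)
    (hgap : 2 * ((2 : ℝ) ^ x₁ * 3 ^ y₁) ≤ 2 ^ x * 3 ^ y) : 2 ^ x * 3 ^ y ≤ 2 ^ n := by
  have hgap' : 2 * ((2 : ℤ) ^ x₁ * 3 ^ y₁) ≤ 2 ^ x * 3 ^ y := by exact_mod_cast hgap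
  have hL := lucas_pos n₁
  have hn' := two_mul_lucas_add_four_le (n - 4)
  rw [Nat.sub_add_cancel hn] at hn'
  have : (2 : ℤ) ^ x * 3 ^ y ≤ 2 ^ n := by omega
  exact_mod_cast this

theorem two_pow_46_le {n : ℕ} (hn : 2 ≤ n)
    (h : 1.7 * 10 ^ 12 * Real.log n ≤ n * Real.log 2) : 2 ^ 46 ≤ n := by
  have key : ∀ a b : ℕ, 2 ^ a ≤ n → 2 ^ b ≤ 1700000000000 * a → 2 ^ b ≤ n := by
    intro a b ha hb
    have h2 : (a : ℝ) * Real.log 2 ≤ Real.log n := by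
      rw [← Real.log_pow]
      exact Real.log_le_log (by positivity) (by exact_mod_cast ha)
    have h3 : (1700000000000 * a : ℝ) * Real.log 2 ≤ n * Real.log 2 := by linarith
    have h4 : (1700000000000 * a : ℝ) ≤ n :=
      le_of_mul_le_mul_right h3 (Real.log_pos (by norm_num))
    exact hb.trans (by exact_mod_cast h4)
  exact key 45 46 (key 40 45 (key 1 40 hn (by norm_num)) (by norm_num)) (by norm_num)

theorem lt_abs_linearForm_of_two_pow_le {n x y : ℕ} (hn : 2 ^ 46 ≤ n) (hx : x ≤ n) (hy : y ≤ n) :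
    2 * ((2 : ℝ) ^ (1700000000000 * Nat.log 2 n))⁻¹ <
      |n * Real.log Real.goldenRatio - x * Real.log 2 - y * Real.log 3| := by
  have hn0 : n ≠ 0 := by rintro rfl; norm_num at hn
  have hl : 46 ≤ Nat.log 2 n := (Nat.le_log_iff_pow_le (by norm_num) hn0).2 hn
  have hlt : n < 2 ^ (Nat.log 2 n + 1) := Nat.lt_pow_succ_log_self (by norm_num) n
  generalize Nat.log 2 n = l at *
  obtain ⟨k, hk⟩ : ∃ k, k = (l + 31) / 4 := ⟨_, rfl⟩
  obtain ⟨L, hL⟩ : ∃ L : ℕ, L = 2 ^ 25 := ⟨_, rfl⟩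
  obtain ⟨T, hT⟩ : ∃ T : ℕ, T = 2 ^ 32 := ⟨_, rfl⟩
  obtain ⟨u, hu⟩ : ∃ u, u = 2 ^ 26 * k := ⟨_, rfl⟩
  have h : Setup k n x y L (2 ^ 28 * k) T (64 * u) u :=
    { hk := by omega
      hL := hL
      hu := hu
      hN := rfl
      hT := hT
      hU := rfl
      hn0 := Nat.pos_of_ne_zero hn0
      hx := hx
      hy := hy
      hn := by
        calc 4 * n * L ≤ 4 * 2 ^ (l + 1) * L := by gcongr
          _ = 2 ^ (l + 28) := by rw [hL]; ring
          _ ≤ _ := Nat.pow_le_pow_right (by norm_num) (by omega) }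
  refine lt_of_le_of_lt ?_ (lt_abs_linearForm h)
  have hle : 44800 * u + 1 ≤ 1700000000000 * l := by omega
  generalize 1700000000000 * l = A at *
  calc 2 * ((2 : ℝ) ^ A)⁻¹ ≤ 2 * (2 ^ (44800 * u + 1))⁻¹ := by
        gcongr
        norm_num
    _ = _ := by rw [pow_succ, mul_inv]; ring

theorem neg_c_gap_X_bound (c : ℤ) (hc : c < 0) (n n₁ x x₁ y y₁ : ℕ)
    (h1 : c = lucas n - 2 ^ x * 3 ^ y) (h2 : c = lucas n₁ - 2 ^ x₁ * 3 ^ y₁)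
    (hnn : n₁ < n) (hn₁ : 500 < n₁) :
    let X : ℝ := x * Real.log 2 + y * Real.log 3
    let X₁ : ℝ := x₁ * Real.log 2 + y₁ * Real.log 3
    X - X₁ < 1.7 * 10 ^ 12 * Real.log n := by
  intro X X₁
  by_contra! hX
  have hX1 : 0 ≤ X₁ := by positivity
  have hlog2 : 0 < Real.log 2 := Real.log_pos (by norm_num)
  have hl : Nat.log 2 n * Real.log 2 ≤ Real.log n := by
    rw [← Real.log_pow]
    exact Real.log_le_log (by positivity)
      (by exact_mod_cast Nat.pow_log_le_self 2 (by omega : n ≠ 0))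
  have hl1 : 1 ≤ Nat.log 2 n := Nat.log_pos (by norm_num) (by omega)
  obtain ⟨A, hA⟩ : ∃ A, A = 1700000000000 * Nat.log 2 n := ⟨_, rfl⟩
  have hA1 : 1 ≤ A := by omega
  have hgap : (2 : ℝ) ^ A * (2 ^ x₁ * 3 ^ y₁) ≤ 2 ^ x * 3 ^ y := by
    rw [← Real.log_le_log_iff (by positivity) (by positivity),
      Real.log_mul (by positivity) (by positivity), Real.log_pow, log_two_pow_mul_three_pow,
      log_two_pow_mul_three_pow, hA]
    push_cast
    linarith
  have hle : 2 ^ x * 3 ^ y ≤ 2 ^ n := by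
    refine two_pow_mul_three_pow_le h1 h2 (by omega) (le_trans ?_ hgap)
    gcongr
    exact le_self_pow₀ (by norm_num) (by omega)
  have hXn : X ≤ n * Real.log 2 := by
    rw [← Real.log_pow]
    refine (log_two_pow_mul_three_pow x y).ge.trans ?_
    exact Real.log_le_log (by positivity) (by exact_mod_cast hle)
  have hx : x ≤ n := (Nat.pow_le_pow_iff_right (by norm_num : 1 < 2)).1
    ((Nat.le_mul_of_pos_right _ (by positivity)).trans hle)
  have hy : y ≤ n := (Nat.pow_le_pow_iff_right (by norm_num : 1 < 2)).1
    ((Nat.pow_le_pow_left (by norm_num) y).trans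
      ((Nat.le_mul_of_pos_left _ (by positivity)).trans hle))
  have hlow := lt_abs_linearForm_of_two_pow_le (two_pow_46_le (by omega) (by linarith)) hx hy
  rw [← hA] at hlow
  exact hlow.not_ge (abs_linearForm_le hc h1 h2 hA1 hgap)
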